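/- Let 𝐅 be a field that is an algebraic (possibly infinite-degree) extension of ℚ, and let x, z ∈ 𝒪_𝐅 with x ≠ z. Then there exist y₁, y₂, y₃, y₄, y₅ ∈ 𝒪_𝐅 with y₅ ≠ 0 such that y₅²·(x − z) = y₁² + y₂² + y₃² + y₄² if and only if for every ring homomorphism σ : 𝐅 → ℝ one has σ(x) > σ(z). -/

import Mathlib

section
open NumberField IsDedekindDomain

namespace Sieg

section Basic
variable {K : Type*} [Field K] [NumberField K]

/-- additive valuation (junk value 0 at 0). -/
noncomputable def v (p : HeightOneSpectrum (𝓞 K)) (x : K) : ℤ :=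
  -WithZero.log (p.valuation K x)

/-- `v p x ≥ n`, with `v p 0 = ∞`. -/
def V (p : HeightOneSpectrum (𝓞 K)) (n : ℤ) (x : K) : Prop := x = 0 ∨ n ≤ v p x

variable (p : HeightOneSpectrum (𝓞 K)) {x y : K} {n m : ℤ}

lemma val_ne (hx : x ≠ 0) : p.valuation K x ≠ 0 := by
  simpa using hx

lemma V_iff_le : V p n x ↔ p.valuation K x ≤ WithZero.exp (-n) := by
  unfold V v
  by_cases hx : x = 0
  · simp [hx]
  · rw [← WithZero.log_le_iff_le_exp (val_ne p hx)]
    simp only [hx, false_or]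
    constructor <;> intro h <;> linarith

lemma V_iff (hx : x ≠ 0) : V p n x ↔ n ≤ v p x := by simp [V, hx]

lemma V_zero : V p n 0 := Or.inl rfl

lemma v_mul (hx : x ≠ 0) (hy : y ≠ 0) : v p (x * y) = v p x + v p y := by
  unfold v
  rw [map_mul, WithZero.log_mul (val_ne p hx) (val_ne p hy)]; ring

lemma v_inv : v p x⁻¹ = - v p x := by
  unfold v; rw [map_inv₀, WithZero.log_inv]

lemma v_one : v p (1 : K) = 0 := by simp [v]

lemma v_neg : v p (-x) = v p x := by simp [v]

lemma v_pow (k : ℕ) : v p (x ^ k) = k * v p x := by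
  unfold v; rw [map_pow, WithZero.log_pow]; simp

lemma v_zpow (k : ℤ) : v p (x ^ k) = k * v p x := by
  unfold v; rw [map_zpow₀, WithZero.log_zpow]; simp

lemma v_div (hx : x ≠ 0) (hy : y ≠ 0) : v p (x / y) = v p x - v p y := by
  rw [div_eq_mul_inv, v_mul p hx (inv_ne_zero hy), v_inv]; ring

lemma V_add (hx : V p n x) (hy : V p n y) : V p n (x + y) := by
  rw [V_iff_le] at *
  exact Valuation.map_add_le _ hx hy

lemma V_neg (hx : V p n x) : V p n (-x) := by
  rw [V_iff_le] at *
  rwa [Valuation.map_neg]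

lemma V_sub (hx : V p n x) (hy : V p n y) : V p n (x - y) := by
  rw [sub_eq_add_neg]; exact V_add p hx (V_neg p hy)

lemma V_mul (hx : V p n x) (hy : V p m y) : V p (n + m) (x * y) := by
  by_cases h1 : x = 0
  · simp [V, h1]
  by_cases h2 : y = 0
  · simp [V, h2]
  rw [V_iff p h1] at hx
  rw [V_iff p h2] at hy
  right; rw [v_mul p h1 h2]; linarith

lemma V_mono (hx : V p n x) (h : m ≤ n) : V p m x := hx.imp_right h.trans

lemma V_self : V p (v p x) x := Or.inr le_rfl

lemma V_mul' {k : ℤ} (hx : V p n x) (hy : V p m y) (h : k ≤ n + m) : V p k (x * y) :=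
  V_mono p (V_mul p hx hy) h

lemma V_sq (hx : V p n x) : V p (2 * n) (x ^ 2) := by
  rw [sq, two_mul]; exact V_mul p hx hx

lemma V_div_iff (hy : y ≠ 0) : V p n (x / y) ↔ V p (n + v p y) x := by
  by_cases h1 : x = 0
  · simp [V, h1]
  · rw [V_iff p h1, V_iff p (div_ne_zero h1 hy), v_div p h1 hy]; constructor <;> intro h <;> linarith

lemma V_mul_iff (hy : y ≠ 0) : V p n (y * x) ↔ V p (n - v p y) x := by
  by_cases h1 : x = 0
  · simp [V, h1]
  · rw [V_iff p h1, V_iff p (mul_ne_zero hy h1), v_mul p hy h1]; constructor <;> intro h <;> linarith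

/-- if `v y > v x` then `v (x+y) = v x`. -/
lemma v_add_eq (hx : x ≠ 0) (hy : V p (v p x + 1) y) : x + y ≠ 0 ∧ v p (x + y) = v p x := by
  have h0 : x + y ≠ 0 := by
    intro h
    have : y = -x := by linear_combination h
    rw [this, V_iff p (neg_ne_zero.2 hx), v_neg] at hy; linarith
  refine ⟨h0, ?_⟩
  have h1 : V p (v p x) (x + y) := V_add p (V_self p) (V_mono p hy (by linarith))
  rw [V_iff p h0] at h1
  apply le_antisymm _ h1
  by_contra hlt
  push Not at hlt
  have h2 : V p (v p x + 1) (x + y) := Or.inr hlt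
  have h3 := V_sub p h2 hy
  rw [add_sub_cancel_right, V_iff p hx] at h3
  linarith

lemma V_int (r : 𝓞 K) : V p 0 (r : K) := by
  rw [V_iff_le]; simpa using p.valuation_le_one r

lemma V_int_iff {k : ℕ} (r : 𝓞 K) : V p k (r : K) ↔ r ∈ p.asIdeal ^ k := by
  rw [V_iff_le]
  have := p.intValuation_le_pow_iff_mem r k
  rw [← this, ← p.valuation_of_algebraMap (K := K)]

lemma V_one_iff (r : 𝓞 K) : V p 1 (r : K) ↔ r ∈ p.asIdeal := by
  have := V_int_iff p (k := 1) r
  simpa using this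

lemma v_int (r : 𝓞 K) : 0 ≤ v p (r : K) := by
  by_cases h : (r : K) = 0
  · rw [h]; simp [v]
  · exact (V_iff p h).1 (V_int p r)

lemma v_eq_zero_of_notMem {r : 𝓞 K} (hr : r ∉ p.asIdeal) : v p (r : K) = 0 := by
  have h : (r : K) ≠ 0 := by
    intro h; apply hr
    have : r = 0 := by exact_mod_cast h
    simp [this]
  apply le_antisymm _ (v_int p r)
  by_contra hh
  exact hr ((V_one_iff p r).1 (Or.inr (by omega)))

lemma V_loc : V p 0 x ↔ ∃ m : 𝓞 K, m ∉ p.asIdeal ∧ ∃ a : 𝓞 K, (m : K) * x = a := by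
  constructor
  · intro h
    rw [V_iff_le] at h
    simp only [neg_zero, WithZero.exp_zero] at h
    obtain ⟨m, a, h⟩ := p.exists_primeCompl_mul_eq_of_integer (K := K) x h
    exact ⟨a, a.2, m, by rw [mul_comm]; exact h⟩
  · rintro ⟨m, hm, a, h⟩
    by_cases hx : x = 0
    · exact Or.inl hx
    have hm0 : (m : K) ≠ 0 := by
      intro h; apply hm
      have : m = 0 := by exact_mod_cast h
      simp [this]
    have := V_int p a
    rw [← h, V_mul_iff p hm0, v_eq_zero_of_notMem p hm] at this
    simpa using this

lemma V_loc_one : V p 1 x ↔ ∃ m : 𝓞 K, m ∉ p.asIdeal ∧ ∃ a : 𝓞 K, a ∈ p.asIdeal ∧ (m : K) * x = a := by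
  constructor
  · intro h
    obtain ⟨m, hm, a, ha⟩ := (V_loc p).1 (V_mono p h (by norm_num))
    refine ⟨m, hm, a, ?_, ha⟩
    rw [← V_one_iff, ← ha]
    simpa using V_mul p (V_int p m) h
  · rintro ⟨m, hm, a, hap, h⟩
    have hm0 : (m : K) ≠ 0 := by
      intro h; apply hm
      have : m = 0 := by exact_mod_cast h
      simp [this]
    have := (V_one_iff p a).2 hap
    rw [← h, V_mul_iff p hm0, v_eq_zero_of_notMem p hm] at this
    simpa using this

lemma int_of_V (h : ∀ p : HeightOneSpectrum (𝓞 K), V p 0 x) : ∃ a : 𝓞 K, (a : K) = x := by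
  apply HeightOneSpectrum.mem_integers_of_valuation_le_one K x
  intro p
  simpa using (V_iff_le p).1 (h p)

lemma exists_unif : ∃ π : 𝓞 K, (π : K) ≠ 0 ∧ v p (π : K) = 1 := by
  obtain ⟨π, h⟩ := p.intValuation_exists_uniformizer
  have h1 : p.valuation K (π : K) = WithZero.exp (-1) := by
    rw [← h]; exact p.valuation_of_algebraMap π
  refine ⟨π, ?_, ?_⟩
  · intro h0; rw [h0, map_zero] at h1; exact WithZero.exp_ne_zero h1.symm
  · simp [v, h1]

lemma finite_v (hx : x ≠ 0) : {p : HeightOneSpectrum (𝓞 K) | v p x ≠ 0}.Finite := by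
  have key : ∀ r : 𝓞 K, r ≠ 0 → {p : HeightOneSpectrum (𝓞 K) | v p (r : K) ≠ 0}.Finite := by
    intro r hr
    have h := Ideal.finite_factors (I := Ideal.span {r}) (by simpa using hr)
    apply h.subset
    intro p hp
    simp only [Set.mem_ofPred_eq, Ideal.dvd_span_singleton] at hp ⊢
    by_contra hh
    exact hp (v_eq_zero_of_notMem p hh)
  obtain ⟨a, b, hb, rfl⟩ := IsFractionRing.div_surjective (A := 𝓞 K) x
  have hb0 : b ≠ 0 := nonZeroDivisors.ne_zero hb
  have ha0 : a ≠ 0 := by rintro rfl; simp at hx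
  apply ((key a ha0).union (key b hb0)).subset
  intro p hp
  have h1 : (algebraMap (𝓞 K) K a) ≠ 0 := by simpa using ha0
  have h2 : (algebraMap (𝓞 K) K b) ≠ 0 := by simpa using hb0
  simp only [Set.mem_ofPred_eq, v_div p h1 h2] at hp
  by_contra hh
  simp only [Set.mem_union, Set.mem_ofPred_eq, not_or, not_not] at hh
  apply hp
  have := hh.1
  have := hh.2
  simp only [RingOfIntegers.coe_eq_algebraMap] at *
  omega

/-- `x` is locally a square at `p` -/
def SqAt (x : K) : Prop := ∃ y : K, y ≠ 0 ∧ V p 1 ((x / y ^ 2 - 1) / 4)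

end Basic
end Sieg

end

section
open NumberField IsDedekindDomain

namespace Sieg
section Loc
variable {K : Type*} [Field K] [NumberField K] (p : HeightOneSpectrum (𝓞 K)) {x y b : K}

lemma V_ofNat (n : ℕ) : V p 0 (n : K) := by
  have := V_int p (n : 𝓞 K)
  simpa using this

lemma v_four : v p (4 : K) = 2 * v p (2 : K) := by
  rw [show (4 : K) = 2 ^ 2 by norm_num, v_pow]; norm_num

lemma v_two_nonneg : 0 ≤ v p (2 : K) := by
  have := V_ofNat p 2
  rwa [Nat.cast_ofNat, V_iff p two_ne_zero] at this

/-- `u ≡ 1 mod 4 p`. -/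
def One (u : K) : Prop := V p 1 ((u - 1) / 4)

lemma One.V1 {u : K} (h : One p u) : V p 1 (u - 1) := by
  rw [One, V_div_iff p (by norm_num : (4 : K) ≠ 0)] at h
  exact V_mono p h (by rw [v_four]; linarith [v_two_nonneg p])

lemma One_iff_of_odd (h2 : v p (2 : K) = 0) {u : K} : One p u ↔ V p 1 (u - 1) := by
  rw [One, V_div_iff p (by norm_num : (4 : K) ≠ 0), v_four, h2]; norm_num

lemma ne_zero_of_V1 {u : K} (h : V p 1 (u - 1)) : u ≠ 0 ∧ v p u = 0 := by
  have := v_add_eq p (x := 1) (y := u - 1) one_ne_zero (by rw [v_one]; exact V_mono p h (by norm_num))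
  rw [add_sub_cancel, v_one] at this
  exact this

lemma One.mul {u w : K} (h : One p u) (h' : One p w) : One p (u * w) := by
  have h1 := ne_zero_of_V1 p h.V1
  unfold One at *
  have : (u * w - 1) / 4 = u * ((w - 1) / 4) + (u - 1) / 4 := by ring
  rw [this]
  refine V_add p (V_mul' p (n := 0) (m := 1) ?_ h' (by norm_num)) h
  right; omega

lemma One.inv {u : K} (h : One p u) : One p u⁻¹ := by
  have h1 := ne_zero_of_V1 p h.V1
  unfold One at *
  have : (u⁻¹ - 1) / 4 = - (u⁻¹ * ((u - 1) / 4)) := by field_simp [h1.1]; ring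
  rw [this]
  refine V_neg p (V_mul' p (n := 0) (m := 1) ?_ h (by norm_num))
  right; rw [v_inv]; omega

lemma One.one : One p (1 : K) := by simp [One, V]

lemma SqAt_iff : SqAt p x ↔ ∃ y : K, y ≠ 0 ∧ One p (x / y ^ 2) := Iff.rfl

lemma SqAt.ne (h : SqAt p x) : x ≠ 0 := by
  obtain ⟨y, hy, h⟩ := h
  rintro rfl
  exact (ne_zero_of_V1 p (One.V1 p h)).1 (by simp)

lemma SqAt.even (h : SqAt p x) : Even (v p x) := by
  have hx := h.ne
  obtain ⟨y, hy, h⟩ := h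
  have := (ne_zero_of_V1 p (One.V1 p h)).2
  rw [v_div p hx (pow_ne_zero 2 hy), v_pow] at this
  exact ⟨v p y, by push_cast at this; linarith⟩

lemma SqAt_sq (hy : y ≠ 0) : SqAt p (y ^ 2) := ⟨y, hy, by
  rw [div_self (pow_ne_zero 2 hy)]; simp [V]⟩

lemma SqAt.mul (h : SqAt p x) (h' : SqAt p y) : SqAt p (x * y) := by
  obtain ⟨a, ha, h⟩ := h
  obtain ⟨b, hb, h'⟩ := h'
  refine ⟨a * b, mul_ne_zero ha hb, ?_⟩
  have := One.mul p h h'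
  unfold One at this
  convert this using 3
  field_simp

lemma SqAt.inv (h : SqAt p x) : SqAt p x⁻¹ := by
  obtain ⟨a, ha, h⟩ := h
  refine ⟨a⁻¹, inv_ne_zero ha, ?_⟩
  have := One.inv p h
  unfold One at this
  convert this using 3
  field_simp

/-- the subgroup of local squares -/
def Sq : Subgroup Kˣ where
  carrier := {x | SqAt p (x : K)}
  mul_mem' h h' := by simpa using SqAt.mul p h h'
  one_mem' := by
    have := SqAt_sq p (one_ne_zero (α := K))
    simpa using this
  inv_mem' h := by simpa using SqAt.inv p h

lemma mem_Sq {x : Kˣ} : x ∈ Sq p ↔ SqAt p (x : K) := Iff.rfl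

lemma SqAt.of_mul_left (h : SqAt p (x * y)) (hx : SqAt p x) : SqAt p y := by
  have := SqAt.mul p hx.inv h
  rwa [inv_mul_cancel_left₀ hx.ne] at this

lemma SqAt_mul_sq_iff (hy : y ≠ 0) : SqAt p (x * y ^ 2) ↔ SqAt p x :=
  ⟨fun h => SqAt.of_mul_left p (by rwa [mul_comm] at h) (SqAt_sq p hy),
   fun h => SqAt.mul p h (SqAt_sq p hy)⟩

lemma approx {n : ℕ} (hx : V p 0 x) : ∃ a : 𝓞 K, V p n (x - a) := by
  have h : p.valuation K x ≤ 1 := by simpa using (V_iff_le p).1 hx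
  obtain ⟨a, ha⟩ := p.exists_valuation_sub_lt_of_integer h (γ := Units.mk0 (WithZero.exp (-(n : ℤ))) WithZero.exp_ne_zero)
  refine ⟨a, ?_⟩
  rw [V_iff_le]
  have := ha.le
  rw [Valuation.map_sub_swap] at this
  exact this

open Ideal in
lemma SqAt_unit_odd (h2 : v p (2 : K) = 0) (hx : x ≠ 0) (hx0 : v p x = 0) {a : 𝓞 K}
    (ha : V p 1 (x - a)) : SqAt p x ↔ IsSquare (Ideal.Quotient.mk p.asIdeal a) := by
  constructor
  · rintro ⟨y, hy, h⟩
    have h := (One_iff_of_odd p h2).1 h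
    have h1 := (ne_zero_of_V1 p h).2
    rw [v_div p hx (pow_ne_zero 2 hy), v_pow, hx0] at h1
    have hy0 : v p y = 0 := by push_cast at h1; omega
    obtain ⟨c, hc⟩ := approx p (n := 1) (x := y) (Or.inr hy0.ge)
    refine ⟨Ideal.Quotient.mk _ c, ?_⟩
    rw [← map_mul, Ideal.Quotient.eq, ← V_one_iff]
    have e : ((a - c * c : 𝓞 K) : K) = -(x - a) + y ^ 2 * (x / y ^ 2 - 1) + (y - c) * (y + c) := by
      push_cast; field_simp; ring
    rw [e]
    refine V_add p (V_add p (V_neg p ha) ?_) ?_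
    · exact V_mul' p (n := 0) (m := 1) (Or.inr (by rw [v_pow, hy0]; simp)) h (by norm_num)
    · exact V_mul' p (n := 1) (m := 0) (by simpa using hc) (V_add p (Or.inr hy0.ge) (V_int p c)) (by norm_num)
  · rintro ⟨c, hc⟩
    obtain ⟨c, rfl⟩ := Ideal.Quotient.mk_surjective c
    rw [← map_mul, Ideal.Quotient.eq, ← V_one_iff] at hc
    have h1 : V p 1 (x - (c : K) ^ 2) := by
      have := V_add p ha hc
      push_cast at this
      convert this using 1; ring
    have h2' := v_add_eq p hx (y := -(x - (c : K) ^ 2)) (by rw [hx0]; exact V_neg p h1)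
    rw [show x + -(x - (c : K) ^ 2) = (c : K) ^ 2 by ring] at h2'
    have hc0 : (c : K) ≠ 0 := by
      intro h; rw [h] at h2'; simp at h2'
    refine ⟨c, hc0, ?_⟩
    apply (One_iff_of_odd p h2).2
    rw [show x / (c : K) ^ 2 - 1 = (x - (c : K) ^ 2) / (c : K) ^ 2 by field_simp]
    rw [V_div_iff p (pow_ne_zero 2 hc0), h2'.2, hx0]
    exact h1

lemma two_notMem (h2 : v p (2 : K) = 0) : (2 : 𝓞 K) ∉ p.asIdeal := by
  intro h
  rw [← V_one_iff] at h
  have : V p 1 (2 : K) := by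
    have e : ((2 : 𝓞 K) : K) = 2 := map_ofNat (algebraMap (𝓞 K) K) 2
    rwa [e] at h
  rw [V_iff p two_ne_zero] at this; omega

lemma SqAt_mul_odd (h2 : v p (2 : K) = 0) (hx : x ≠ 0) (hx0 : v p x = 0) (hy : y ≠ 0) (hy0 : v p y = 0)
    (h : ¬ SqAt p x) (h' : ¬ SqAt p y) : SqAt p (x * y) := by
  classical
  obtain ⟨a, ha⟩ := approx p (n := 1) (x := x) (Or.inr hx0.ge)
  obtain ⟨c, hc⟩ := approx p (n := 1) (x := y) (Or.inr hy0.ge)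
  simp only [Nat.cast_one] at ha hc
  have hac : V p 1 (x * y - (a * c : 𝓞 K)) := by
    have : x * y - (a * c : 𝓞 K) = (x - a) * y + a * (y - c) := by push_cast; ring
    rw [this]
    exact V_add p (V_mul' p (n := 1) (m := 0) ha (Or.inr hy0.ge) (by norm_num))
      (V_mul' p (n := 0) (m := 1) (V_int p a) hc (by norm_num))
  rw [SqAt_unit_odd p h2 hx hx0 ha] at h
  rw [SqAt_unit_odd p h2 hy hy0 hc] at h'
  rw [SqAt_unit_odd p h2 (mul_ne_zero hx hy) (by rw [v_mul p hx hy]; omega) hac, map_mul]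
  have : p.asIdeal.IsMaximal := p.isMaximal
  let : Field (𝓞 K ⧸ p.asIdeal) := Ideal.Quotient.field _
  have : Finite (𝓞 K ⧸ p.asIdeal) := Ideal.finiteQuotientOfFreeOfNeBot _ p.ne_bot
  let : Fintype (𝓞 K ⧸ p.asIdeal) := Fintype.ofFinite _
  have hch : ringChar (𝓞 K ⧸ p.asIdeal) ≠ 2 := by
    intro h
    have := ringChar.Nat.cast_ringChar (R := 𝓞 K ⧸ p.asIdeal)
    rw [h] at this
    apply two_notMem p h2
    rw [← Ideal.Quotient.eq_zero_iff_mem]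
    exact_mod_cast this
  rw [← quadraticChar_neg_one_iff_not_isSquare] at h h'
  have e : quadraticChar (𝓞 K ⧸ p.asIdeal) (Ideal.Quotient.mk p.asIdeal a * Ideal.Quotient.mk p.asIdeal c) = 1 := by
    rw [map_mul, h, h']; norm_num
  by_contra hn
  rw [← quadraticChar_neg_one_iff_not_isSquare] at hn
  rw [hn] at e; norm_num at e

lemma inert (h2 : v p (2 : K) = 0) (hb0 : b ≠ 0) (hb : ¬ SqAt p b) (hbe : Even (v p b)) {z : K}
    (hx : y ^ 2 - b * z ^ 2 ≠ 0) : Even (v p (y ^ 2 - b * z ^ 2)) := by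
  by_cases hz : z = 0
  · subst hz; simp [v_pow]
  have hz2 := pow_ne_zero 2 hz
  have hbz := mul_ne_zero hb0 hz2
  have ebz : v p (b * z ^ 2) = v p b + 2 * v p z := by rw [v_mul p hb0 hz2, v_pow]; norm_num
  have hbze : Even (v p (b * z ^ 2)) := by rw [ebz]; exact hbe.add (even_two_mul _)
  by_cases hy : y = 0
  · subst hy
    rw [show (0 : K) ^ 2 - b * z ^ 2 = -(b * z ^ 2) by ring, v_neg]; exact hbze
  have hy2 := pow_ne_zero 2 hy
  have ey : v p (y ^ 2) = 2 * v p y := by rw [v_pow]; norm_num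
  rcases lt_trichotomy (v p (y ^ 2)) (v p (b * z ^ 2)) with h | h | h
  · have := v_add_eq p hy2 (y := -(b * z ^ 2)) (V_neg p (Or.inr (by omega)))
    rw [sub_eq_add_neg, this.2, ey]; exact even_two_mul _
  · have h1 : V p (v p (y ^ 2)) (y ^ 2 - b * z ^ 2) := V_sub p (V_self p) (Or.inr h.le)
    rw [V_iff p hx] at h1
    rcases h1.eq_or_lt with h1 | h1
    · rw [← h1, ey]; exact even_two_mul _
    · exfalso; apply hb
      refine ⟨y / z, div_ne_zero hy hz, (One_iff_of_odd p h2).2 ?_⟩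
      rw [show b / (y / z) ^ 2 - 1 = -((y ^ 2 - b * z ^ 2) / y ^ 2) by field_simp; ring]
      apply V_neg
      rw [V_div_iff p hy2]
      right; omega
  · have := v_add_eq p (neg_ne_zero.2 hbz) (y := y ^ 2) (Or.inr (by rw [v_neg]; omega))
    rw [sub_eq_add_neg, add_comm, this.2, v_neg]; exact hbze

lemma ramified (h2 : v p (2 : K) = 0) (hb0 : b ≠ 0) (hbo : ¬ Even (v p b)) {z : K}
    (hx : y ^ 2 - b * z ^ 2 ≠ 0) (hx0 : v p (y ^ 2 - b * z ^ 2) = 0) : SqAt p (y ^ 2 - b * z ^ 2) := by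
  by_cases hz : z = 0
  · subst hz
    simp only [ne_eq, OfNat.ofNat_ne_zero, not_false_eq_true, zero_pow, mul_zero, sub_zero] at *
    exact SqAt_sq p (by rintro rfl; simp at hx)
  have hz2 := pow_ne_zero 2 hz
  have hbz := mul_ne_zero hb0 hz2
  have ebz : v p (b * z ^ 2) = v p b + 2 * v p z := by rw [v_mul p hb0 hz2, v_pow]; norm_num
  have hbze : ¬ Even (v p (b * z ^ 2)) := by
    rw [ebz]; intro h; apply hbo; rw [Int.even_iff] at *; omega
  by_cases hy : y = 0
  · subst hy
    rw [show (0 : K) ^ 2 - b * z ^ 2 = -(b * z ^ 2) by ring, v_neg] at hx0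
    rw [hx0] at hbze; simp at hbze
  have hy2 := pow_ne_zero 2 hy
  have ey : v p (y ^ 2) = 2 * v p y := by rw [v_pow]; norm_num
  rcases lt_trichotomy (v p (y ^ 2)) (v p (b * z ^ 2)) with h | h | h
  · have := v_add_eq p hy2 (y := -(b * z ^ 2)) (V_neg p (Or.inr (by omega)))
    rw [← sub_eq_add_neg, hx0] at this
    refine ⟨y, hy, (One_iff_of_odd p h2).2 ?_⟩
    rw [show (y ^ 2 - b * z ^ 2) / y ^ 2 - 1 = -((b * z ^ 2) / y ^ 2) by field_simp; ring]
    apply V_neg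
    rw [V_div_iff p hy2]
    right; omega
  · rw [← h, ey] at hbze; simp at hbze
  · have := v_add_eq p (neg_ne_zero.2 hbz) (y := y ^ 2) (Or.inr (by rw [v_neg]; omega))
    rw [neg_add_eq_sub, hx0, v_neg] at this
    rw [← this.2] at hbze; simp at hbze

end Loc
end Sieg

end

section
open NumberField IsDedekindDomain

set_option linter.unusedSectionVars false
namespace Sieg

/-- `E = K(√b)` with its conjugation. -/
structure QExt (K E : Type*) [Field K] [Field E] [Algebra K E] (b : K) where
  s : E
  hs : s ^ 2 = algebraMap K E b
  span : ∀ x : E, ∃ u w : K, x = algebraMap K E u + algebraMap K E w * s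
  σ : E ≃ₐ[K] E
  σs : σ s = -s
  nsq : ∀ c : K, c ^ 2 ≠ b
  fr : Module.finrank K E = 2

universe u

section mk
variable {K : Type u} [Field K] [NumberField K]
open QuadraticAlgebra in
lemma exists_QExt {b : K} (hb : ∀ c : K, c ^ 2 ≠ b) :
    ∃ (E : Type u) (_ : Field E) (_ : NumberField E) (_ : Algebra K E), Nonempty (QExt K E b) := by
  have : Fact (∀ r : K, r ^ 2 ≠ b + 0 * r) := ⟨fun r => by simpa using hb r⟩
  have hc : CharZero (QuadraticAlgebra K b 0) := charZero_of_injective_algebraMap (algebraMap K (QuadraticAlgebra K b 0)).injective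
  have hnf : NumberField (QuadraticAlgebra K b 0) :=
    { to_charZero := hc
      to_finiteDimensional := by
        have : IsScalarTower ℚ K (QuadraticAlgebra K b 0) := inferInstance
        exact Module.Finite.trans K _ }
  refine ⟨QuadraticAlgebra K b 0, inferInstance, hnf, inferInstance, ⟨?_⟩⟩
  refine
    { s := ω
      hs := by ext <;> simp [sq]
      span := fun x => ⟨x.re, x.im, by ext <;> simp⟩
      σ := AlgEquiv.ofBijective
        { toFun := star
          map_one' := by ext <;> simp
          map_mul' := fun x y => by ext <;> simp [mul_comm]
          map_zero' := by ext <;> simp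
          map_add' := fun x y => by ext <;> simp [add_comm]
          commutes' := fun r => by ext <;> simp }
        (Function.Involutive.bijective (f := star) star_involutive)
      σs := by ext <;> simp
      nsq := hb
      fr := QuadraticAlgebra.finrank_eq_two _ _ }
end mk

namespace QExt
section alg
variable {K E : Type*} [Field K] [Field E] [Algebra K E] {b : K} (Q : QExt K E b)

local notation "ι" => algebraMap K E
lemma bne (Q : QExt K E b) : b ≠ 0 := by
  intro h; exact Q.nsq 0 (by simp [h])

lemma sne : Q.s ≠ 0 := by
  intro h
  have := Q.hs
  rw [h] at this
  have h2 : ι b = ι 0 := by rw [← this]; simp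
  exact Q.bne ((algebraMap K E).injective h2)

lemma s_notin (u w : K) (h : ι u + ι w * Q.s = 0) : u = 0 ∧ w = 0 := by
  have hw : w = 0 := by
    by_contra hw
    have hw' : ι w ≠ 0 := by simpa using hw
    apply Q.nsq (u / w)
    apply (algebraMap K E).injective
    rw [← Q.hs, map_pow, map_div₀]
    have : Q.s = - (ι u / ι w) := by field_simp; linear_combination h
    rw [this]; ring
  subst hw
  exact ⟨by simpa using h, rfl⟩

lemma σσ (x : E) : Q.σ (Q.σ x) = x := by
  obtain ⟨u, w, rfl⟩ := Q.span x
  simp [Q.σs]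

lemma nm_eq (u w : K) : (ι u + ι w * Q.s) * Q.σ (ι u + ι w * Q.s) = ι (u ^ 2 - b * w ^ 2) := by
  simp only [map_add, map_mul, AlgEquiv.commutes, Q.σs, map_sub, map_pow]
  linear_combination (- (ι w) ^ 2) * Q.hs

lemma exists_nm (x : E) : ∃ n : K, ι n = x * Q.σ x := by
  obtain ⟨u, w, rfl⟩ := Q.span x
  exact ⟨_, (Q.nm_eq u w).symm⟩

/-- norm map -/
noncomputable def nm : E →* K where
  toFun x := (Q.exists_nm x).choose
  map_one' := by
    apply (algebraMap K E).injective
    rw [(Q.exists_nm 1).choose_spec]; simp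
  map_mul' x y := by
    apply (algebraMap K E).injective
    rw [(Q.exists_nm (x * y)).choose_spec, map_mul (algebraMap K E), (Q.exists_nm x).choose_spec,
      (Q.exists_nm y).choose_spec, map_mul]; ring

lemma ι_nm (x : E) : ι (Q.nm x) = x * Q.σ x := (Q.exists_nm x).choose_spec

lemma nm_mk (u w : K) : Q.nm (ι u + ι w * Q.s) = u ^ 2 - b * w ^ 2 := by
  apply (algebraMap K E).injective
  rw [ι_nm, nm_eq]

lemma nm_ι (u : K) : Q.nm (ι u) = u ^ 2 := by
  have := Q.nm_mk u 0
  simpa using this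

/-- the norm on units -/
noncomputable def nmU : Eˣ →* Kˣ := Units.map Q.nm

lemma nmU_val (x : Eˣ) : ((Q.nmU x : Kˣ) : K) = Q.nm x := rfl

lemma exists_of_nm (x : E) : ∃ y z : K, Q.nm x = y ^ 2 - b * z ^ 2 := by
  obtain ⟨u, w, rfl⟩ := Q.span x
  exact ⟨u, w, Q.nm_mk u w⟩

end alg
end QExt

section ext
variable {K E : Type*} [Field K] [Field E] [NumberField K] [NumberField E] [Algebra K E]
local notation "ι" => algebraMap K E

lemma coe_alg (m : 𝓞 K) : ((algebraMap (𝓞 K) (𝓞 E) m : 𝓞 E) : E) = ι (m : K) := rfl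

/-- prime below -/
noncomputable abbrev dn (P : HeightOneSpectrum (𝓞 E)) : HeightOneSpectrum (𝓞 K) := P.under (𝓞 K)

lemma mem_dn (P : HeightOneSpectrum (𝓞 E)) (m : 𝓞 K) :
    m ∈ (dn (K := K) P).asIdeal ↔ algebraMap (𝓞 K) (𝓞 E) m ∈ P.asIdeal := Iff.rfl

variable (P : HeightOneSpectrum (𝓞 E)) {x : K}

lemma V_up (h : V (dn P) 0 x) : V P 0 (ι x) := by
  obtain ⟨m, hm, a, h⟩ := (V_loc _).1 h
  refine (V_loc _).2 ⟨algebraMap _ _ m, hm, algebraMap _ _ a, ?_⟩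
  rw [coe_alg, coe_alg, ← h, map_mul]

lemma V_up1 (h : V (dn P) 1 x) : V P 1 (ι x) := by
  obtain ⟨m, hm, a, ha, h⟩ := (V_loc_one _).1 h
  refine (V_loc_one _).2 ⟨algebraMap _ _ m, hm, algebraMap _ _ a, ha, ?_⟩
  rw [coe_alg, coe_alg, ← h, map_mul]

lemma V_dn (h : V P 0 (ι x)) : V (dn P) 0 x := by
  by_cases hx : x = 0
  · exact Or.inl hx
  by_contra hn
  rw [V_iff _ hx] at hn
  have h1 : V (dn P) 1 x⁻¹ := Or.inr (by rw [v_inv]; omega)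
  have h2 := V_up1 P h1
  have h3 := V_mul P h h2
  rw [← map_mul, mul_inv_cancel₀ hx, map_one, V_iff P one_ne_zero, v_one] at h3
  omega

lemma v_up_zero (hx : x ≠ 0) : v P (ι x) = 0 ↔ v (dn P) x = 0 := by
  have hx' : ι x ≠ 0 := by simpa using hx
  have key : V P 0 (ι x) ↔ V (dn P) 0 x := ⟨V_dn P, V_up P⟩
  have key' : V P 0 (ι x⁻¹) ↔ V (dn P) 0 x⁻¹ := ⟨V_dn P, V_up P⟩
  rw [V_iff _ hx, V_iff _ hx'] at key
  rw [V_iff _ (inv_ne_zero hx), map_inv₀, V_iff _ (inv_ne_zero hx'), v_inv, v_inv] at key'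
  omega

lemma SqAt_up (h : SqAt (dn P) x) : SqAt P (ι x) := by
  obtain ⟨y, hy, h⟩ := h
  refine ⟨ι y, by simpa using hy, ?_⟩
  have := V_up1 P h
  rw [map_div₀, map_sub, map_div₀, map_pow, map_one, map_ofNat] at this
  exact this

lemma exists_over (p : HeightOneSpectrum (𝓞 K)) : ∃ P : HeightOneSpectrum (𝓞 E), dn P = p := by
  obtain ⟨P, hP, h⟩ := p.asIdeal.exists_ideal_over_prime_of_isIntegral_of_isDomain (S := 𝓞 E) (by
    rw [(RingHom.injective_iff_ker_eq_bot _).1 (FaithfulSMul.algebraMap_injective (𝓞 K) (𝓞 E))]; exact bot_le)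
  refine ⟨⟨P, hP, ?_⟩, ?_⟩
  · rintro rfl
    apply p.ne_bot
    rw [← h]
    exact Ideal.comap_bot_of_injective _ (FaithfulSMul.algebraMap_injective (𝓞 K) (𝓞 E))
  · ext1; exact h

/-- primes of `E` above `S` -/
def SE (E : Type*) [Field E] [NumberField E] [Algebra K E] (S : Set (HeightOneSpectrum (𝓞 K))) : Set (HeightOneSpectrum (𝓞 E)) :=
  {P | dn P ∈ S}

lemma SE_finite {S : Set (HeightOneSpectrum (𝓞 K))} (hS : S.Finite) : (SE E S).Finite := by
  apply Set.Finite.preimage' hS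
  intro p _
  have := IsDedekindDomain.primesOver_finite p.asIdeal (𝓞 E)
  apply Set.Finite.of_finite_image (f := HeightOneSpectrum.asIdeal) (this.subset _)
  · intro a _ b _ h; exact HeightOneSpectrum.ext h
  · rintro _ ⟨P, hP, rfl⟩
    refine ⟨P.isPrime, ⟨?_⟩⟩
    rw [← (show dn P = p from hP)]; rfl

/-- conjugate prime -/
noncomputable def cj (τ : E ≃+* E) (P : HeightOneSpectrum (𝓞 E)) : HeightOneSpectrum (𝓞 E) :=
  HeightOneSpectrum.comap (RingOfIntegers.mapRingEquiv τ : 𝓞 E →+* 𝓞 E) (RingOfIntegers.mapRingEquiv τ).surjective P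

lemma mem_cj (τ : E ≃+* E) (a : 𝓞 E) : a ∈ (cj τ P).asIdeal ↔ RingOfIntegers.mapRingEquiv τ a ∈ P.asIdeal := Iff.rfl

lemma V_cj (τ : E ≃+* E) {y : E} (h : V (cj τ P) 0 y) : V P 0 (τ y) := by
  obtain ⟨m, hm, a, h⟩ := (V_loc _).1 h
  refine (V_loc _).2 ⟨RingOfIntegers.mapRingEquiv τ m, hm, RingOfIntegers.mapRingEquiv τ a, ?_⟩
  have := congrArg τ h
  rw [map_mul] at this
  exact this

lemma dn_cj (τ : E ≃ₐ[K] E) : dn (K := K) (cj (τ : E ≃+* E) P) = dn P := by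
  ext m
  rw [mem_dn, mem_dn, mem_cj]
  have : RingOfIntegers.mapRingEquiv (τ : E ≃+* E) (algebraMap (𝓞 K) (𝓞 E) m) = algebraMap (𝓞 K) (𝓞 E) m := by
    apply RingOfIntegers.ext
    exact τ.commutes m
  rw [this]

/-- Split lemma. -/
lemma split {b : K} (Q : QExt K E b) (p : HeightOneSpectrum (𝓞 K)) (h : SqAt p b) :
    ∃ P P' : HeightOneSpectrum (𝓞 E), dn P = p ∧ dn P' = p ∧ P ≠ P' := by
  obtain ⟨P, hP⟩ := exists_over (E := E) p
  obtain ⟨y, hy, h⟩ := h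
  have hy' : ι y ≠ 0 := by simpa using hy
  obtain ⟨m, hm, c, hc, hmc⟩ := (V_loc_one _).1 h
  subst hP
  -- θ = (1 + s/y)/2
  set θ : E := (1 + Q.s / ι y) / 2 with hθ
  have h4 : θ ^ 2 - θ = ι ((b / y ^ 2 - 1) / 4) := by
    rw [hθ, map_div₀, map_sub, map_div₀, ← Q.hs, map_pow, map_one, map_ofNat]; field_simp; ring
  have hσ : Q.σ θ = 1 - θ := by
    rw [hθ, map_div₀, map_add, map_div₀, Q.σs, AlgEquiv.commutes, map_one, map_ofNat]; field_simp; ring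
  have hq : (ι (m : K) * θ) ^ 2 - ι (m : K) * (ι (m : K) * θ) = ι ((m : K) * c) := by
    rw [← hmc, map_mul, map_mul, ← h4]; ring
  have hintg : IsIntegral ℤ (ι (m : K) * θ) := by
    have hi : IsIntegral (𝓞 K) (ι (m : K) * θ) := by
      refine ⟨Polynomial.X ^ 2 - (Polynomial.C m * Polynomial.X + Polynomial.C (m * c)), ?_, ?_⟩
      · apply Polynomial.monic_X_pow_sub
        exact (Polynomial.degree_linear_le).trans_lt (by norm_num)
      · simp only [Polynomial.eval₂_sub, Polynomial.eval₂_add, Polynomial.eval₂_mul, Polynomial.eval₂_pow,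
          Polynomial.eval₂_X, Polynomial.eval₂_C]
        have e1 : algebraMap (𝓞 K) E m = ι (m : K) := rfl
        have e2 : algebraMap (𝓞 K) E (m * c) = ι ((m : K) * c) := by
          rw [← map_mul]; rfl
        rw [e1, e2]
        linear_combination hq
    exact isIntegral_trans (R := ℤ) (A := 𝓞 K) _ hi
  set t : 𝓞 E := ⟨ι (m : K) * θ, hintg⟩ with ht
  set μ : 𝓞 E := algebraMap (𝓞 K) (𝓞 E) m with hμ
  have hprod : t * (t - μ) ∈ P.asIdeal := by
    have : t * (t - μ) = μ * algebraMap (𝓞 K) (𝓞 E) c := by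
      apply RingOfIntegers.ext
      have e1 : ((t * (t - μ) : 𝓞 E) : E) = (ι (m : K) * θ) * ((ι (m : K) * θ) - ι (m : K)) := by
        push_cast; rfl
      have e2 : ((μ * algebraMap (𝓞 K) (𝓞 E) c : 𝓞 E) : E) = ι (m : K) * ι (c : K) := by
        push_cast; rfl
      rw [e1, e2, ← map_mul, ← hq]; ring
    rw [this]
    exact Ideal.mul_mem_left _ _ ((mem_dn P c).1 hc)
  have hμP : μ ∉ P.asIdeal := hm
  have hst : RingOfIntegers.mapRingEquiv (Q.σ : E ≃+* E) t = μ - t := by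
    apply RingOfIntegers.ext
    have e1 : ((RingOfIntegers.mapRingEquiv (Q.σ : E ≃+* E) t : 𝓞 E) : E) = Q.σ (ι (m : K) * θ) := rfl
    have e2 : ((μ - t : 𝓞 E) : E) = ι (m : K) - ι (m : K) * θ := by push_cast; rfl
    rw [e1, e2, map_mul, AlgEquiv.commutes, hσ]; ring
  refine ⟨P, cj (Q.σ : E ≃+* E) P, rfl, dn_cj P Q.σ, ?_⟩
  intro heq
  have key : t ∈ P.asIdeal ↔ μ - t ∈ P.asIdeal := by
    rw [← hst, ← mem_cj, ← heq]
  have hboth : t ∈ P.asIdeal ∧ μ - t ∈ P.asIdeal := by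
    rcases P.isPrime.mem_or_mem hprod with h | h
    · exact ⟨h, key.1 h⟩
    · have : μ - t ∈ P.asIdeal := by rw [← neg_sub]; exact neg_mem h
      exact ⟨key.2 this, this⟩
  apply hμP
  have := add_mem hboth.1 hboth.2
  rwa [add_sub_cancel] at this

end ext
end Sieg

end

section
open NumberField IsDedekindDomain
set_option linter.unusedSectionVars false
set_option maxSynthPendingDepth 3
namespace Sieg

/-- subgroup of squares -/
def sqs (G : Type*) [CommGroup G] : Subgroup G := (powMonoidHom 2 : G →* G).range

lemma mem_sqs {G : Type*} [CommGroup G] {x : G} : x ∈ sqs G ↔ ∃ y, y ^ 2 = x := Iff.rfl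

section
variable (K : Type*) [Field K] [NumberField K]
open NumberField.Units

lemma sqs_torsion : (sqs (torsion K)).index = 2 := by
  classical
  have h := Subgroup.index_range (f := (powMonoidHom 2 : torsion K →* torsion K))
  have : (sqs (torsion K)).index = Nat.card (powMonoidHom 2 : torsion K →* torsion K).ker := h
  rw [this]
  have hm : (-1 : (𝓞 K)ˣ) ∈ torsion K := by
    rw [torsion, CommGroup.mem_torsion, isOfFinOrder_iff_pow_eq_one]
    exact ⟨2, by norm_num, by simp⟩
  rw [Nat.card_eq_two_iff]
  refine ⟨1, ⟨⟨-1, hm⟩, ?_⟩, ?_, ?_⟩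
  · rw [MonoidHom.mem_ker]; ext; simp
  · intro h
    have h1 : (1 : (𝓞 K)ˣ) = -1 := Subtype.ext_iff.1 (Subtype.ext_iff.1 h)
    have h2 : (1 : K) = -1 := by
      have := congrArg (fun x : (𝓞 K)ˣ => ((x : 𝓞 K) : K)) h1
      simpa using this
    have : (2 : K) = 0 := by linear_combination h2
    norm_num at this
  · ext x
    simp only [Set.mem_insert_iff, Set.mem_singleton_iff, Set.mem_univ, iff_true]
    have hx := x.2
    rw [MonoidHom.mem_ker] at hx
    have h2 : ((x : torsion K) : (𝓞 K)ˣ) ^ 2 = 1 := Subtype.ext_iff.1 hx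
    have h3 : (((x : torsion K) : (𝓞 K)ˣ) : 𝓞 K) ^ 2 = 1 := by
      rw [← Units.val_pow_eq_pow_val, h2, Units.val_one]
    rcases (sq_eq_sq_iff_eq_or_eq_neg.1 (h3.trans (one_pow 2).symm)) with h | h
    · left; apply Subtype.ext; apply Subtype.ext; apply Units.ext; exact h
    · right; apply Subtype.ext; apply Subtype.ext; apply Units.ext; exact h

/-- exponents mod 2 -/
noncomputable def parity : (𝓞 K)ˣ →* Multiplicative (Fin (rank K) → ZMod 2) where
  toFun x := Multiplicative.ofAdd fun i => (((basisModTorsion K).repr (Additive.ofMul (QuotientGroup.mk x)) i : ℤ) : ZMod 2)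
  map_one' := by
    rw [QuotientGroup.mk_one, ofMul_one, map_zero]
    simp only [Finsupp.coe_zero, Pi.zero_apply, Int.cast_zero]; rfl
  map_mul' x y := by
    rw [QuotientGroup.mk_mul, ofMul_mul, map_add]
    simp only [Finsupp.coe_add, Pi.add_apply, Int.cast_add]; rfl

lemma parity_surj : Function.Surjective (parity K) := by
  intro f
  refine ⟨∏ i, fundSystem K i ^ ((Multiplicative.toAdd f i).val : ℤ), ?_⟩
  have h := fun_eq_repr K (x := ∏ i, fundSystem K i ^ ((Multiplicative.toAdd f i).val : ℤ)) (ζ := 1)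
    (f := fun i => ((Multiplicative.toAdd f i).val : ℤ)) (one_mem _) (by simp)
  unfold parity
  apply Multiplicative.toAdd.injective
  funext i
  simp only [MonoidHom.coe_mk, OneHom.coe_mk, toAdd_ofAdd]
  rw [← h]
  simp

lemma parity_ker : (parity K).ker = torsion K ⊔ sqs (𝓞 K)ˣ := by
  apply le_antisymm
  · intro x hx
    obtain ⟨⟨ζ, e⟩, he, -⟩ := exist_unique_eq_mul_prod K x
    simp only at he
    have h := fun_eq_repr K ζ.2 he
    rw [MonoidHom.mem_ker] at hx
    have hev : ∀ i, Even (e i) := by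
      intro i
      have := congrFun (congrArg Multiplicative.toAdd hx) i
      simp only [parity, MonoidHom.coe_mk, OneHom.coe_mk, toAdd_ofAdd, ← h, toAdd_one, Pi.zero_apply] at this
      rw [even_iff_two_dvd]
      exact (ZMod.intCast_zmod_eq_zero_iff_dvd _ 2).1 this
    choose g hg using hev
    rw [he]
    refine Subgroup.mul_mem_sup ζ.2 ⟨∏ i, fundSystem K i ^ g i, ?_⟩
    simp only [powMonoidHom_apply, ← Finset.prod_pow]
    refine Finset.prod_congr rfl fun i _ => ?_
    rw [hg, ← zpow_natCast, ← zpow_mul]; congr 1; push_cast; ring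
  · rw [sup_le_iff]
    constructor
    · intro x hx
      rw [MonoidHom.mem_ker]
      have : ((x : (𝓞 K)ˣ ⧸ torsion K)) = 1 := (QuotientGroup.eq_one_iff x).2 hx
      simp only [parity, MonoidHom.coe_mk, OneHom.coe_mk, this, ofMul_one, map_zero]
      simp only [Finsupp.coe_zero, Pi.zero_apply, Int.cast_zero]; rfl
    · rintro _ ⟨y, rfl⟩
      rw [MonoidHom.mem_ker, powMonoidHom_apply, map_pow]
      apply Multiplicative.toAdd.injective
      funext i
      have : ∀ z : ZMod 2, 2 • z = 0 := by decide
      simp [this]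

lemma sqs_units : (sqs (𝓞 K)ˣ).index = 2 ^ (rank K + 1) := by
  have h1 : (parity K).ker.index = 2 ^ rank K := by
    rw [Subgroup.index_ker, MonoidHom.range_eq_top.2 (parity_surj K), Subgroup.card_top]
    rw [Nat.card_eq_of_bijective Multiplicative.toAdd Multiplicative.toAdd.bijective]
    simp
  have h2 : (sqs (𝓞 K)ˣ).relIndex (torsion K) = 2 := by
    rw [← sqs_torsion K, Subgroup.relIndex]
    congr 1
    ext x
    rw [Subgroup.mem_subgroupOf]
    constructor
    · rintro ⟨y, hy⟩
      simp only [powMonoidHom_apply] at hy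
      have : y ∈ torsion K := by
        have hx := x.2
        have hx' : IsOfFinOrder (x : (𝓞 K)ˣ) := (CommGroup.mem_torsion _).1 hx
        rw [← hy] at hx'
        exact (CommGroup.mem_torsion _).2 ((isOfFinOrder_pow.1 hx').resolve_right (by norm_num))
      exact ⟨⟨y, this⟩, Subtype.ext hy⟩
    · rintro ⟨y, rfl⟩
      exact ⟨y, rfl⟩
  have h3 := Subgroup.relIndex_mul_index (H := sqs (𝓞 K)ˣ) (K := torsion K ⊔ sqs (𝓞 K)ˣ) le_sup_right
  rw [Subgroup.relIndex_sup_right, ← parity_ker, h1, h2] at h3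
  rw [← h3]; ring

variable {K}
/-- S-units -/
def U (S : Set (HeightOneSpectrum (𝓞 K))) : Subgroup Kˣ where
  carrier := {x | ∀ p, p ∉ S → v p (x : K) = 0}
  mul_mem' {a b} ha hb p hp := by
    rw [Units.val_mul, v_mul p a.ne_zero b.ne_zero, ha p hp, hb p hp, add_zero]
  one_mem' p _ := by simp [v_one]
  inv_mem' {a} ha p hp := by rw [Units.val_inv_eq_inv_val, v_inv, ha p hp, neg_zero]

lemma mem_U {S : Set (HeightOneSpectrum (𝓞 K))} {x : Kˣ} : x ∈ U S ↔ ∀ p, p ∉ S → v p (x : K) = 0 := Iff.rfl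

lemma U_mono {S T : Set (HeightOneSpectrum (𝓞 K))} (h : S ⊆ T) : U S ≤ U T :=
  fun _ hx p hp => hx p (fun hp' => hp (h hp'))

lemma mem_U_of_sq {S : Set (HeightOneSpectrum (𝓞 K))} {x : Kˣ} (h : x ^ 2 ∈ U S) : x ∈ U S := by
  intro p hp
  have := h p hp
  rw [Units.val_pow_eq_pow_val, v_pow] at this
  push_cast at this; omega

lemma neg_one_mem_U (S : Set (HeightOneSpectrum (𝓞 K))) : (-1 : Kˣ) ∈ U S := by
  intro p _; simp [v_neg, v_one]

lemma U_empty : (Units.map (algebraMap (𝓞 K) K : 𝓞 K →* K)).range = U (∅ : Set (HeightOneSpectrum (𝓞 K))) := by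
  ext x
  constructor
  · rintro ⟨y, rfl⟩ p -
    have h1 := v_int p (y : 𝓞 K)
    have h2 := v_int p ((y⁻¹ : (𝓞 K)ˣ) : 𝓞 K)
    have h3 : (((y⁻¹ : (𝓞 K)ˣ) : 𝓞 K) : K) = ((y : 𝓞 K) : K)⁻¹ := by
      apply eq_inv_of_mul_eq_one_left
      rw [← map_mul, Units.inv_mul, map_one]
    rw [h3, v_inv] at h2
    have : v p ((y : 𝓞 K) : K) = 0 := by omega
    exact this
  · intro hx
    obtain ⟨a, ha⟩ := int_of_V (x := (x : K)) (fun p => Or.inr (hx p (by simp)).ge)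
    obtain ⟨b, hb⟩ := int_of_V (x := ((x⁻¹ : Kˣ) : K)) (fun p => Or.inr ((inv_mem hx) p (by simp)).ge)
    have hab : a * b = 1 := by
      apply RingOfIntegers.ext
      change algebraMap (𝓞 K) K (a * b) = algebraMap (𝓞 K) K 1
      rw [map_mul, map_one]
      have ha' : algebraMap (𝓞 K) K a = _ := ha
      have hb' : algebraMap (𝓞 K) K b = _ := hb
      rw [ha', hb']; simp
    refine ⟨⟨a, b, hab, by rw [mul_comm]; exact hab⟩, ?_⟩
    apply Units.ext
    exact ha

lemma sqs_relIndex_empty : (sqs Kˣ).relIndex (U (∅ : Set (HeightOneSpectrum (𝓞 K)))) = 2 ^ (rank K + 1) := by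
  have hinj : Function.Injective (Units.map (algebraMap (𝓞 K) K : 𝓞 K →* K)) :=
    Units.map_injective RingOfIntegers.coe_injective
  rw [← sqs_units, ← U_empty, MonoidHom.range_eq_map, ← Subgroup.relIndex_top_right, ← Subgroup.relIndex_comap]
  congr 1
  ext x
  constructor
  · rintro ⟨y, hy⟩
    simp only [powMonoidHom_apply] at hy
    have : y ∈ U (∅ : Set (HeightOneSpectrum (𝓞 K))) := by
      apply mem_U_of_sq
      rw [hy, ← U_empty]; exact ⟨x, rfl⟩
    rw [← U_empty] at this
    obtain ⟨z, rfl⟩ := this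
    exact ⟨z, hinj (by simpa using hy)⟩
  · rintro ⟨y, rfl⟩
    exact ⟨Units.map (algebraMap (𝓞 K) K : 𝓞 K →* K) y, by simp⟩

/-- some power of a prime is principal -/
lemma exists_gen (p : HeightOneSpectrum (𝓞 K)) : ∃ g : Kˣ, 0 < v p (g : K) ∧ ∀ q, q ≠ p → v q (g : K) = 0 := by
  classical
  have hp0 : p.asIdeal ∈ nonZeroDivisors (Ideal (𝓞 K)) := mem_nonZeroDivisors_of_ne_zero p.ne_bot
  obtain ⟨k, hk, h⟩ := isOfFinOrder_iff_pow_eq_one.1 (isOfFinOrder_of_finite (ClassGroup.mk0 ⟨p.asIdeal, hp0⟩))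
  rw [← map_pow, ClassGroup.mk0_eq_one_iff] at h
  obtain ⟨g, hg⟩ := h
  have hg : p.asIdeal ^ k = Ideal.span {g} := by simpa using hg
  have hg0 : g ≠ 0 := by
    rintro rfl
    have : p.asIdeal ^ k = ⊥ := by simpa using hg
    exact p.ne_bot (pow_eq_zero_iff hk.ne' |>.1 this)
  have hg0' : (g : K) ≠ 0 := by simpa using hg0
  refine ⟨Units.mk0 (g : K) hg0', ?_, ?_⟩
  · have : g ∈ p.asIdeal := Ideal.pow_le_self hk.ne' (by rw [hg]; exact Ideal.mem_span_singleton_self g)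
    have := (V_one_iff p g).2 this
    rw [V_iff p hg0'] at this
    rw [Units.val_mk0]; omega
  · intro q hq
    apply v_eq_zero_of_notMem
    intro hgq
    have h1 : p.asIdeal ^ k ≤ q.asIdeal := by rw [hg]; simpa [Ideal.span_le] using hgq
    have h2 : p.asIdeal ≤ q.asIdeal := q.isPrime.le_of_pow_le h1
    exact hq (HeightOneSpectrum.ext (p.isMaximal.eq_of_le q.isPrime.ne_top h2).symm)

lemma sqs_relIndex_insert {S : Set (HeightOneSpectrum (𝓞 K))} {p : HeightOneSpectrum (𝓞 K)} (hp : p ∉ S) :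
    (sqs Kˣ).relIndex (U (insert p S)) = 2 * (sqs Kˣ).relIndex (U S) := by
  classical
  have hex : ∃ n : ℕ, 0 < n ∧ ∃ g : Kˣ, g ∈ U (insert p S) ∧ v p (g : K) = n := by
    obtain ⟨g, h1, h2⟩ := exists_gen p
    refine ⟨(v p (g : K)).toNat, by omega, g, ?_, by omega⟩
    intro q hq
    exact h2 q (fun h => hq (by simp [h]))
  obtain ⟨hn, w, hw, hwn⟩ := Nat.find_spec hex
  set n := Nat.find hex with hndef
  have hmin : ∀ x : Kˣ, x ∈ U (insert p S) → (n : ℤ) ∣ v p (x : K) := by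
    intro x hx
    rw [Int.dvd_iff_emod_eq_zero]
    by_contra hne
    have hpos := Int.emod_nonneg (v p (x : K)) (b := (n : ℤ)) (by omega)
    have hlt := Int.emod_lt_of_pos (v p (x : K)) (b := (n : ℤ)) (by omega)
    refine Nat.find_min hex (m := (v p (x : K) % n).toNat) (by omega) ⟨by omega, x * w ^ (-(v p (x : K) / n)), mul_mem hx (zpow_mem hw _), ?_⟩
    rw [Units.val_mul, v_mul p x.ne_zero (Units.ne_zero _), Units.val_zpow_eq_zpow_val, v_zpow, hwn]
    rw [Int.toNat_of_nonneg hpos, Int.emod_def]; ring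
  -- even part
  have hA : ∀ x : Kˣ, x ∈ U (insert p S) → v p (x : K) = 0 → x ∈ U S := by
    intro x hx h0 q hq
    by_cases h : q = p
    · rw [h, h0]
    · exact hx q (by simp [h, hq])
  set H : Subgroup Kˣ := U S ⊔ (sqs Kˣ ⊓ U (insert p S)) with hH
  have hHU : H ≤ U (insert p S) := sup_le (U_mono (Set.subset_insert _ _)) inf_le_right
  have hHv : ∀ x ∈ H, (2 * n : ℤ) ∣ v p (x : K) := by
    intro x hx
    obtain ⟨a, ha, b, ⟨⟨c, hc⟩, hb⟩, rfl⟩ := Subgroup.mem_sup.1 hx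
    simp only [powMonoidHom_apply] at hc
    subst hc
    have := hmin c (mem_U_of_sq hb)
    rw [Units.val_mul, v_mul p a.ne_zero (Units.ne_zero _), ha p hp, Units.val_pow_eq_pow_val, v_pow, zero_add]
    push_cast
    exact mul_dvd_mul_left 2 this
  have hHmem : ∀ x ∈ U (insert p S), (2 * n : ℤ) ∣ v p (x : K) → x ∈ H := by
    rintro x hx ⟨k, hk⟩
    have : x = (x * w ^ (-(2 * k))) * (w ^ k) ^ 2 := by
      rw [← zpow_natCast (w ^ k), ← zpow_mul, mul_assoc, ← zpow_add]; simp [mul_comm]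
    rw [this]
    refine Subgroup.mul_mem_sup (hA _ (mul_mem hx (zpow_mem hw _)) ?_) ⟨⟨w ^ k, rfl⟩, pow_mem (zpow_mem hw _) _⟩
    rw [Units.val_mul, v_mul p x.ne_zero (Units.ne_zero _), Units.val_zpow_eq_zpow_val, v_zpow, hwn, hk]; ring
  have h2 : H.relIndex (U (insert p S)) = 2 := by
    rw [Subgroup.relIndex_eq_two_iff]
    refine ⟨w, hw, fun b hb => ?_⟩
    obtain ⟨k, hk⟩ := hmin b hb
    have key : ∀ y ∈ U (insert p S), y ∈ H ↔ (2 * n : ℤ) ∣ v p (y : K) := fun y hy => ⟨hHv y, hHmem y hy⟩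
    rw [key _ (mul_mem hb hw), key _ hb, Units.val_mul, v_mul p b.ne_zero w.ne_zero, hk, hwn]
    have hn0 : (n : ℤ) ≠ 0 := by omega
    rw [show (n : ℤ) * k + n = (k + 1) * n by ring, mul_comm (n : ℤ) k, mul_dvd_mul_iff_right hn0, mul_dvd_mul_iff_right hn0]
    rcases Int.emod_two_eq_zero_or_one k with h | h
    · right; constructor <;> omega
    · left; constructor <;> omega
  have h3 : (sqs Kˣ).relIndex H = (sqs Kˣ).relIndex (U S) := by
    have e1 : (sqs Kˣ).relIndex H = (sqs Kˣ ⊓ U (insert p S)).relIndex H := by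
      rw [← Subgroup.inf_relIndex_right, ← Subgroup.inf_relIndex_right (sqs Kˣ ⊓ U (insert p S))]
      congr 1
      rw [inf_assoc, inf_eq_right.2 hHU]
    rw [e1, hH, Subgroup.relIndex_sup_right, ← Subgroup.inf_relIndex_right, ← Subgroup.inf_relIndex_right (sqs Kˣ)]
    congr 1
    rw [inf_assoc, inf_eq_right.2 (U_mono (Set.subset_insert _ _))]
  have h4 := Subgroup.relIndex_inf_mul_relIndex (sqs Kˣ) H (U (insert p S))
  rw [inf_eq_left.2 hHU, h3, h2] at h4
  rw [← Subgroup.inf_relIndex_right, show sqs Kˣ ⊓ U (insert p S) = (sqs Kˣ ⊓ H) ⊓ U (insert p S) from ?_, Subgroup.inf_relIndex_right, ← h4]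
  · ring
  · apply le_antisymm
    · intro x hx
      exact ⟨⟨hx.1, (le_sup_right : _ ≤ H) hx⟩, hx.2⟩
    · intro x hx; exact ⟨hx.1.1, hx.2⟩

/-- S-unit theorem mod squares -/
lemma sqs_relIndex {S : Set (HeightOneSpectrum (𝓞 K))} (hS : S.Finite) :
    (sqs Kˣ).relIndex (U S) = 2 ^ (rank K + 1 + S.ncard) := by
  induction S, hS using Set.Finite.induction_on with
  | empty => simp [sqs_relIndex_empty]
  | @insert p S hp hS ih => rw [sqs_relIndex_insert hp, ih, Set.ncard_insert_of_notMem hp hS]; ring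

end
end Sieg

end

section
open NumberField IsDedekindDomain
set_option linter.unusedSectionVars false
set_option maxSynthPendingDepth 3
namespace Sieg

section F1
variable {K E : Type*} [Field K] [Field E] [NumberField K] [NumberField E] [Algebra K E]
local notation "ι" => algebraMap K E

/-- every finitely supported valuation vector outside `S` is principal -/
def Cl (S : Set (HeightOneSpectrum (𝓞 K))) : Prop :=
  ∀ f : HeightOneSpectrum (𝓞 K) → ℤ, {p | f p ≠ 0}.Finite → ∃ c : K, c ≠ 0 ∧ ∀ p, p ∉ S → v p c = f p

lemma Cl.mono {S T : Set (HeightOneSpectrum (𝓞 K))} (h : Cl S) (hST : S ⊆ T) : Cl T := by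
  intro f hf
  obtain ⟨c, hc, h⟩ := h f hf
  exact ⟨c, hc, fun p hp => h p (fun hp' => hp (hST hp'))⟩

lemma Cl.prim {S : Set (HeightOneSpectrum (𝓞 K))} (h : Cl S) (x y : K) (hxy : x ≠ 0 ∨ y ≠ 0) :
    ∃ c : K, c ≠ 0 ∧ ∀ p, p ∉ S → V p 0 (c * x) ∧ V p 0 (c * y) ∧
      ((c * x ≠ 0 ∧ v p (c * x) = 0) ∨ (c * y ≠ 0 ∧ v p (c * y) = 0)) := by
  classical
  by_cases hx : x = 0
  · have hy := hxy.resolve_left (not_not.2 hx)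
    refine ⟨y⁻¹, inv_ne_zero hy, fun p _ => ?_⟩
    rw [inv_mul_cancel₀ hy, hx, mul_zero]
    refine ⟨V_zero p, Or.inr (v_one p).ge, Or.inr ⟨one_ne_zero, v_one p⟩⟩
  by_cases hy : y = 0
  · refine ⟨x⁻¹, inv_ne_zero hx, fun p _ => ?_⟩
    rw [inv_mul_cancel₀ hx, hy, mul_zero]
    refine ⟨Or.inr (v_one p).ge, V_zero p, Or.inl ⟨one_ne_zero, v_one p⟩⟩
  obtain ⟨c, hc, h⟩ := h (fun p => - min (v p x) (v p y)) (by
    refine ((finite_v hx).union (finite_v hy)).subset fun p hp => ?_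
    by_contra hcon
    simp only [Set.mem_union, Set.mem_ofPred_eq, not_or, not_not] at hcon hp
    rw [hcon.1, hcon.2] at hp; simp at hp)
  refine ⟨c, hc, fun p hp => ?_⟩
  have h := h p hp
  rw [V_iff p (mul_ne_zero hc hx), V_iff p (mul_ne_zero hc hy), v_mul p hc hx, v_mul p hc hy]
  refine ⟨by omega, by omega, ?_⟩
  rcases le_total (v p x) (v p y) with h' | h'
  · left; exact ⟨mul_ne_zero hc hx, by omega⟩
  · right; exact ⟨mul_ne_zero hc hy, by omega⟩

variable {d : K} (Q : QExt K E d) {S : Set (HeightOneSpectrum (𝓞 K))}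

lemma V_s (P : HeightOneSpectrum (𝓞 E)) (hd : v (dn P) d = 0) : v P Q.s = 0 := by
  have h := (v_up_zero P Q.bne).2 hd
  rw [← Q.hs, v_pow] at h
  push_cast at h; omega

lemma V_mk (P : HeightOneSpectrum (𝓞 E)) (hd : v (dn P) d = 0) {x y : K} (hx : V (dn P) 0 x) (hy : V (dn P) 0 y) :
    V P 0 (ι x + ι y * Q.s) :=
  V_add P (V_up P hx) (V_mul' P (V_up P hy) (Or.inr (V_s Q P hd).ge) (by norm_num))

lemma V_σ (P : HeightOneSpectrum (𝓞 E)) (hP : P ∉ SE E S) {x : E} (h : ∀ P', P' ∉ SE E S → V P' 0 x) : V P 0 (Q.σ x) := by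
  apply V_cj P (Q.σ : E ≃+* E)
  apply h
  intro h'
  apply hP
  have : dn (K := K) (cj (Q.σ : E ≃+* E) P) ∈ S := h'
  rw [dn_cj] at this
  exact this

lemma v_σ (P : HeightOneSpectrum (𝓞 E)) (hP : P ∉ SE E S) {x : E} (hx : x ≠ 0) (h : ∀ P', P' ∉ SE E S → v P' x = 0) :
    v P (Q.σ x) = 0 := by
  have hσ : Q.σ x ≠ 0 := by simpa using hx
  have h1 := V_σ Q P hP (x := x) (fun P' hP' => Or.inr (h P' hP').ge)
  have h2 := V_σ Q P hP (x := x⁻¹) (fun P' hP' => Or.inr (by rw [v_inv, h P' hP', neg_zero]))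
  rw [map_inv₀, V_iff P (inv_ne_zero hσ), v_inv] at h2
  rw [V_iff P hσ] at h1
  omega

lemma nm_mem_U {γ : Eˣ} (h : γ ∈ U (SE E S)) : Q.nmU γ ∈ U S := by
  intro p hp
  obtain ⟨P, rfl⟩ := exists_over (E := E) p
  have hP : P ∉ SE E S := hp
  rw [← v_up_zero P (Units.ne_zero _), Q.nmU_val, Q.ι_nm, v_mul P γ.ne_zero (by simp), h P hP, v_σ Q P hP γ.ne_zero h]
  rfl

lemma hilb90 (hCl : Cl S) (h2 : ∀ p, p ∉ S → v p (2 : K) = 0) (hd : ∀ p, p ∉ S → v p d = 0) {γ : Eˣ}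
    (hγ : γ ∈ U (SE E S)) (hn : Q.nm γ = 1) : ∃ δ : Eˣ, δ ∈ U (SE E S) ∧ (γ : E) * Q.σ δ = δ := by
  by_cases h1 : (γ : E) = -1
  · refine ⟨Units.mk0 Q.s Q.sne, fun P hP => V_s Q P (hd _ hP), ?_⟩
    simp [h1, Q.σs]
  obtain ⟨g, h, hgh⟩ := Q.span (γ : E)
  have hδ0 : (1 : E) + γ ≠ 0 := fun h' => h1 (by linear_combination h')
  have hσγ : (γ : E) * Q.σ γ = 1 := by rw [← Q.ι_nm, hn, map_one]
  have hδ0' : (1 : E) + γ = ι (1 + g) + ι h * Q.s := by rw [hgh, map_add, map_one]; ring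
  obtain ⟨c, hc, hcp⟩ := hCl.prim (1 + g) h (by
    by_contra hcon
    push Not at hcon
    apply hδ0; rw [hδ0', hcon.1, hcon.2]; simp)
  have hιc : ι c ≠ 0 := by simpa using hc
  set x := c * (1 + g) with hx
  set y := c * h with hy
  have hδ : ι c * (1 + γ) = ι x + ι y * Q.s := by rw [hδ0', hx, hy, map_mul, map_mul]; ring
  have hδne : ι c * (1 + (γ : E)) ≠ 0 := mul_ne_zero hιc hδ0
  have hmain : (γ : E) * Q.σ (ι c * (1 + γ)) = ι c * (1 + γ) := by
    rw [map_mul, map_add, map_one, AlgEquiv.commutes]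
    linear_combination (ι c) * hσγ
  have hnx : Q.nm (ι c * (1 + γ)) = x ^ 2 - d * y ^ 2 := by rw [hδ, Q.nm_mk]
  set n := x ^ 2 - d * y ^ 2 with hndef
  have hιn : ι n = (ι c * (1 + γ)) * Q.σ (ι c * (1 + γ)) := by rw [← Q.ι_nm, hnx]
  have hn0 : n ≠ 0 := by
    intro h0
    rw [h0, map_zero] at hιn
    rcases mul_eq_zero.1 hιn.symm with h' | h'
    · exact hδne h'
    · exact hδne ((map_eq_zero Q.σ).1 h')
  have hsq : (ι x + ι y * Q.s) ^ 2 = (ι g + ι h * Q.s) * ι n := by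
    rw [← hδ, ← hgh, hιn]
    linear_combination (- (ι c * (1 + (γ : E)))) * hmain
  have hcmp := Q.s_notin (x ^ 2 + d * y ^ 2 - g * n) (2 * x * y - h * n) (by
    simp only [map_sub, map_add, map_mul, map_pow, map_ofNat]
    linear_combination hsq - (ι y) ^ 2 * Q.hs)
  have hg : ∀ p, p ∉ S → V p 0 g := by
    intro p hp
    obtain ⟨P, rfl⟩ := exists_over (E := E) p
    have hP : P ∉ SE E S := hp
    have hV : V P 0 (ι (2 * g)) := by
      have : ι (2 * g) = γ + Q.σ γ := by
        rw [hgh]; simp only [map_mul, map_add, map_ofNat, AlgEquiv.commutes, Q.σs]; ring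
      rw [this]
      exact V_add P (Or.inr (hγ P hP).ge) (V_σ Q P hP (fun P' hP' => Or.inr (hγ P' hP').ge))
    have := V_dn P hV
    rwa [V_mul_iff _ two_ne_zero, h2 _ hp, sub_zero] at this
  have hnp : ∀ p, p ∉ S → v p n = 0 := by
    intro p hp
    obtain ⟨hVx, hVy, hor⟩ := hcp p hp
    have hdne := Q.bne
    have hVd : V p 0 d := Or.inr (hd p hp).ge
    have hV1 : V p 0 (1 : K) := Or.inr (v_one p).ge
    have hVn : V p 0 n := V_sub p (V_sq p hVx) (V_mul' p hVd (V_sq p hVy) (by norm_num))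
    rw [V_iff p hn0] at hVn
    by_contra hne
    have hn1 : V p 1 n := Or.inr (by omega)
    rcases hor with ⟨hx0, hxv⟩ | ⟨hy0, hyv⟩
    · have e : 2 * x ^ 2 = n * (1 + g) := by linear_combination hcmp.1 - (by rw [hndef] : n = x ^ 2 - d * y ^ 2)
      have : V p 1 (2 * x ^ 2) := by rw [e]; exact V_mul' p hn1 (V_add p hV1 (hg p hp)) (by norm_num)
      rw [V_iff p (mul_ne_zero two_ne_zero (pow_ne_zero _ hx0)), v_mul p two_ne_zero (pow_ne_zero _ hx0), v_pow, hxv, h2 p hp] at this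
      norm_num at this
    · have e : 2 * (d * y ^ 2) = n * (g - 1) := by linear_combination hcmp.1 + (by rw [hndef] : n = x ^ 2 - d * y ^ 2)
      have : V p 1 (2 * (d * y ^ 2)) := by rw [e]; exact V_mul' p hn1 (V_sub p (hg p hp) hV1) (by norm_num)
      have hdy := mul_ne_zero hdne (pow_ne_zero 2 hy0)
      rw [V_iff p (mul_ne_zero two_ne_zero hdy), v_mul p two_ne_zero hdy, v_mul p hdne (pow_ne_zero _ hy0), v_pow, hyv, h2 p hp, hd p hp] at this
      norm_num at this
  refine ⟨Units.mk0 _ hδne, fun P hP => ?_, hmain⟩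
  have hVδ : ∀ P', P' ∉ SE E S → V P' 0 (ι c * (1 + (γ : E))) := by
    intro P' hP'
    rw [hδ]
    exact V_mk Q P' (hd _ hP') (hcp _ hP').1 (hcp _ hP').2.1
  have e1 := hVδ P hP
  have e2 := V_σ Q P hP hVδ
  have hσne : Q.σ (ι c * (1 + (γ : E))) ≠ 0 := fun h0 => hδne ((map_eq_zero _).1 h0)
  rw [V_iff P hδne] at e1
  rw [V_iff P hσne] at e2
  have e3 := (v_up_zero P hn0).2 (hnp _ hP)
  rw [hιn, v_mul P hδne hσne] at e3
  rw [Units.val_mk0]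
  omega

lemma NE_le (S : Set (HeightOneSpectrum (𝓞 K))) : (U (SE E S)).map Q.nmU ≤ U S := by
  rintro _ ⟨γ, hγ, rfl⟩; exact nm_mem_U Q hγ

lemma up_mem {c : Kˣ} (hc : c ∈ U S) : Units.map (ι : K →* E) c ∈ U (SE E S) := by
  intro P hP
  exact (v_up_zero P c.ne_zero).2 (hc _ hP)

lemma sqs_le_NE (S : Set (HeightOneSpectrum (𝓞 K))) : sqs Kˣ ⊓ U S ≤ (U (SE E S)).map Q.nmU := by
  rintro _ ⟨⟨c, rfl⟩, hc⟩
  refine ⟨Units.map (ι : K →* E) c, up_mem (mem_U_of_sq hc), ?_⟩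
  apply Units.ext
  rw [Q.nmU_val]
  exact Q.nm_ι _

lemma norm_index (hS : S.Finite) (hCl : Cl S) (h2 : ∀ p, p ∉ S → v p (2 : K) = 0) (hd : ∀ p, p ∉ S → v p d = 0)
    (hr : Units.rank E + 1 = 2 * (Units.rank K + 1)) :
    ((U (SE E S)).map Q.nmU).relIndex (U S) * 2 ^ ((SE E S).ncard + 1) ≤ 2 ^ (2 * S.ncard) := by
  have hA := sqs_relIndex hS
  have hB := sqs_relIndex (SE_finite (E := E) hS)
  set N := (U (SE E S)).map Q.nmU with hN
  set ιU : Kˣ →* Eˣ := Units.map (ι : K →* E) with hιU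
  set M := (U S).map ιU ⊔ sqs Eˣ with hM
  have i1 : (sqs Kˣ).relIndex N * N.relIndex (U S) = (sqs Kˣ).relIndex (U S) := by
    rw [← Subgroup.inf_relIndex_right (sqs Kˣ) (U S), ← Subgroup.relIndex_mul_relIndex _ _ _ (sqs_le_NE Q S) (NE_le Q S)]
    congr 1
    rw [← Subgroup.inf_relIndex_right (sqs Kˣ) N, ← Subgroup.inf_relIndex_right (sqs Kˣ ⊓ U S) N, inf_assoc,
      inf_eq_right.2 (NE_le Q S)]
  have i2 : (sqs Kˣ).relIndex N = ((sqs Kˣ).comap Q.nmU).relIndex (U (SE E S)) := by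
    rw [Subgroup.relIndex_comap]
  have hle : (sqs Kˣ).comap Q.nmU ⊓ U (SE E S) ≤ M := by
    rintro γ ⟨⟨c, hc⟩, hγ⟩
    simp only [powMonoidHom_apply] at hc
    have hcU : c ∈ U S := mem_U_of_sq (by rw [hc]; exact nm_mem_U Q hγ)
    obtain ⟨δ, hδ, h⟩ := hilb90 Q hCl h2 hd (γ := γ * (ιU c)⁻¹) (mul_mem hγ (inv_mem (up_mem hcU))) (by
      have : Q.nmU (γ * (ιU c)⁻¹) = 1 := by
        rw [map_mul, map_inv, ← hc]
        have : Q.nmU (ιU c) = c ^ 2 := Units.ext (Q.nm_ι _)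
        rw [this, mul_inv_cancel]
      have := congrArg Units.val this
      rwa [Q.nmU_val] at this)
    have e : γ = ιU (c * (Q.nmU δ)⁻¹) * δ ^ 2 := by
      rw [map_mul, map_inv]
      apply Units.ext
      have hn : ((ιU (Q.nmU δ) : Eˣ) : E) = δ * Q.σ δ := Q.ι_nm _
      have hσ : Q.σ (δ : E) ≠ 0 := by simp
      have hδ0 := δ.ne_zero
      have hc0 : ((ιU c : Eˣ) : E) ≠ 0 := Units.ne_zero _
      simp only [Units.val_mul, Units.val_inv_eq_inv_val, Units.val_pow_eq_pow_val] at h ⊢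
      rw [hn]
      field_simp at h ⊢
      linear_combination h
    rw [e]
    exact Subgroup.mul_mem_sup ⟨_, mul_mem hcU (inv_mem (nm_mem_U Q hδ)), rfl⟩ ⟨δ, rfl⟩
  have hBne : (sqs Eˣ).relIndex (U (SE E S)) ≠ 0 := by rw [hB]; positivity
  have hAne : (sqs Kˣ).relIndex (U S) ≠ 0 := by rw [hA]; positivity
  have ane : (sqs Kˣ).relIndex N ≠ 0 := fun h => hAne (by rw [← i1, h, zero_mul])
  have i3 : M.relIndex (U (SE E S)) ≤ (sqs Kˣ).relIndex N := by
    rw [i2] at ane ⊢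
    rw [← Subgroup.inf_relIndex_right] at ane
    rw [← Subgroup.inf_relIndex_right ((sqs Kˣ).comap Q.nmU)]
    exact Subgroup.relIndex_le_of_le_left hle ane
  have i4 : (sqs Eˣ).relIndex (M ⊓ U (SE E S)) * M.relIndex (U (SE E S)) = (sqs Eˣ).relIndex (U (SE E S)) := by
    rw [← Subgroup.inf_relIndex_right M (U (SE E S)), ← Subgroup.inf_relIndex_right (sqs Eˣ) (U (SE E S)),
      ← Subgroup.inf_relIndex_right (sqs Eˣ) (M ⊓ U (SE E S)), ← inf_assoc, inf_eq_left.2 (le_sup_right : sqs Eˣ ≤ M)]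
    exact Subgroup.relIndex_mul_relIndex _ _ _ (inf_le_inf_right _ le_sup_right) inf_le_right
  set C := (sqs Eˣ).comap ιU with hC
  have hsC : sqs Kˣ ≤ C := by
    rintro _ ⟨c, rfl⟩
    exact ⟨ιU c, by simp⟩
  have i6 : (sqs Kˣ).relIndex (C ⊓ U S) * C.relIndex (U S) = (sqs Kˣ).relIndex (U S) := by
    rw [← Subgroup.inf_relIndex_right C (U S), ← Subgroup.inf_relIndex_right (sqs Kˣ) (U S),
      ← Subgroup.inf_relIndex_right (sqs Kˣ) (C ⊓ U S), ← inf_assoc, inf_eq_left.2 hsC]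
    exact Subgroup.relIndex_mul_relIndex _ _ _ (inf_le_inf_right _ hsC) inf_le_right
  have tne : C.relIndex (U S) ≠ 0 := fun h => hAne (by rw [← i6, h, mul_zero])
  have i5 : (sqs Eˣ).relIndex (M ⊓ U (SE E S)) ≤ C.relIndex (U S) := by
    have : (sqs Eˣ).relIndex M = C.relIndex (U S) := by
      rw [hM, Subgroup.relIndex_sup_right, hC, Subgroup.relIndex_comap]
    rw [← this] at tne ⊢
    exact Subgroup.relIndex_le_of_le_right inf_le_left tne
  have i7 : 2 ≤ (sqs Kˣ).relIndex (C ⊓ U S) := by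
    have h0 : (sqs Kˣ).relIndex (C ⊓ U S) ≠ 0 := fun h => hAne (by rw [← i6, h, zero_mul])
    have h1 : (sqs Kˣ).relIndex (C ⊓ U S) ≠ 1 := by
      intro h
      rw [Subgroup.relIndex_eq_one] at h
      obtain ⟨c, hc⟩ := h (x := Units.mk0 d Q.bne) ⟨⟨Units.mk0 Q.s Q.sne, Units.ext Q.hs⟩, hd⟩
      exact Q.nsq c (congrArg Units.val hc)
    omega
  rw [hA] at i1 i6
  rw [hB] at i4
  set n := N.relIndex (U S)
  set a := (sqs Kˣ).relIndex N
  set m := M.relIndex (U (SE E S))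
  set q := (sqs Eˣ).relIndex (M ⊓ U (SE E S))
  set t := C.relIndex (U S)
  have j1 : 2 * t ≤ 2 ^ (Units.rank K + 1 + S.ncard) := by rw [← i6]; exact Nat.mul_le_mul_right _ i7
  have j2 : n * (2 * (q * m)) ≤ (2 ^ (Units.rank K + 1 + S.ncard)) * (2 ^ (Units.rank K + 1 + S.ncard)) := by
    calc n * (2 * (q * m)) = (2 * q) * (m * n) := by ring
      _ ≤ (2 * t) * (a * n) := Nat.mul_le_mul (Nat.mul_le_mul_left _ i5) (Nat.mul_le_mul_right _ i3)
      _ ≤ _ := by rw [i1]; exact Nat.mul_le_mul_right _ j1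
  rw [i4, hr] at j2
  have k1 : n * (2 * 2 ^ (2 * (Units.rank K + 1) + (SE E S).ncard)) = 2 ^ (2 * (Units.rank K + 1)) * (n * 2 ^ ((SE E S).ncard + 1)) := by
    ring
  have k2 : (2 ^ (Units.rank K + 1 + S.ncard)) * (2 ^ (Units.rank K + 1 + S.ncard)) = 2 ^ (2 * (Units.rank K + 1)) * 2 ^ (2 * S.ncard) := by
    ring
  rw [k1, k2] at j2
  exact Nat.le_of_mul_le_mul_left j2 (by positivity)

lemma card_SE (Q : QExt K E d) (hS : S.Finite) : S.ncard + {p ∈ S | SqAt p d}.ncard ≤ (SE E S).ncard := by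
  classical
  choose P hP using fun p : HeightOneSpectrum (𝓞 K) => exists_over (E := E) p
  have : ∀ p, ∃ P' : HeightOneSpectrum (𝓞 E), dn P' = p ∧ (SqAt p d → P' ≠ P p) := by
    intro p
    by_cases h : SqAt p d
    · obtain ⟨P1, P2, h1, h2, h12⟩ := split Q p h
      by_cases h' : P1 = P p
      · exact ⟨P2, h2, fun _ h3 => h12 (h'.trans h3.symm)⟩
      · exact ⟨P1, h1, fun _ => h'⟩
    · exact ⟨P p, hP p, fun h' => absurd h' h⟩
  choose P' hP' hne using this
  have hinj : Function.Injective P := fun p q h => by rw [← hP p, ← hP q, h]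
  have hinj' : Function.Injective P' := fun p q h => by rw [← hP' p, ← hP' q, h]
  rw [← Set.ncard_image_of_injective S hinj, ← Set.ncard_image_of_injective {p ∈ S | SqAt p d} hinj', ← Set.ncard_union_eq ?_ (hS.image _) ((hS.subset (Set.sep_subset _ _)).image _)]
  · apply Set.ncard_le_ncard _ (SE_finite hS)
    rintro _ (⟨p, hp, rfl⟩ | ⟨p, hp, rfl⟩)
    · change dn (P p) ∈ S; rwa [hP]
    · change dn (P' p) ∈ S; rw [hP']; exact hp.1
  · rw [Set.disjoint_left]
    rintro _ ⟨p, hp, rfl⟩ ⟨q, hq, h⟩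
    have : q = p := by rw [← hP' q, h, hP]
    subst this
    exact hne q hq.2 h

lemma norm_index' (hS : S.Finite) (hCl : Cl S) (h2 : ∀ p, p ∉ S → v p (2 : K) = 0) (hd : ∀ p, p ∉ S → v p d = 0)
    (hr : Units.rank E + 1 = 2 * (Units.rank K + 1)) :
    ((U (SE E S)).map Q.nmU).relIndex (U S) * 2 ≤ 2 ^ {p ∈ S | ¬ SqAt p d}.ncard := by
  have h1 := norm_index Q hS hCl h2 hd hr
  have h3 := card_SE Q hS
  have h4 : {p ∈ S | SqAt p d}.ncard + {p ∈ S | ¬ SqAt p d}.ncard = S.ncard := by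
    rw [← Set.ncard_union_eq ?_ (hS.subset (Set.sep_subset _ _)) (hS.subset (Set.sep_subset _ _))]
    · congr 1; ext p; simp only [Set.mem_union, Set.mem_ofPred_eq]; tauto
    · rw [Set.disjoint_left]; rintro p ⟨_, h⟩ ⟨_, h'⟩; exact h' h
  have h5 : ((U (SE E S)).map Q.nmU).relIndex (U S) * 2 ^ (S.ncard + {p ∈ S | SqAt p d}.ncard + 1) ≤ 2 ^ (2 * S.ncard) :=
    le_trans (Nat.mul_le_mul_left _ (Nat.pow_le_pow_right (by norm_num) (by omega))) h1
  have h6 : 2 ^ (2 * S.ncard) = 2 ^ (S.ncard + {p ∈ S | SqAt p d}.ncard) * 2 ^ {p ∈ S | ¬ SqAt p d}.ncard := by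
    rw [← pow_add]; congr 1; omega
  have h7 : ((U (SE E S)).map Q.nmU).relIndex (U S) * 2 ^ (S.ncard + {p ∈ S | SqAt p d}.ncard + 1) =
    2 ^ (S.ncard + {p ∈ S | SqAt p d}.ncard) * (((U (SE E S)).map Q.nmU).relIndex (U S) * 2) := by ring
  rw [h6, h7] at h5
  exact Nat.le_of_mul_le_mul_left h5 (by positivity)
end F1
end Sieg

end

section
open NumberField IsDedekindDomain
set_option linter.unusedSectionVars false
set_option maxSynthPendingDepth 3
namespace Sieg

section zeta
open scoped ENNReal Topology
open Filter UniqueFactorizationMonoid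
variable {K : Type*} [Field K] [NumberField K]

/-- weight of an ideal -/
noncomputable def wt (s : ℝ) (I : Ideal (𝓞 K)) : ℝ≥0∞ := ENNReal.ofReal ((Ideal.absNorm I : ℝ) ^ (-s))

lemma wt_mul (s : ℝ) (I J : Ideal (𝓞 K)) : wt s (I * J) = wt s I * wt s J := by
  rw [wt, wt, wt, map_mul, Nat.cast_mul, Real.mul_rpow (by positivity) (by positivity),
    ENNReal.ofReal_mul (by positivity)]

lemma wt_bot {s : ℝ} (hs : 1 < s) : wt s (⊥ : Ideal (𝓞 K)) = 0 := by
  rw [wt, Ideal.absNorm_bot, Nat.cast_zero, Real.zero_rpow (by linarith), ENNReal.ofReal_zero]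

lemma wt_prime {s : ℝ} (hs : 1 < s) (p : HeightOneSpectrum (𝓞 K)) : wt s p.asIdeal ≤ 2⁻¹ := by
  have h2 : 2 ≤ Ideal.absNorm p.asIdeal := by
    have h0 : Ideal.absNorm p.asIdeal ≠ 0 := by
      rw [Ne, Ideal.absNorm_eq_zero_iff]; exact p.ne_bot
    have h1 : Ideal.absNorm p.asIdeal ≠ 1 := by
      rw [Ne, Ideal.absNorm_eq_one_iff]; exact p.isPrime.ne_top
    omega
  have h2' : (2 : ℝ) ≤ Ideal.absNorm p.asIdeal := by exact_mod_cast h2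
  rw [wt]
  have : (2⁻¹ : ℝ≥0∞) = ENNReal.ofReal (2⁻¹) := by
    rw [ENNReal.ofReal_inv_of_pos (by norm_num)]; norm_num
  rw [this]
  apply ENNReal.ofReal_le_ofReal
  rw [Real.rpow_neg (by positivity)]
  apply inv_anti₀ (by norm_num)
  calc (2 : ℝ) ≤ Ideal.absNorm p.asIdeal := h2'
    _ = (Ideal.absNorm p.asIdeal : ℝ) ^ (1 : ℝ) := (Real.rpow_one _).symm
    _ ≤ _ := Real.rpow_le_rpow_of_exponent_le (by linarith) hs.le

lemma sum_wt {s : ℝ} (hs : 1 < s) (h0 : dedekindZeta K s ≠ 0) :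
    ∑' I : Ideal (𝓞 K), wt s I = ENNReal.ofReal ‖dedekindZeta K s‖ := by
  set a : ℕ → ℝ := fun n => (Nat.card {I : Ideal (𝓞 K) // Ideal.absNorm I = n} : ℝ) * (n : ℝ) ^ (-s) with ha
  have ha0 : ∀ n, 0 ≤ a n := fun n => by positivity
  have hz : dedekindZeta K s = ((∑' n, a n : ℝ) : ℂ) := by
    rw [dedekindZeta, LSeries, Complex.ofReal_tsum]
    congr 1
    funext n
    rw [LSeries.term_def, ha]
    split_ifs with h
    · subst h
      simp only [Nat.cast_zero]
      rw [Real.zero_rpow (by linarith), mul_zero]; simp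
    · rw [Complex.ofReal_mul, Complex.ofReal_natCast, div_eq_mul_inv, Complex.ofReal_cpow (by positivity)]
      simp [Complex.cpow_neg]
  have hsum : Summable a := by
    by_contra h
    rw [hz, tsum_eq_zero_of_not_summable h] at h0
    simp at h0
  have hnn : 0 ≤ ∑' n, a n := tsum_nonneg ha0
  rw [hz, Complex.norm_real, Real.norm_of_nonneg hnn, ENNReal.ofReal_tsum_of_nonneg ha0 hsum,
    ← ENNReal.tsum_fiberwise (fun I : Ideal (𝓞 K) => wt s I) Ideal.absNorm]
  congr 1
  funext n
  by_cases hn : n = 0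
  · subst hn
    have : a 0 = 0 := by rw [ha]; simp only [Nat.cast_zero]; rw [Real.zero_rpow (by linarith), mul_zero]
    rw [this, ENNReal.ofReal_zero, ENNReal.tsum_eq_zero]
    rintro ⟨I, hI⟩
    have : I = ⊥ := Ideal.absNorm_eq_zero_iff.1 hI
    change wt s I = 0
    rw [this]; exact wt_bot hs
  have e : ∀ b : (Ideal.absNorm ⁻¹' {n} : Set (Ideal (𝓞 K))), wt s (b : Ideal (𝓞 K)) = ENNReal.ofReal ((n : ℝ) ^ (-s)) := by
    rintro ⟨I, hI⟩
    have : Ideal.absNorm I = n := hI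
    simp only [wt, this]
  have : Finite (Ideal.absNorm ⁻¹' {n} : Set (Ideal (𝓞 K))) := Ideal.finite_setOfPred_absNorm_eq n
  have := Fintype.ofFinite (Ideal.absNorm ⁻¹' {n} : Set (Ideal (𝓞 K)))
  rw [tsum_congr e, tsum_fintype, Finset.sum_const, Finset.card_univ, ← Nat.card_eq_fintype_card, ha]
  simp only
  rw [ENNReal.ofReal_mul (by positivity), ENNReal.ofReal_natCast, nsmul_eq_mul]
  rfl

/-- ideals coprime to S -/
def cop (S : Set (HeightOneSpectrum (𝓞 K))) : Set (Ideal (𝓞 K)) := {I | I ≠ ⊥ ∧ ∀ p ∈ S, ¬ p.asIdeal ∣ I}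

lemma cop_insert {S : Set (HeightOneSpectrum (𝓞 K))} {p : HeightOneSpectrum (𝓞 K)} {s : ℝ} (hs : 1 < s)
    (hfin : ∑' I : cop S, wt s (I : Ideal (𝓞 K)) ≠ ⊤) :
    ∑' I : cop S, wt s (I : Ideal (𝓞 K)) ≤ 2 * ∑' I : cop (insert p S), wt s (I : Ideal (𝓞 K)) := by
  classical
  set A : Set (Ideal (𝓞 K)) := {I | I ∈ cop S ∧ p.asIdeal ∣ I} with hA
  have hsub : cop S ⊆ cop (insert p S) ∪ A := by
    intro I hI
    by_cases h : p.asIdeal ∣ I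
    · exact Or.inr ⟨hI, h⟩
    · refine Or.inl ⟨hI.1, ?_⟩
      rintro q (rfl | hq)
      · exact h
      · exact hI.2 q hq
  have h1 : ∑' I : cop S, wt s (I : Ideal (𝓞 K)) ≤
      ∑' I : cop (insert p S), wt s (I : Ideal (𝓞 K)) + ∑' I : A, wt s (I : Ideal (𝓞 K)) :=
    (ENNReal.tsum_mono_subtype _ hsub).trans (ENNReal.tsum_union_le _ _ _)
  have h2 : ∑' I : A, wt s (I : Ideal (𝓞 K)) ≤ 2⁻¹ * ∑' I : cop S, wt s (I : Ideal (𝓞 K)) := by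
    have hJ : ∀ I : A, ∃ J : cop S, (I : Ideal (𝓞 K)) = p.asIdeal * J := by
      rintro ⟨I, ⟨hI0, hIS⟩, J, rfl⟩
      refine ⟨⟨J, fun h => hI0 (by rw [h, Ideal.mul_bot]), fun q hq hd => hIS q hq (hd.mul_left _)⟩, rfl⟩
    choose j hj using hJ
    have hinj : Function.Injective j := fun I I' h => Subtype.ext (by rw [hj, hj, h])
    calc ∑' I : A, wt s (I : Ideal (𝓞 K)) = ∑' I : A, wt s p.asIdeal * wt s (j I : Ideal (𝓞 K)) := by
          apply tsum_congr; intro I; rw [hj I, wt_mul]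
      _ = wt s p.asIdeal * ∑' I : A, wt s (j I : Ideal (𝓞 K)) := ENNReal.tsum_mul_left
      _ ≤ 2⁻¹ * ∑' I : cop S, wt s (I : Ideal (𝓞 K)) := by
          gcongr
          · exact wt_prime hs p
          · exact ENNReal.tsum_comp_le_tsum_of_injective hinj (fun J : cop S => wt s (J : Ideal (𝓞 K)))
  set x := ∑' I : cop S, wt s (I : Ideal (𝓞 K))
  set y := ∑' I : cop (insert p S), wt s (I : Ideal (𝓞 K))
  have h3 : x ≤ y + 2⁻¹ * x := h1.trans (by gcongr)
  have h4 : 2⁻¹ * x + 2⁻¹ * x = x := by rw [← add_mul, ENNReal.inv_two_add_inv_two, one_mul]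
  have hfin' : 2⁻¹ * x ≠ ⊤ := ENNReal.mul_ne_top (by simp) hfin
  have h5 : 2⁻¹ * x ≤ y := by
    rw [← ENNReal.add_le_add_iff_right hfin', h4]; exact h3
  calc x = 2 * (2⁻¹ * x) := by rw [← mul_assoc, ENNReal.mul_inv_cancel (by simp) (by simp), one_mul]
    _ ≤ _ := by gcongr

lemma cop_le {S : Set (HeightOneSpectrum (𝓞 K))} (hS : S.Finite) {s : ℝ} (hs : 1 < s)
    (hfin : ∑' I : Ideal (𝓞 K), wt s I ≠ ⊤) :
    ∑' I : Ideal (𝓞 K), wt s I ≤ 2 ^ S.ncard * ∑' I : cop S, wt s (I : Ideal (𝓞 K)) := by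
  induction S, hS using Set.Finite.induction_on with
  | empty =>
    simp only [Set.ncard_empty, pow_zero, one_mul]
    have : (Set.univ : Set (Ideal (𝓞 K))) ⊆ cop ∅ ∪ {⊥} := by
      intro I _
      by_cases h : I = ⊥
      · exact Or.inr h
      · exact Or.inl ⟨h, by simp⟩
    rw [← tsum_univ]
    refine (ENNReal.tsum_mono_subtype _ this).trans ((ENNReal.tsum_union_le _ _ _).trans ?_)
    rw [tsum_singleton ⊥ (fun I => wt s I), wt_bot hs, add_zero]
  | insert hp hT ih =>
    rw [Set.ncard_insert_of_notMem hp hT, pow_succ, mul_assoc]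
    refine ih.trans ?_
    gcongr
    apply cop_insert hs
    refine ne_top_of_le_ne_top hfin ?_
    exact ENNReal.tsum_comp_le_tsum_of_injective Subtype.val_injective (fun I => wt s I)

variable {E : Type*} [Field E] [NumberField E] [Algebra K E]

lemma split_norm {b : K} (Q : QExt K E b) (p : HeightOneSpectrum (𝓞 K)) {P P' : HeightOneSpectrum (𝓞 E)} (h : dn P = p)
    (h' : dn P' = p) (hne : P ≠ P') : Ideal.absNorm P.asIdeal = Ideal.absNorm p.asIdeal := by
  classical
  have : p.asIdeal.IsMaximal := p.isMaximal
  have hl : P.asIdeal.LiesOver p.asIdeal := ⟨by rw [← h]; rfl⟩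
  have hl' : P'.asIdeal.LiesOver p.asIdeal := ⟨by rw [← h']; rfl⟩
  have hsum := Ideal.sum_ramification_inertia (𝓞 E) K E (p := p.asIdeal) p.ne_bot
  rw [Q.fr] at hsum
  have hP : P.asIdeal ∈ IsDedekindDomain.primesOverFinset p.asIdeal (𝓞 E) :=
    (IsDedekindDomain.mem_primesOverFinset_iff p.ne_bot _).mpr ⟨P.isPrime, hl⟩
  have hP' : P'.asIdeal ∈ IsDedekindDomain.primesOverFinset p.asIdeal (𝓞 E) :=
    (IsDedekindDomain.mem_primesOverFinset_iff p.ne_bot _).mpr ⟨P'.isPrime, hl'⟩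
  have hsub : ({P.asIdeal, P'.asIdeal} : Finset (Ideal (𝓞 E))) ⊆ IsDedekindDomain.primesOverFinset p.asIdeal (𝓞 E) := by
    intro X hX
    rw [Finset.mem_insert, Finset.mem_singleton] at hX
    rcases hX with rfl | rfl <;> assumption
  have hne' : P.asIdeal ≠ P'.asIdeal := fun h => hne (HeightOneSpectrum.ext h)
  have hle := Finset.sum_le_sum_of_subset (f := fun P => Ideal.ramificationIdx' p.asIdeal P * Ideal.inertiaDeg' p.asIdeal P) hsub
  rw [hsum, Finset.sum_pair hne'] at hle
  have := P.isPrime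
  have := P'.isPrime
  have e1 : 0 < Ideal.ramificationIdx' p.asIdeal P.asIdeal :=
    Nat.pos_iff_ne_zero.mpr <| Ideal.IsDedekindDomain.ramificationIdx'_ne_zero_of_liesOver _ p.ne_bot
  have e2 : 0 < Ideal.ramificationIdx' p.asIdeal P'.asIdeal :=
    Nat.pos_iff_ne_zero.mpr <| Ideal.IsDedekindDomain.ramificationIdx'_ne_zero_of_liesOver _ p.ne_bot
  have f1 : 0 < Ideal.inertiaDeg' p.asIdeal P.asIdeal := Nat.pos_iff_ne_zero.mpr <| Ideal.inertiaDeg'_ne_zero _ _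
  have f2 : 0 < Ideal.inertiaDeg' p.asIdeal P'.asIdeal := Nat.pos_iff_ne_zero.mpr <| Ideal.inertiaDeg'_ne_zero _ _
  have : Ideal.inertiaDeg' p.asIdeal P.asIdeal = 1 := by nlinarith
  rw [Ideal.absNorm_eq_pow_inertiaDeg'_of_liesOver P.asIdeal p.asIdeal p.isPrime p.ne_bot, this, pow_one]

lemma pairs {b : K} (Q : QExt K E b) {S : Set (HeightOneSpectrum (𝓞 K))} (hS : ∀ p, p ∉ S → SqAt p b) {s : ℝ} :
    (∑' I : cop S, wt s (I : Ideal (𝓞 K))) * (∑' I : cop S, wt s (I : Ideal (𝓞 K))) ≤ ∑' I : Ideal (𝓞 E), wt s I := by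
  classical
  have hex : ∀ X : Ideal (𝓞 K), ∃ P P' : Ideal (𝓞 E), ∀ p : HeightOneSpectrum (𝓞 K), p.asIdeal = X → p ∉ S →
      Prime P ∧ Prime P' ∧ P.under (𝓞 K) = X ∧ P'.under (𝓞 K) = X ∧ P ≠ P' ∧ Ideal.absNorm P = Ideal.absNorm X ∧
        Ideal.absNorm P' = Ideal.absNorm X := by
    intro X
    by_cases h : ∃ p : HeightOneSpectrum (𝓞 K), p.asIdeal = X ∧ p ∉ S
    · obtain ⟨p, rfl, hp⟩ := h
      obtain ⟨P, P', h1, h2, h3⟩ := split Q p (hS p hp)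
      refine ⟨P.asIdeal, P'.asIdeal, fun q hq _ => ⟨P.prime, P'.prime, congrArg HeightOneSpectrum.asIdeal h1,
        congrArg HeightOneSpectrum.asIdeal h2, fun h => h3 (HeightOneSpectrum.ext h), split_norm Q p h1 h2 h3, split_norm Q p h2 h1 h3.symm⟩⟩
    · exact ⟨⊥, ⊥, fun p h1 h2 => absurd ⟨p, h1, h2⟩ h⟩
  choose f f' hf using hex
  have hgood : ∀ I : cop S, ∀ X ∈ normalizedFactors (I : Ideal (𝓞 K)), Prime (f X) ∧ Prime (f' X) ∧ (f X).under (𝓞 K) = X ∧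
      (f' X).under (𝓞 K) = X ∧ f X ≠ f' X ∧ Ideal.absNorm (f X) = Ideal.absNorm X ∧ Ideal.absNorm (f' X) = Ideal.absNorm X := by
    intro I X hX
    have hpr := prime_of_normalized_factor X hX
    refine hf X ⟨X, Ideal.isPrime_of_prime hpr, hpr.ne_zero⟩ rfl (fun hp => I.2.2 _ hp (dvd_of_mem_normalizedFactors hX))
  let Φ : cop S × cop S → Ideal (𝓞 E) := fun x =>
    ((normalizedFactors (x.1 : Ideal (𝓞 K))).map f + (normalizedFactors (x.2 : Ideal (𝓞 K))).map f').prod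
  have hnf : ∀ x, normalizedFactors (Φ x) =
      (normalizedFactors (x.1 : Ideal (𝓞 K))).map f + (normalizedFactors (x.2 : Ideal (𝓞 K))).map f' := by
    intro x
    apply normalizedFactors_prod_of_prime
    intro P hP
    rw [Multiset.mem_add, Multiset.mem_map, Multiset.mem_map] at hP
    rcases hP with ⟨X, hX, rfl⟩ | ⟨X, hX, rfl⟩
    · exact (hgood _ X hX).1
    · exact (hgood _ X hX).2.1
  have hrec : ∀ x : cop S × cop S, ((normalizedFactors (Φ x)).filter (fun P => P = f (P.under (𝓞 K)))).map (fun P => P.under (𝓞 K)) = normalizedFactors (x.1 : Ideal (𝓞 K)) ∧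
      ((normalizedFactors (Φ x)).filter (fun P => ¬ P = f (P.under (𝓞 K)))).map (fun P => P.under (𝓞 K)) = normalizedFactors (x.2 : Ideal (𝓞 K)) := by
    intro x
    rw [hnf]
    have a1 : ((normalizedFactors (x.1 : Ideal (𝓞 K))).map f).filter (fun P => P = f (P.under (𝓞 K))) = (normalizedFactors (x.1 : Ideal (𝓞 K))).map f := by
      rw [Multiset.filter_eq_self]
      intro P hP
      obtain ⟨X, hX, rfl⟩ := Multiset.mem_map.1 hP
      rw [(hgood _ X hX).2.2.1]
    have a2 : ((normalizedFactors (x.1 : Ideal (𝓞 K))).map f).filter (fun P => ¬ P = f (P.under (𝓞 K))) = 0 := by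
      rw [Multiset.filter_eq_nil]
      intro P hP
      obtain ⟨X, hX, rfl⟩ := Multiset.mem_map.1 hP
      rw [(hgood _ X hX).2.2.1]; simp
    have a3 : ((normalizedFactors (x.2 : Ideal (𝓞 K))).map f').filter (fun P => ¬ P = f (P.under (𝓞 K))) = (normalizedFactors (x.2 : Ideal (𝓞 K))).map f' := by
      rw [Multiset.filter_eq_self]
      intro P hP
      obtain ⟨X, hX, rfl⟩ := Multiset.mem_map.1 hP
      rw [(hgood _ X hX).2.2.2.1]
      exact fun h => (hgood _ X hX).2.2.2.2.1 h.symm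
    have a4 : ((normalizedFactors (x.2 : Ideal (𝓞 K))).map f').filter (fun P => P = f (P.under (𝓞 K))) = 0 := by
      rw [Multiset.filter_eq_nil]
      intro P hP
      obtain ⟨X, hX, rfl⟩ := Multiset.mem_map.1 hP
      rw [(hgood _ X hX).2.2.2.1]
      exact fun h => (hgood _ X hX).2.2.2.2.1 h.symm
    rw [Multiset.filter_add, Multiset.filter_add, a1, a2, a3, a4, zero_add, add_zero, Multiset.map_map, Multiset.map_map]
    constructor
    · conv_rhs => rw [← Multiset.map_id (normalizedFactors (x.1 : Ideal (𝓞 K)))]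
      exact Multiset.map_congr rfl fun X hX => (hgood _ X hX).2.2.1
    · conv_rhs => rw [← Multiset.map_id (normalizedFactors (x.2 : Ideal (𝓞 K)))]
      exact Multiset.map_congr rfl fun X hX => (hgood _ X hX).2.2.2.1
  have hinj : Function.Injective Φ := by
    intro x y hxy
    have h1 := hrec x
    rw [hxy] at h1
    have h2 := hrec y
    have key : ∀ I J : cop S, normalizedFactors (I : Ideal (𝓞 K)) = normalizedFactors (J : Ideal (𝓞 K)) → I = J := by
      intro I J h
      apply Subtype.ext
      rw [← associated_iff_eq]
      exact (associated_iff_normalizedFactors_eq_normalizedFactors I.2.1 J.2.1).2 h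
    exact Prod.ext (key _ _ (h1.1.symm.trans h2.1)) (key _ _ (h1.2.symm.trans h2.2))
  have hwt : ∀ x, wt s (Φ x) = wt s (x.1 : Ideal (𝓞 K)) * wt s (x.2 : Ideal (𝓞 K)) := by
    intro x
    have hN : ∀ I : cop S, Ideal.absNorm (I : Ideal (𝓞 K)) = ((normalizedFactors (I : Ideal (𝓞 K))).map Ideal.absNorm).prod := by
      intro I
      conv_lhs => rw [← associated_iff_eq.1 (prod_normalizedFactors (a := (I : Ideal (𝓞 K))) I.2.1)]
      rw [map_multiset_prod]
    have : Ideal.absNorm (Φ x) = Ideal.absNorm ((x.1 : Ideal (𝓞 K)) * (x.2 : Ideal (𝓞 K))) := by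
      rw [map_mul, hN, hN, map_multiset_prod, Multiset.map_add, Multiset.prod_add, Multiset.map_map, Multiset.map_map]
      congr 2
      · exact Multiset.map_congr rfl fun X hX => (hgood _ X hX).2.2.2.2.2.1
      · exact Multiset.map_congr rfl fun X hX => (hgood _ X hX).2.2.2.2.2.2
    rw [← wt_mul, wt, wt, this]
  rw [← ENNReal.tsum_mul_right]
  simp_rw [← ENNReal.tsum_mul_left]
  rw [← ENNReal.tsum_prod (f := fun I J : cop S => wt s (I : Ideal (𝓞 K)) * wt s (J : Ideal (𝓞 K)))]
  simp_rw [← hwt]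
  exact ENNReal.tsum_comp_le_tsum_of_injective hinj (fun I => wt s I)

lemma exists_nonSq_aux {b : K} (Q : QExt K E b) {S : Set (HeightOneSpectrum (𝓞 K))} (hS : S.Finite) :
    ∃ p, p ∉ S ∧ ¬ SqAt p b := by
  by_contra hcon
  push Not at hcon
  have tK := (tendsto_sub_one_mul_dedekindZeta_nhdsGT K).norm
  have tE := (tendsto_sub_one_mul_dedekindZeta_nhdsGT E).norm
  have pK := dedekindZeta_residue_pos K
  have pE := dedekindZeta_residue_pos E
  rw [Complex.norm_real, Real.norm_of_nonneg pK.le] at tK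
  rw [Complex.norm_real, Real.norm_of_nonneg pE.le] at tE
  set ρ := dedekindZeta_residue K
  set ρ' := dedekindZeta_residue E
  have eK := tK.eventually (lt_mem_nhds (show ρ / 2 < ρ by linarith))
  have eE := tE.eventually (lt_mem_nhds (show ρ' / 2 < ρ' by linarith))
  have eE' := tE.eventually (gt_mem_nhds (show ρ' < 2 * ρ' by linarith))
  set C : ℝ := 2 ^ S.ncard * 2 ^ S.ncard with hC
  have hCpos : 0 < C := by positivity
  have hsmall : ∀ᶠ s : ℝ in 𝓝[>] 1, s < 1 + (ρ / 2) ^ 2 / (C * (2 * ρ')) := by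
    apply mem_nhdsWithin_of_mem_nhds
    exact gt_mem_nhds (by have : 0 < (ρ / 2) ^ 2 / (C * (2 * ρ')) := by positivity
                          linarith)
  obtain ⟨s, hs1, h1, h2, h3, h4⟩ := ((eventually_mem_nhdsWithin (s := Set.Ioi (1 : ℝ))).and (eK.and (eE.and (eE'.and hsmall)))).exists
  have hs1 : 1 < s := hs1
  have hsn : ‖((s : ℂ) - 1)‖ = s - 1 := by
    rw [← Complex.ofReal_one, ← Complex.ofReal_sub, Complex.norm_real, Real.norm_of_nonneg (by linarith)]
  rw [norm_mul, hsn] at h1 h2 h3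
  have z1 : dedekindZeta K s ≠ 0 := by
    intro h; rw [h, norm_zero, mul_zero] at h1; linarith
  have z2 : dedekindZeta E s ≠ 0 := by
    intro h; rw [h, norm_zero, mul_zero] at h2; linarith
  have s1 := sum_wt hs1 z1
  have s2 := sum_wt hs1 z2
  have c1 := cop_le hS hs1 (by rw [s1]; exact ENNReal.ofReal_ne_top)
  have c2 := pairs Q hcon (s := s)
  rw [s1] at c1
  rw [s2] at c2
  set x := ‖dedekindZeta K s‖
  set y := ‖dedekindZeta E s‖
  set t := ∑' I : cop S, wt s (I : Ideal (𝓞 K))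
  have c3 : ENNReal.ofReal x * ENNReal.ofReal x ≤ ENNReal.ofReal C * ENNReal.ofReal y := by
    calc ENNReal.ofReal x * ENNReal.ofReal x ≤ (2 ^ S.ncard * t) * (2 ^ S.ncard * t) := by gcongr
      _ = (2 ^ S.ncard * 2 ^ S.ncard) * (t * t) := by ring
      _ ≤ (2 ^ S.ncard * 2 ^ S.ncard) * ENNReal.ofReal y := by gcongr
      _ = _ := by
        congr 1
        rw [hC, ENNReal.ofReal_mul (by positivity), ENNReal.ofReal_pow (by norm_num)]; norm_num
  have hx0 : 0 ≤ x := norm_nonneg _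
  have hy0 : 0 ≤ y := norm_nonneg _
  rw [← ENNReal.ofReal_mul hx0, ← ENNReal.ofReal_mul hCpos.le, ENNReal.ofReal_le_ofReal_iff (by positivity)] at c3
  have h5 : (s - 1) * (C * (2 * ρ')) < (ρ / 2) ^ 2 := by
    rw [← lt_div_iff₀ (by positivity)]; linarith
  have h6 : (ρ / 2) ^ 2 < ((s - 1) * x) ^ 2 := by
    apply pow_lt_pow_left₀ h1 (by positivity) (by norm_num)
  have h7 : ((s - 1) * x) ^ 2 ≤ (s - 1) * (C * ((s - 1) * y)) := by
    have := mul_le_mul_of_nonneg_left c3 (sq_nonneg (s - 1))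
    nlinarith
  have h8 : (s - 1) * (C * ((s - 1) * y)) ≤ (s - 1) * (C * (2 * ρ')) := by
    have : 0 < s - 1 := by linarith
    gcongr
  linarith
end zeta

universe u
lemma exists_nonSq {K : Type u} [Field K] [NumberField K] {b : K} (hb : ∀ c : K, c ^ 2 ≠ b)
    {S : Set (HeightOneSpectrum (𝓞 K))} (hS : S.Finite) : ∃ p, p ∉ S ∧ ¬ SqAt p b := by
  obtain ⟨E, _, _, _, ⟨Q⟩⟩ := exists_QExt hb
  exact exists_nonSq_aux Q hS
end Sieg

end

section
open NumberField IsDedekindDomain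
set_option linter.unusedSectionVars false
set_option maxSynthPendingDepth 3
namespace Sieg
universe u

section idx
variable {G : Type*} [CommGroup G]

lemma relIndex_le_two {H L : Subgroup G} (h : ∀ x ∈ L, ∀ y ∈ L, x ∉ H → y ∉ H → x * y ∈ H) :
    H.relIndex L ≤ 2 ∧ H.relIndex L ≠ 0 := by
  by_cases hle : L ≤ H
  · rw [Subgroup.relIndex_eq_one.2 hle]; norm_num
  · obtain ⟨a, haL, haH⟩ := SetLike.not_le_iff_exists.1 hle
    have : H.relIndex L = 2 := by
      rw [Subgroup.relIndex_eq_two_iff]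
      refine ⟨a, haL, fun b hb => ?_⟩
      by_cases hbH : b ∈ H
      · exact Or.inr ⟨hbH, fun h' => haH ((Subgroup.mul_mem_cancel_left H hbH).1 h')⟩
      · exact Or.inl ⟨h b hb a haL hbH haH, hbH⟩
    rw [this]; norm_num

lemma two_pow_le_relIndex {N L : Subgroup G} (hfin : N.relIndex L ≠ 0) {α : Type*} [DecidableEq α] (I : Finset α) (c : α → G)
    (hc : ∀ i ∈ I, c i ∈ L) (hc2 : ∀ i ∈ I, c i ^ 2 ∈ N) (h : ∀ X ⊆ I, X.Nonempty → ∏ i ∈ X, c i ∉ N) :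
    2 ^ I.card ≤ N.relIndex L := by
  have : Finite (L ⧸ N.subgroupOf L) := Nat.finite_of_card_ne_zero hfin
  rw [← Finset.card_powerset]
  let f : I.powerset → L ⧸ N.subgroupOf L := fun X =>
    QuotientGroup.mk (⟨∏ i ∈ X.1, c i, Subgroup.prod_mem _ fun i hi => hc i (Finset.mem_powerset.1 X.2 hi)⟩ : L)
  have hf : Function.Injective f := by
    rintro ⟨X, hX⟩ ⟨Y, hY⟩ hXY
    rw [Finset.mem_powerset] at hX hY
    apply Subtype.ext
    by_contra hne
    have h1 := QuotientGroup.eq.1 hXY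
    rw [Subgroup.mem_subgroupOf] at h1
    simp only [Subgroup.coe_mul, Subgroup.coe_inv] at h1
    have hsub : (X \ Y) ∪ (Y \ X) ⊆ I := Finset.union_subset (Finset.sdiff_subset.trans hX) (Finset.sdiff_subset.trans hY)
    refine h ((X \ Y) ∪ (Y \ X)) hsub ?_ ?_
    · by_contra hemp
      rw [Finset.not_nonempty_iff_eq_empty, Finset.union_eq_empty, Finset.sdiff_eq_empty_iff_subset, Finset.sdiff_eq_empty_iff_subset] at hemp
      exact hne (Finset.Subset.antisymm hemp.1 hemp.2)
    · rw [Finset.prod_union (Finset.disjoint_left.2 fun a ha hb => (Finset.mem_sdiff.1 ha).2 (Finset.mem_sdiff.1 hb).1)]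
      have e1 : ∏ i ∈ X, c i = (∏ i ∈ X \ Y, c i) * ∏ i ∈ X ∩ Y, c i := by
        rw [← Finset.prod_union (Finset.disjoint_left.2 fun a ha hb => (Finset.mem_sdiff.1 ha).2 (Finset.mem_inter.1 hb).2),
          Finset.sdiff_union_inter]
      have e2 : ∏ i ∈ Y, c i = (∏ i ∈ Y \ X, c i) * ∏ i ∈ X ∩ Y, c i := by
        rw [Finset.inter_comm, ← Finset.prod_union (Finset.disjoint_left.2 fun a ha hb => (Finset.mem_sdiff.1 ha).2 (Finset.mem_inter.1 hb).2),
          Finset.sdiff_union_inter]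
      rw [e1, e2] at h1
      have e3 : (∏ i ∈ X \ Y, c i) ^ 2 ∈ N := by
        rw [← Finset.prod_pow]
        exact Subgroup.prod_mem _ fun i hi => hc2 i (hX (Finset.mem_sdiff.1 hi).1)
      have := mul_mem h1 e3
      convert this using 1
      rw [mul_inv_rev, pow_two]
      simp only [mul_assoc, mul_left_comm, mul_comm]
      group
  have := Nat.card_le_card_of_injective f hf
  rw [Nat.card_eq_fintype_card, Fintype.card_coe] at this
  exact this
end idx

section
variable {K : Type u} [Field K] [NumberField K]

lemma rank_TC [IsTotallyComplex K] : Module.finrank ℚ K = 2 * (Units.rank K + 1) := by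
  have h1 := IsTotallyComplex.finrank K
  have h2 := InfinitePlace.card_eq_nrRealPlaces_add_nrComplexPlaces K
  rw [IsTotallyComplex.nrRealPlaces_eq_zero K] at h2
  have h3 : 0 < Fintype.card (InfinitePlace K) := Fintype.card_pos
  rw [h1, Units.rank]; omega

lemma rank_QExt [IsTotallyComplex K] {E : Type*} [Field E] [NumberField E] [Algebra K E] {b : K} (Q : QExt K E b) :
    Units.rank E + 1 = 2 * (Units.rank K + 1) := by
  have : IsTotallyComplex E := isTotallyComplex_of_algebra K E
  have h1 := rank_TC (K := E)
  have h2 := rank_TC (K := K)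
  have h3 := Module.finrank_mul_finrank ℚ K E
  rw [Q.fr] at h3
  omega

/-- a prime where `-1` is a square and `u` is not -/
lemma exists_prime {w : K} (h1 : ∀ c : K, c ^ 2 ≠ -1) (hu : ∀ c : K, c ^ 2 ≠ w) (hu' : ∀ c : K, c ^ 2 ≠ -w)
    {S : Set (HeightOneSpectrum (𝓞 K))} (hS : S.Finite) : ∃ p, p ∉ S ∧ SqAt p (-1 : K) ∧ ¬ SqAt p w := by
  have hw0 : w ≠ 0 := fun h => hu 0 (by simp [h])
  obtain ⟨E, _, _, _, ⟨Q⟩⟩ := exists_QExt h1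
  have hs : Q.s ^ 2 = -1 := by rw [Q.hs]; simp
  have hE : ∀ c : E, c ^ 2 ≠ algebraMap K E w := by
    intro c hc
    obtain ⟨x, y, rfl⟩ := Q.span c
    have := Q.s_notin (x ^ 2 - y ^ 2 - w) (2 * x * y) (by
      simp only [map_sub, map_mul, map_pow, map_ofNat]
      linear_combination hc - (algebraMap K E y) ^ 2 * hs)
    have hxy : x = 0 ∨ y = 0 := by
      have := this.2
      simpa using this
    rcases hxy with rfl | rfl
    · exact hu' y (by linear_combination - this.1)
    · exact hu x (by linear_combination this.1)
  obtain ⟨P, hP, hns⟩ := exists_nonSq hE (SE_finite (E := E) ((hS.union (finite_v (two_ne_zero (α := K)))).union (finite_v hw0)))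
  have hP' : dn P ∉ (S ∪ {p : HeightOneSpectrum (𝓞 K) | v p (2 : K) ≠ 0}) ∪ {p | v p w ≠ 0} := hP
  simp only [Set.mem_union, Set.mem_ofPred_eq, not_or, not_not] at hP'
  obtain ⟨⟨hPS, hP2⟩, hPw⟩ := hP'
  have n1 : ¬ SqAt (dn P) w := fun h => hns (SqAt_up P h)
  have n2 : ¬ SqAt (dn P) (-w) := by
    intro h
    apply hns
    have h3 := SqAt_up P h
    have h4 : algebraMap K E w = algebraMap K E (-w) * Q.s ^ 2 := by rw [hs, map_neg]; ring
    rw [h4]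
    exact h3.mul P (SqAt_sq P Q.sne)
  refine ⟨dn P, hPS, ?_, n1⟩
  have h5 := SqAt_mul_odd (dn P) hP2 hw0 hPw (neg_ne_zero.2 hw0) (by rw [v_neg, hPw]) n1 n2
  have h6 : w * -w = -1 * w ^ 2 := by ring
  rw [h6] at h5
  exact (SqAt_mul_sq_iff _ hw0).1 h5

/-- squares up to sign -/
def pm (K : Type*) [Field K] : Subgroup Kˣ where
  carrier := {x | x ∈ sqs Kˣ ∨ -x ∈ sqs Kˣ}
  mul_mem' {a b} ha hb := by
    rcases ha with ha | ha <;> rcases hb with hb | hb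
    · exact Or.inl (mul_mem ha hb)
    · right; have := mul_mem ha hb; rwa [mul_neg] at this
    · right; have := mul_mem ha hb; rwa [neg_mul] at this
    · left; have := mul_mem ha hb; rwa [neg_mul_neg] at this
  one_mem' := Or.inl (one_mem _)
  inv_mem' {a} ha := by
    rcases ha with ha | ha
    · exact Or.inl (inv_mem ha)
    · right; have := inv_mem ha; rwa [inv_neg] at this

variable {S : Set (HeightOneSpectrum (𝓞 K))}

lemma Sq_relIndex (h2 : ∀ p, p ∉ S → v p (2 : K) = 0) {p : HeightOneSpectrum (𝓞 K)} (hp : p ∉ S) :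
    (Sq p).relIndex (U S) ≤ 2 ∧ (Sq p).relIndex (U S) ≠ 0 := by
  apply relIndex_le_two
  intro x hx y hy hx' hy'
  exact SqAt_mul_odd p (h2 p hp) x.ne_zero (hx p hp) y.ne_zero (hy p hp) hx' hy'

lemma inf_relIndex (h2 : ∀ p, p ∉ S → v p (2 : K) = 0) (p : ℕ → HeightOneSpectrum (𝓞 K)) (k : ℕ) (hp : ∀ i < k, p i ∉ S) :
    ((Finset.range k).inf (fun i => Sq (p i))).relIndex (U S) ≤ 2 ^ k ∧ ((Finset.range k).inf (fun i => Sq (p i))).relIndex (U S) ≠ 0 := by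
  induction k with
  | zero => simp
  | succ k ih =>
    obtain ⟨h3, h4⟩ := ih fun i hi => hp i (by omega)
    obtain ⟨h5, h6⟩ := Sq_relIndex h2 (hp k (by omega))
    rw [Finset.range_add_one, Finset.inf_insert]
    refine ⟨Subgroup.relIndex_inf_le.trans ?_, Subgroup.relIndex_inf_ne_zero h6 h4⟩
    rw [pow_succ, mul_comm]
    exact Nat.mul_le_mul h3 h5

lemma pm_relIndex (hS : S.Finite) : 2 ^ (Units.rank K + S.ncard) ≤ (pm K).relIndex (U S) := by
  have h1 := sqs_relIndex hS
  have hle : sqs Kˣ ≤ pm K := fun x hx => Or.inl hx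
  have i6 : (sqs Kˣ).relIndex (pm K ⊓ U S) * (pm K).relIndex (U S) = (sqs Kˣ).relIndex (U S) := by
    rw [← Subgroup.inf_relIndex_right (pm K) (U S), ← Subgroup.inf_relIndex_right (sqs Kˣ) (U S),
      ← Subgroup.inf_relIndex_right (sqs Kˣ) (pm K ⊓ U S), ← inf_assoc, inf_eq_left.2 hle]
    exact Subgroup.relIndex_mul_relIndex _ _ _ (inf_le_inf_right _ hle) inf_le_right
  have h2 := (relIndex_le_two (H := sqs Kˣ) (L := pm K ⊓ U S) (by
    rintro x ⟨hx, -⟩ y ⟨hy, -⟩ hx' hy'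
    have := mul_mem (hx.resolve_left hx') (hy.resolve_left hy')
    rwa [neg_mul_neg] at this)).1
  rw [h1] at i6
  have h3 : 2 ^ (Units.rank K + 1 + S.ncard) = 2 * 2 ^ (Units.rank K + S.ncard) := by ring
  rw [h3] at i6
  have h4 : 2 * 2 ^ (Units.rank K + S.ncard) ≤ 2 * (pm K).relIndex (U S) := by
    rw [← i6]; exact Nat.mul_le_mul_right _ h2
  omega

lemma exists_T (hS : S.Finite) (h2 : ∀ p, p ∉ S → v p (2 : K) = 0) (h1 : ∀ c : K, c ^ 2 ≠ -1) (k : ℕ)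
    (hk : k ≤ Units.rank K + S.ncard) : ∃ (p : ℕ → HeightOneSpectrum (𝓞 K)) (e : ℕ → Kˣ), ∀ i < k, p i ∉ S ∧ e i ∈ U S ∧
      SqAt (p i) (-1 : K) ∧ ¬ SqAt (p i) (e i : K) ∧ ∀ j < i, SqAt (p j) (e i : K) := by
  induction k with
  | zero =>
    by_cases hne : Nonempty (HeightOneSpectrum (𝓞 K))
    · exact ⟨fun _ => hne.some, fun _ => 1, fun i hi => absurd hi (by omega)⟩
    · obtain ⟨p, -⟩ := exists_nonSq h1 hS
      exact absurd ⟨p⟩ hne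
  | succ k ih =>
    obtain ⟨p, e, hpe⟩ := ih (by omega)
    obtain ⟨hW, hW0⟩ := inf_relIndex h2 p k (fun i hi => (hpe i hi).1)
    set W := (Finset.range k).inf (fun i => Sq (p i)) with hWdef
    have hnle : ¬ (W ⊓ U S ≤ pm K) := by
      intro hle
      rw [← Subgroup.inf_relIndex_right] at hW hW0
      have h3 := Subgroup.relIndex_le_of_le_left hle hW0
      have h4 := (pm_relIndex hS).trans (h3.trans hW)
      have h5 := (Nat.pow_le_pow_iff_right (by norm_num : 1 < 2)).1 h4
      omega
    obtain ⟨w, ⟨hwW, hwU⟩, hwpm⟩ := SetLike.not_le_iff_exists.1 hnle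
    have hw1 : ∀ c : K, c ^ 2 ≠ w := by
      intro c hc
      have hc0 : c ≠ 0 := by rintro rfl; exact w.ne_zero (by simpa using hc.symm)
      exact hwpm (Or.inl ⟨Units.mk0 c hc0, Units.ext hc⟩)
    have hw2 : ∀ c : K, c ^ 2 ≠ -w := by
      intro c hc
      have hc0 : c ≠ 0 := by rintro rfl; exact w.ne_zero (by simpa using hc.symm)
      exact hwpm (Or.inr ⟨Units.mk0 c hc0, Units.ext hc⟩)
    obtain ⟨q, hqS, hq1, hqw⟩ := exists_prime h1 hw1 hw2 hS
    refine ⟨Function.update p k q, Function.update e k w, fun i hi => ?_⟩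
    rcases Nat.lt_succ_iff_lt_or_eq.1 hi with hi | rfl
    · obtain ⟨a1, a2, a3, a4, a5⟩ := hpe i hi
      rw [Function.update_of_ne hi.ne, Function.update_of_ne hi.ne]
      refine ⟨a1, a2, a3, a4, fun j hj => ?_⟩
      rw [Function.update_of_ne (by omega)]
      exact a5 j hj
    · rw [Function.update_self, Function.update_self]
      refine ⟨hqS, hwU, hq1, hqw, fun j hj => ?_⟩
      rw [Function.update_of_ne hj.ne]
      have hle : W ≤ Sq (p j) := Finset.inf_le (f := fun i => Sq (p i)) (Finset.mem_range.2 hj)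
      exact hle hwW

/-- local squares at `S` are global squares -/
lemma F2 [IsTotallyComplex K] (hS : S.Finite) (hCl : Cl S) (h2 : ∀ p, p ∉ S → v p (2 : K) = 0) {k : ℕ}
    {p : ℕ → HeightOneSpectrum (𝓞 K)} {e : ℕ → Kˣ} (hpe : ∀ i < k, p i ∉ S ∧ e i ∈ U S ∧
      ¬ SqAt (p i) (e i : K) ∧ ∀ j < i, SqAt (p j) (e i : K)) {b : Kˣ} (hb : b ∈ U (S ∪ p '' {i | i < k}))
    (hbS : ∀ q ∈ S, SqAt q (b : K)) : b ∈ sqs Kˣ := by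
  classical
  by_contra hnsq
  have hnsq' : ∀ c : K, c ^ 2 ≠ b := by
    intro c hc
    have hc0 : c ≠ 0 := by rintro rfl; exact b.ne_zero (by simpa using hc.symm)
    exact hnsq ⟨Units.mk0 c hc0, Units.ext hc⟩
  obtain ⟨E, _, _, _, ⟨Q⟩⟩ := exists_QExt hnsq'
  have hTf : (p '' {i | i < k}).Finite := (Set.finite_lt_nat k).image _
  set S' := S ∪ p '' {i | i < k} with hS'
  have hidx := norm_index' Q (hS.union hTf) (hCl.mono Set.subset_union_left) (fun q hq => h2 q (fun h => hq (Or.inl h))) hb (rank_QExt Q)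
  set N := (U (SE E S')).map Q.nmU with hN
  have hpinj : ∀ i < k, ∀ j < k, p i = p j → i = j := by
    intro i hi j hj h
    rcases lt_trichotomy i j with h' | h' | h'
    · exact absurd (h ▸ (hpe j hj).2.2.2 i h') (hpe j hj).2.2.1
    · exact h'
    · exact absurd (h ▸ (hpe i hi).2.2.2 j h') (hpe i hi).2.2.1
  set I := (Finset.range k).filter (fun i => ¬ SqAt (p i) (b : K)) with hI
  have hIk : ∀ i ∈ I, i < k := fun i hi => Finset.mem_range.1 (Finset.mem_filter.1 hi).1
  have hcard : {q ∈ S' | ¬ SqAt q (b : K)}.ncard ≤ I.card := by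
    rw [← Set.ncard_coe_finset I]
    refine (Set.ncard_le_ncard (t := p '' (I : Set ℕ)) ?_ (I.finite_toSet.image _)).trans (Set.ncard_image_le I.finite_toSet)
    rintro q ⟨hq | ⟨i, hi, rfl⟩, hn⟩
    · exact absurd (hbS q hq) hn
    · exact ⟨i, Finset.mem_coe.2 (Finset.mem_filter.2 ⟨Finset.mem_range.2 hi, hn⟩), rfl⟩
  have hπ : ∀ i, ∃ g : Kˣ, v (p i) (g : K) = (if p i ∈ S then v (p i) (g : K) else 1) ∧ ∀ q, q ∉ S → q ≠ p i → v q (g : K) = 0 := by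
    intro i
    obtain ⟨c, hc, h⟩ := hCl (fun q => if q = p i then 1 else 0) (by
      refine (Set.finite_singleton (p i)).subset fun q hq => ?_
      by_contra h; exact hq (if_neg (fun h' => h h')))
    refine ⟨Units.mk0 c hc, ?_, fun q hq hqi => ?_⟩
    · split_ifs with h'
      · rfl
      · have := h _ h'; simpa using this
    · have := h q hq; rw [if_neg hqi] at this; exact this
  choose π hπ1 hπ2 using hπ
  have hπ1' : ∀ i < k, v (p i) (π i : K) = 1 := fun i hi => by
    have := hπ1 i; rwa [if_neg (hpe i hi).1] at this
  let c : ℕ → Kˣ := fun i => if Even (v (p i) (b : K)) then π i else e i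
  have hcU : ∀ i ∈ I, c i ∈ U S' := by
    intro i hi
    by_cases hev : Even (v (p i) (b : K))
    · simp only [c, if_pos hev]
      intro q hq
      refine hπ2 i q (fun h => hq (Or.inl h)) ?_
      rintro rfl
      exact hq (Or.inr ⟨i, hIk i hi, rfl⟩)
    · simp only [c, if_neg hev]
      exact U_mono Set.subset_union_left (hpe i (hIk i hi)).2.1
  have hcv : ∀ i ∈ I, ∀ j ∈ I, i ≠ j → v (p j) (c i : K) = 0 := by
    intro i hi j hj hij
    have hpj := (hpe j (hIk j hj)).1
    by_cases hev : Even (v (p i) (b : K))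
    · simp only [c, if_pos hev]
      exact hπ2 i _ hpj (fun h => hij (hpinj _ (hIk j hj) _ (hIk i hi) h).symm)
    · simp only [c, if_neg hev]
      exact (hpe i (hIk i hi)).2.1 _ hpj
  have hfin : N.relIndex (U S') ≠ 0 := by
    intro h0
    have h3 := sqs_relIndex (hS.union hTf)
    rw [← hS'] at h3
    have h4 := Subgroup.relIndex_eq_zero_of_le_left (sqs_le_NE Q S') h0
    rw [Subgroup.inf_relIndex_right, h3] at h4
    exact absurd h4 (by positivity)
  have vprod : ∀ X ⊆ I, ∀ q : HeightOneSpectrum (𝓞 K), v q ((∏ i ∈ X, c i : Kˣ) : K) = ∑ i ∈ X, v q (c i : K) := by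
    intro X _ q
    induction X using Finset.induction_on with
    | empty => simp [v_one]
    | insert a X ha ih =>
      rw [Finset.prod_insert ha, Finset.sum_insert ha, Units.val_mul, v_mul q (Units.ne_zero _) (Units.ne_zero _), ih (by
        rename_i h; exact (Finset.subset_insert _ _).trans h)]
  have hge := two_pow_le_relIndex hfin I c hcU (fun i hi => sqs_le_NE Q S' ⟨⟨c i, rfl⟩, pow_mem (hcU i hi) 2⟩) (by
    rintro X hX hne ⟨γ, hγ, hγX⟩
    obtain ⟨y, z, hyz⟩ := Q.exists_of_nm (γ : E)
    have hval : ((∏ i ∈ X, c i : Kˣ) : K) = y ^ 2 - b * z ^ 2 := by rw [← hyz, ← hγX, Q.nmU_val]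
    have hnz : y ^ 2 - (b : K) * z ^ 2 ≠ 0 := by rw [← hval]; exact Units.ne_zero _
    by_cases hex : ∃ j ∈ X, Even (v (p j) (b : K))
    · obtain ⟨j, hj, hev⟩ := hex
      have hjk := hIk j (hX hj)
      have h3 := inert (p j) (h2 _ (hpe j hjk).1) b.ne_zero (Finset.mem_filter.1 (hX hj)).2 hev hnz
      rw [← hval, vprod X hX, Finset.sum_eq_single_of_mem j hj (fun i hi hij => hcv i (hX hi) j (hX hj) hij)] at h3
      simp only [c, if_pos hev] at h3
      rw [hπ1' j hjk] at h3
      exact absurd h3 (by decide)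
    · push Not at hex
      set j := X.min' hne
      have hj : j ∈ X := X.min'_mem hne
      have hjk := hIk j (hX hj)
      have hcX : ∀ i ∈ X, c i = e i := fun i hi => if_neg (hex i hi)
      have hv0 : v (p j) ((∏ i ∈ X, c i : Kˣ) : K) = 0 := by
        rw [vprod X hX]
        apply Finset.sum_eq_zero
        intro i hi
        rw [hcX i hi]
        exact (hpe i (hIk i (hX hi))).2.1 _ (hpe j hjk).1
      have h3 := ramified (p j) (h2 _ (hpe j hjk).1) b.ne_zero (hex j hj) hnz (by rw [← hval, hv0])
      rw [← hval, ← Finset.mul_prod_erase X c hj] at h3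
      have h4 : ∏ i ∈ X.erase j, c i ∈ Sq (p j) := by
        apply Subgroup.prod_mem
        intro i hi
        rw [hcX i (Finset.mem_of_mem_erase hi)]
        refine (hpe i (hIk i (hX (Finset.mem_of_mem_erase hi)))).2.2.2 j ?_
        exact lt_of_le_of_ne (X.min'_le i (Finset.mem_of_mem_erase hi)) (Finset.ne_of_mem_erase hi).symm
      rw [Units.val_mul, mul_comm] at h3
      have h5 := SqAt.of_mul_left _ h3 h4
      rw [hcX j hj] at h5
      exact (hpe j hjk).2.2.1 h5)
  have h8 : 2 ^ I.card * 2 ≤ 2 ^ I.card :=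
    (Nat.mul_le_mul_right 2 hge).trans (hidx.trans (Nat.pow_le_pow_right (by norm_num) hcard))
  have : 0 < 2 ^ I.card := by positivity
  omega
end
end Sieg

end

section
open NumberField IsDedekindDomain
set_option linter.unusedSectionVars false
set_option maxSynthPendingDepth 3
namespace Sieg
universe u

section cl
variable {K : Type u} [Field K] [NumberField K]

/-- weak approximation in the ring of integers -/
lemma crt {S : Set (HeightOneSpectrum (𝓞 K))} (hS : S.Finite) (a : HeightOneSpectrum (𝓞 K) → 𝓞 K) (n : HeightOneSpectrum (𝓞 K) → ℕ) :
    ∃ c : 𝓞 K, ∀ p ∈ S, V p (n p) ((c : K) - (a p : K)) := by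
  classical
  obtain ⟨y, hy⟩ := IsDedekindDomain.exists_forall_sub_mem_ideal (R := 𝓞 K) (s := hS.toFinset) (fun p => p.asIdeal) n
    (fun p _ => p.prime) (fun p _ q _ hpq h => hpq (HeightOneSpectrum.ext h)) (fun p => a p)
  refine ⟨y, fun p hp => ?_⟩
  have := hy p (hS.mem_toFinset.2 hp)
  rw [← V_int_iff] at this
  simpa using this

lemma wa {S : Set (HeightOneSpectrum (𝓞 K))} (hS : S.Finite) (x : HeightOneSpectrum (𝓞 K) → K) (n : HeightOneSpectrum (𝓞 K) → ℕ) :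
    ∃ c : K, ∀ p ∈ S, V p (n p) (c - x p) := by
  classical
  obtain ⟨⟨d, hd⟩, h⟩ := IsLocalization.exist_integer_multiples (nonZeroDivisors (𝓞 K)) hS.toFinset x
  have hd0 : (d : K) ≠ 0 := by simpa using nonZeroDivisors.ne_zero hd
  have h' : ∀ p, ∃ a : 𝓞 K, p ∈ S → (a : K) = d * x p := by
    intro p
    by_cases hp : p ∈ S
    · obtain ⟨a, ha⟩ := h p (hS.mem_toFinset.2 hp)
      exact ⟨a, fun _ => ha.trans (Algebra.smul_def _ _)⟩
    · exact ⟨0, fun h => absurd h hp⟩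
  choose a ha using h'
  obtain ⟨c, hc⟩ := crt hS a (fun p => n p + (v p (d : K)).toNat)
  refine ⟨c / d, fun p hp => ?_⟩
  have h1 := hc p hp
  rw [ha p hp] at h1
  rw [show (c : K) / d - x p = ((c : K) - d * x p) / d by field_simp, V_div_iff p hd0]
  exact V_mono p h1 (by push_cast; have := v_int p d; omega)

lemma ap {S : Set (HeightOneSpectrum (𝓞 K))} (hS : S.Finite) (f : HeightOneSpectrum (𝓞 K) → ℤ) :
    ∃ c : K, c ≠ 0 ∧ ∀ p ∈ S, v p c = f p := by
  choose π hπ0 hπ using fun p : HeightOneSpectrum (𝓞 K) => exists_unif p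
  obtain ⟨c, hc⟩ := wa hS (fun p => (π p : K) ^ f p) (fun p => (f p + 1).toNat)
  have key : ∀ p ∈ S, c ≠ 0 ∧ v p c = f p := by
    intro p hp
    have h := v_add_eq p (x := (π p : K) ^ f p) (y := c - (π p : K) ^ f p) (zpow_ne_zero _ (hπ0 p))
      (V_mono p (hc p hp) (by rw [v_zpow, hπ]; simp))
    rw [add_sub_cancel, v_zpow, hπ] at h
    simpa using h
  by_cases hne : S.Nonempty
  · obtain ⟨p, hp⟩ := hne
    exact ⟨c, (key p hp).1, fun q hq => (key q hq).2⟩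
  · exact ⟨1, one_ne_zero, fun q hq => absurd ⟨q, hq⟩ hne⟩

lemma Cl_of_single {S : Set (HeightOneSpectrum (𝓞 K))}
    (h : ∀ p, p ∉ S → ∃ c : K, c ≠ 0 ∧ v p c = 1 ∧ ∀ q, q ∉ S → q ≠ p → v q c = 0) : Cl S := by
  classical
  intro f hf
  have h' : ∀ p, ∃ c : K, c ≠ 0 ∧ (p ∉ S → v p c = 1) ∧ ∀ q, q ∉ S → q ≠ p → v q c = 0 := by
    intro p
    by_cases hp : p ∈ S
    · exact ⟨1, one_ne_zero, fun h => absurd hp h, fun q _ _ => v_one q⟩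
    · obtain ⟨c, h1, h2, h3⟩ := h p hp
      exact ⟨c, h1, fun _ => h2, h3⟩
  choose c hc0 hc1 hc2 using h'
  have key : ∀ X : Finset (HeightOneSpectrum (𝓞 K)), (∏ p ∈ X, c p ^ f p) ≠ 0 ∧ ∀ q, q ∉ S → v q (∏ p ∈ X, c p ^ f p) = if q ∈ X then f q else 0 := by
    intro X
    induction X using Finset.induction_on with
    | empty => simp [v_one]
    | insert a X ha ih =>
      rw [Finset.prod_insert ha]
      refine ⟨mul_ne_zero (zpow_ne_zero _ (hc0 a)) ih.1, fun q hq => ?_⟩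
      rw [v_mul q (zpow_ne_zero _ (hc0 a)) ih.1, ih.2 q hq, v_zpow]
      by_cases hqa : q = a
      · subst hqa; simp [ha, hc1 q hq]
      · simp [hqa, hc2 a q hq hqa]
  refine ⟨_, (key hf.toFinset).1, fun p hp => ?_⟩
  rw [(key hf.toFinset).2 p hp]
  split_ifs with h
  · rfl
  · by_contra h'; exact h (hf.mem_toFinset.2 (fun h'' => h' h''.symm))

variable (K) in
lemma exists_Cl : ∃ S : Set (HeightOneSpectrum (𝓞 K)), S.Finite ∧ Cl S ∧ ∀ p, p ∉ S → v p (2 : K) = 0 := by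
  classical
  choose J hJ using ClassGroup.mk0_surjective (R := 𝓞 K)
  let S : Set (HeightOneSpectrum (𝓞 K)) := {p | v p (2 : K) ≠ 0} ∪ ⋃ C, {p | p.asIdeal ∣ (J C : Ideal (𝓞 K))}
  refine ⟨S, (finite_v two_ne_zero).union (Set.finite_iUnion fun C => Ideal.finite_factors (nonZeroDivisors.ne_zero (J C).2)), ?_, ?_⟩
  · apply Cl_of_single
    intro p hp
    have hp0 : p.asIdeal ∈ nonZeroDivisors (Ideal (𝓞 K)) := mem_nonZeroDivisors_of_ne_zero p.ne_bot
    set C := (ClassGroup.mk0 ⟨p.asIdeal, hp0⟩)⁻¹ with hC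
    have h : ClassGroup.mk0 (⟨p.asIdeal, hp0⟩ * J C) = 1 := by
      rw [map_mul, hJ, hC, mul_inv_cancel]
    rw [ClassGroup.mk0_eq_one_iff] at h
    obtain ⟨g, hg⟩ := h
    have hg : p.asIdeal * (J C : Ideal (𝓞 K)) = Ideal.span {g} := by simpa using hg
    have hJ0 := nonZeroDivisors.ne_zero (J C).2
    have hg0 : g ≠ 0 := by
      rintro rfl
      have : p.asIdeal * (J C : Ideal (𝓞 K)) = 0 := by simpa using hg
      rcases mul_eq_zero.1 this with h | h
      · exact p.ne_bot h
      · exact hJ0 h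
    have hg0' : (g : K) ≠ 0 := by simpa using hg0
    have hnd : ∀ q, q ∉ S → ¬ q.asIdeal ∣ (J C : Ideal (𝓞 K)) := fun q hq h => hq (Or.inr (Set.mem_iUnion.2 ⟨C, h⟩))
    refine ⟨g, hg0', ?_, ?_⟩
    · have h1 : g ∈ p.asIdeal := Ideal.mul_le_left (I := p.asIdeal) (J := (J C : Ideal (𝓞 K))) (by rw [hg]; exact Ideal.mem_span_singleton_self g)
      have h2 := (V_one_iff p g).2 h1
      rw [V_iff p hg0'] at h2
      by_contra h3
      have h4 : V p (2 : ℕ) (g : K) := by rw [V_iff p hg0']; push_cast; omega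
      rw [V_int_iff, ← Ideal.dvd_span_singleton, ← hg, sq] at h4
      exact hnd p hp ((mul_dvd_mul_iff_left p.ne_bot).1 h4)
    · intro q hq hqp
      apply v_eq_zero_of_notMem
      intro h
      rw [← Ideal.dvd_span_singleton, ← hg] at h
      rcases q.prime.dvd_or_dvd h with h | h
      · have := Ideal.le_of_dvd h
        exact hqp (HeightOneSpectrum.ext (p.isMaximal.eq_of_le q.isPrime.ne_top this).symm)
      · exact hnd q hq h
  · intro p hp
    by_contra h
    exact hp (Or.inl h)
end cl
end Sieg

end

section
open NumberField IsDedekindDomain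
set_option linter.unusedSectionVars false
set_option maxSynthPendingDepth 3
namespace Sieg
universe u

lemma relIndex_le_card {G : Type*} [Group G] {H L : Subgroup G} {α : Type*} [Finite α] (φ : L → α)
    (h : ∀ x y : L, φ x = φ y → (x : G)⁻¹ * y ∈ H) : H.relIndex L ≤ Nat.card α ∧ H.relIndex L ≠ 0 := by
  have hinj : Function.Injective (fun q : L ⧸ H.subgroupOf L => φ q.out) := by
    intro a b hab
    have := h _ _ hab
    rw [← Quotient.out_eq a, ← Quotient.out_eq b]
    exact QuotientGroup.eq.2 (by rw [Subgroup.mem_subgroupOf]; exact this)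
  have : Finite (L ⧸ H.subgroupOf L) := Finite.of_injective _ hinj
  exact ⟨Nat.card_le_card_of_injective _ hinj, by
    have : Nat.card (L ⧸ H.subgroupOf L) ≠ 0 := Nat.card_pos.ne'
    exact this⟩

section cnt
variable {K : Type u} [Field K] [NumberField K]

/-- product of the primes in `S` -/
noncomputable def MM {S : Set (HeightOneSpectrum (𝓞 K))} (hS : S.Finite) : Ideal (𝓞 K) :=
  ∏ p ∈ hS.toFinset, p.asIdeal

lemma MM_ne {S : Set (HeightOneSpectrum (𝓞 K))} (hS : S.Finite) : MM hS ≠ ⊥ :=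
  Finset.prod_ne_zero_iff.2 fun p _ => p.ne_bot

lemma mem_MM {S : Set (HeightOneSpectrum (𝓞 K))} (hS : S.Finite) {b : 𝓞 K} : b ∈ MM hS ↔ ∀ p ∈ S, b ∈ p.asIdeal := by
  classical
  have h := IsDedekindDomain.inf_pow_eq_prod_of_prime (R := 𝓞 K) hS.toFinset (fun p => p.asIdeal) (fun _ => 1)
    (fun p _ => p.prime) (fun p _ q _ hpq h => hpq (HeightOneSpectrum.ext h))
  simp only [pow_one] at h
  rw [MM, ← h]
  simp [Submodule.mem_finsetInf]

/-- an integer divisible by `2^j * MM` -/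
lemma mem_two_MM {S : Set (HeightOneSpectrum (𝓞 K))} (hS : S.Finite) {b m : 𝓞 K} (hm : m ≠ 0) (h2 : ∀ p, p ∉ S → v p (m : K) = 0) :
    b ∈ Ideal.span {m} * MM hS ↔ ∀ p ∈ S, V p (1 + v p (m : K)) (b : K) := by
  have hm' : (m : K) ≠ 0 := by simpa using hm
  rw [Ideal.mem_span_singleton_mul]
  constructor
  · rintro ⟨z, hz, rfl⟩ p hp
    have := (V_one_iff p z).2 ((mem_MM hS).1 hz p hp)
    rw [show ((m * z : 𝓞 K) : K) = m * z from map_mul (algebraMap (𝓞 K) K) m z, V_mul_iff p hm']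
    simpa using this
  · intro h
    have h0 : ∀ p : HeightOneSpectrum (𝓞 K), V p 0 ((b : K) / m) := by
      intro p
      rw [V_div_iff p hm']
      by_cases hp : p ∈ S
      · exact V_mono p (h p hp) (by omega)
      · rw [h2 p hp]; exact V_int p b
    obtain ⟨z, hz⟩ := int_of_V h0
    refine ⟨z, (mem_MM hS).2 fun p hp => ?_, ?_⟩
    · rw [← V_one_iff, hz, V_div_iff p hm']; exact h p hp
    · apply RingOfIntegers.coe_injective
      have := map_mul (algebraMap (𝓞 K) K) m z
      refine this.trans ?_
      change (m : K) * (z : K) = b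
      rw [hz]; field_simp

/-- the modulus -/
noncomputable def M4 {S : Set (HeightOneSpectrum (𝓞 K))} (hS : S.Finite) : Ideal (𝓞 K) := Ideal.span {4} * MM hS

lemma M4_ne {S : Set (HeightOneSpectrum (𝓞 K))} (hS : S.Finite) : M4 hS ≠ ⊥ :=
  mul_ne_zero (by simp) (MM_ne hS)

instance finR {S : Set (HeightOneSpectrum (𝓞 K))} (hS : S.Finite) : Finite (𝓞 K ⧸ M4 hS) :=
  Ideal.finiteQuotientOfFreeOfNeBot _ (M4_ne hS)

lemma coe_two : ((2 : 𝓞 K) : K) = 2 := map_ofNat (algebraMap (𝓞 K) K) 2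
lemma coe_four : ((4 : 𝓞 K) : K) = 4 := map_ofNat (algebraMap (𝓞 K) K) 4

lemma mem_M4 {S : Set (HeightOneSpectrum (𝓞 K))} (hS : S.Finite) (h2 : ∀ p, p ∉ S → v p (2 : K) = 0) {b : 𝓞 K} :
    b ∈ M4 hS ↔ ∀ p ∈ S, V p (1 + 2 * v p (2 : K)) (b : K) := by
  rw [M4, mem_two_MM hS (by norm_num) (fun p hp => by rw [coe_four, v_four, h2 p hp]; rfl)]
  simp only [coe_four, v_four]

lemma mem_M2 {S : Set (HeightOneSpectrum (𝓞 K))} (hS : S.Finite) (h2 : ∀ p, p ∉ S → v p (2 : K) = 0) {b : 𝓞 K} :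
    b ∈ Ideal.span {2} * MM hS ↔ ∀ p ∈ S, V p (1 + v p (2 : K)) (b : K) := by
  rw [mem_two_MM hS (by norm_num) (fun p hp => by rw [coe_two, h2 p hp])]
  simp only [coe_two]

lemma card_I {S : Set (HeightOneSpectrum (𝓞 K))} (hS : S.Finite) :
    Nat.card ((Ideal.span {2} * MM hS).map (Ideal.Quotient.mk (M4 hS))) = 2 ^ Module.finrank ℚ K := by
  set A := Ideal.span {2} * MM hS with hA
  have hle : M4 hS ≤ A := by
    rw [M4, show (4 : 𝓞 K) = 2 * 2 by norm_num, ← Ideal.span_singleton_mul_span_singleton, mul_assoc]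
    exact Ideal.mul_le_left (I := Ideal.span {2} * MM hS) (J := Ideal.span {2}) |> fun h => by rwa [mul_comm] at h
  have h1 : Nat.card (𝓞 K ⧸ M4 hS) = Nat.card (A.map (Ideal.Quotient.mk (M4 hS))) * Nat.card (𝓞 K ⧸ A) := by
    rw [Nat.card_congr (DoubleQuot.quotQuotEquivQuotOfLE hle).symm.toEquiv, mul_comm]
    exact Submodule.card_eq_card_quotient_mul_card (A.map (Ideal.Quotient.mk (M4 hS))) |>.trans (mul_comm _ _)
  have h2 : Ideal.absNorm (M4 hS) = Ideal.absNorm (Ideal.span {(2 : 𝓞 K)}) * Ideal.absNorm A := by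
    rw [← map_mul, hA, M4, ← mul_assoc, Ideal.span_singleton_mul_span_singleton]; norm_num
  have h3 : Ideal.absNorm (Ideal.span {(2 : 𝓞 K)}) = 2 ^ Module.finrank ℚ K := by
    have := Ideal.absNorm_span_natCast (S := 𝓞 K) 2
    rw [RingOfIntegers.rank] at this
    exact_mod_cast this
  have h4 : Ideal.absNorm A ≠ 0 := by
    rw [Ne, Ideal.absNorm_eq_zero_iff]
    exact mul_ne_zero (by simp) (MM_ne hS)
  rw [Ideal.absNorm_apply, Submodule.cardQuot_apply] at h2
  rw [← h3]
  apply Nat.eq_of_mul_eq_mul_right (Nat.pos_of_ne_zero h4)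
  rw [← h2]
  rw [Ideal.absNorm_apply, Submodule.cardQuot_apply]
  exact h1.symm

lemma sqs_R {S : Set (HeightOneSpectrum (𝓞 K))} (hS : S.Finite) (h2 : ∀ p, p ∉ S → v p (2 : K) = 0) :
    Nat.card ((𝓞 K ⧸ M4 hS)ˣ ⧸ sqs (𝓞 K ⧸ M4 hS)ˣ) ≤ 2 ^ (S.ncard + Module.finrank ℚ K) := by
  classical
  have hidx := Subgroup.index_range (f := (powMonoidHom 2 : (𝓞 K ⧸ M4 hS)ˣ →* (𝓞 K ⧸ M4 hS)ˣ))
  change (sqs (𝓞 K ⧸ M4 hS)ˣ).index ≤ _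
  have hidx : (sqs (𝓞 K ⧸ M4 hS)ˣ).index = Nat.card (powMonoidHom 2 : (𝓞 K ⧸ M4 hS)ˣ →* (𝓞 K ⧸ M4 hS)ˣ).ker := hidx
  rw [hidx]
  set R := 𝓞 K ⧸ M4 hS
  set ker := (powMonoidHom 2 : Rˣ →* Rˣ).ker
  choose a ha using fun x : ker => Ideal.Quotient.mk_surjective (I := M4 hS) ((x : Rˣ) : R)
  have hdich : ∀ x : ker, ∀ p ∈ S, V p (1 + v p (2 : K)) ((a x : K) - 1) ∨ V p (1 + v p (2 : K)) ((a x : K) + 1) := by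
    intro x p hp
    have h1 : (x : Rˣ) ^ 2 = 1 := x.2
    have h2' : ((x : Rˣ) : R) ^ 2 = 1 := by rw [← Units.val_pow_eq_pow_val, h1, Units.val_one]
    rw [← ha x, ← map_pow, ← map_one (Ideal.Quotient.mk (M4 hS)), Ideal.Quotient.eq, mem_M4 hS h2] at h2'
    have h3 := h2' p hp
    rw [show ((a x ^ 2 - 1 : 𝓞 K) : K) = ((a x : K) - 1) * ((a x : K) + 1) from
      (by simp : algebraMap (𝓞 K) K (a x ^ 2 - 1) = (a x : K) ^ 2 - 1).trans (by ring)] at h3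
    by_contra h
    simp only [V, not_or, not_le] at h
    obtain ⟨⟨h4, h5⟩, h6, h7⟩ := h
    rw [V_iff p (mul_ne_zero h4 h6), v_mul p h4 h6] at h3
    omega
  let sg : ker → (S → Bool) := fun x p => decide (V p (1 + v p.1 (2 : K)) ((a x : K) - 1))
  have hsg : ∀ x y : ker, sg x = sg y → (((x : Rˣ) : R) - ((y : Rˣ) : R)) ∈ (Ideal.span {2} * MM hS).map (Ideal.Quotient.mk (M4 hS)) := by
    intro x y hxy
    rw [← ha x, ← ha y, ← map_sub]
    apply Ideal.mem_map_of_mem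
    rw [mem_M2 hS h2]
    intro p hp
    have h := congrFun hxy ⟨p, hp⟩
    simp only [sg, decide_eq_decide] at h
    rw [show ((a x - a y : 𝓞 K) : K) = (a x : K) - a y from map_sub (algebraMap (𝓞 K) K) _ _]
    by_cases hx : V p (1 + v p (2 : K)) ((a x : K) - 1)
    · have := V_sub p hx (h.1 hx)
      rwa [sub_sub_sub_cancel_right] at this
    · have := V_sub p ((hdich x p hp).resolve_left hx) ((hdich y p hp).resolve_left (fun h' => hx (h.2 h')))
      rwa [add_sub_add_right_eq_sub] at this
  have hrep : ∀ t : S → Bool, ∃ y : R, ∀ x : ker, sg x = t → (((x : Rˣ) : R) - y) ∈ (Ideal.span {2} * MM hS).map (Ideal.Quotient.mk (M4 hS)) := by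
    intro t
    by_cases h : ∃ y, sg y = t
    · obtain ⟨y, rfl⟩ := h
      exact ⟨_, fun x hx => hsg x y hx⟩
    · exact ⟨0, fun x hx => absurd ⟨x, hx⟩ h⟩
  choose rep hrep using hrep
  let φ : ker → (S → Bool) × (Ideal.span {2} * MM hS).map (Ideal.Quotient.mk (M4 hS)) :=
    fun x => (sg x, ⟨_, hrep (sg x) x rfl⟩)
  have hφ : Function.Injective φ := by
    intro x y hxy
    simp only [φ, Prod.mk.injEq, Subtype.mk.injEq] at hxy
    rw [hxy.1] at hxy
    exact Subtype.ext (Units.ext (sub_left_injective hxy.2))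
  have : Finite S := hS
  refine (Nat.card_le_card_of_injective φ hφ).trans ?_
  rw [Nat.card_prod, card_I, Nat.card_fun, Nat.card_coe_set_eq, pow_add]
  simp
end cnt
end Sieg

end

section
open NumberField IsDedekindDomain
set_option linter.unusedSectionVars false
set_option maxSynthPendingDepth 3
namespace Sieg
universe u

section cnt2
variable {K : Type u} [Field K] [NumberField K] {S : Set (HeightOneSpectrum (𝓞 K))}

lemma notMem_of_v {p : HeightOneSpectrum (𝓞 K)} {r : 𝓞 K} (h0 : (r : K) ≠ 0) (h : v p (r : K) = 0) : r ∉ p.asIdeal := by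
  rw [← V_one_iff, V_iff p h0]; omega

lemma unit_R (hS : S.Finite) (h2 : ∀ p, p ∉ S → v p (2 : K) = 0) {u : 𝓞 K} (hu : ∀ p ∈ S, u ∉ p.asIdeal) :
    IsUnit (Ideal.Quotient.mk (M4 hS) u) := by
  have hinj : Function.Injective (fun y : 𝓞 K ⧸ M4 hS => Ideal.Quotient.mk (M4 hS) u * y) := by
    intro a b hab
    obtain ⟨a, rfl⟩ := Ideal.Quotient.mk_surjective a
    obtain ⟨b, rfl⟩ := Ideal.Quotient.mk_surjective b
    simp only [← map_mul] at hab
    rw [Ideal.Quotient.eq, ← mul_sub, mem_M4 hS h2] at hab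
    rw [Ideal.Quotient.eq, mem_M4 hS h2]
    intro p hp
    have h := hab p hp
    have hu0 : (u : K) ≠ 0 := by
      intro h0; apply hu p hp
      have : u = 0 := by exact_mod_cast h0
      simp [this]
    rw [show ((u * (a - b) : 𝓞 K) : K) = (u : K) * ((a - b : 𝓞 K) : K) from map_mul (algebraMap (𝓞 K) K) _ _,
      V_mul_iff p hu0, v_eq_zero_of_notMem p (hu p hp), sub_zero] at h
    exact h
  obtain ⟨w, hw⟩ := Finite.surjective_of_injective hinj 1
  exact IsUnit.of_mul_eq_one _ hw

lemma notMem_of_unit (hS : S.Finite) {u : 𝓞 K} (h : IsUnit (Ideal.Quotient.mk (M4 hS) u)) (p : HeightOneSpectrum (𝓞 K)) (hp : p ∈ S) :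
    u ∉ p.asIdeal := by
  obtain ⟨w, hw⟩ := h.exists_right_inv
  obtain ⟨w, rfl⟩ := Ideal.Quotient.mk_surjective w
  rw [← map_mul, ← map_one (Ideal.Quotient.mk (M4 hS)), Ideal.Quotient.eq] at hw
  have h1 : u * w - 1 ∈ p.asIdeal := by
    have : M4 hS ≤ MM hS := Ideal.mul_le_right
    exact (mem_MM hS).1 (this hw) p hp
  intro hu
  apply p.isPrime.ne_top
  rw [Ideal.eq_top_iff_one]
  have := Ideal.sub_mem _ (Ideal.mul_mem_right w _ hu) h1
  simpa using this

lemma exists_u (hS : S.Finite) (h2 : ∀ p, p ∉ S → v p (2 : K) = 0) {t : K} (ht0 : t ≠ 0) (ht : ∀ p ∈ S, v p t = 0) :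
    ∃ u : 𝓞 K, IsUnit (Ideal.Quotient.mk (M4 hS) u) ∧ ∀ p ∈ S, SqAt p (t * u) := by
  classical
  have h' : ∀ p, ∃ a : 𝓞 K, p ∈ S → V p ((1 + 2 * v p (2 : K)).toNat : ℕ) (t - a) := by
    intro p
    by_cases hp : p ∈ S
    · obtain ⟨a, ha⟩ := approx p (n := (1 + 2 * v p (2 : K)).toNat) (x := t) (Or.inr (ht p hp).ge)
      exact ⟨a, fun _ => ha⟩
    · exact ⟨0, fun h => absurd h hp⟩
  choose a ha using h'
  obtain ⟨u, hu⟩ := crt hS a (fun p => (1 + 2 * v p (2 : K)).toNat)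
  have h1 : ∀ p ∈ S, V p (1 + 2 * v p (2 : K)) ((u : K) - t) := by
    intro p hp
    have := V_sub p (hu p hp) (ha p hp)
    have e2 : (u : K) - t = ((u : K) - a p) - (t - a p) := by ring
    rw [e2]
    exact V_mono p this (by have := v_two_nonneg p; omega)
  have h3 : ∀ p ∈ S, (u : K) ≠ 0 ∧ v p (u : K) = 0 := by
    intro p hp
    have := v_add_eq p (x := t) (y := (u : K) - t) ht0 (V_mono p (h1 p hp) (by rw [ht p hp]; have := v_two_nonneg p; omega))
    rwa [add_sub_cancel, ht p hp] at this
  refine ⟨u, unit_R hS h2 fun p hp => notMem_of_v (h3 p hp).1 (h3 p hp).2, fun p hp => ?_⟩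
  obtain ⟨h4, h5⟩ := h3 p hp
  have h6 : SqAt p (u / t) := by
    refine ⟨1, one_ne_zero, ?_⟩
    rw [show ((u : K) / t / 1 ^ 2 - 1) / 4 = (u - t) / (t * 4) by field_simp, V_div_iff p (mul_ne_zero ht0 (by norm_num)), v_mul p ht0 (by norm_num), v_four, ht p hp]
    exact V_mono p (h1 p hp) (by omega)
  rw [show t * (u : K) = u / t * t ^ 2 by field_simp]
  exact (SqAt_mul_sq_iff p ht0).2 h6

lemma SqAt_of_R (hS : S.Finite) (h2 : ∀ p, p ∉ S → v p (2 : K) = 0) {u u' : 𝓞 K} (h : IsUnit (Ideal.Quotient.mk (M4 hS) u))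
    (h' : IsUnit (Ideal.Quotient.mk (M4 hS) u')) (hq : (QuotientGroup.mk h.unit : (𝓞 K ⧸ M4 hS)ˣ ⧸ sqs (𝓞 K ⧸ M4 hS)ˣ) = QuotientGroup.mk h'.unit)
    {p : HeightOneSpectrum (𝓞 K)} (hp : p ∈ S) : SqAt p ((u : K) * u') := by
  rw [QuotientGroup.eq] at hq
  obtain ⟨w, hw⟩ := hq
  simp only [powMonoidHom_apply] at hw
  have hw' : h'.unit = h.unit * w ^ 2 := by rw [hw, mul_inv_cancel_left]
  have hw2 := congrArg Units.val hw'
  rw [IsUnit.unit_spec, Units.val_mul, IsUnit.unit_spec, Units.val_pow_eq_pow_val] at hw2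
  obtain ⟨c, hc⟩ := Ideal.Quotient.mk_surjective (I := M4 hS) (w : 𝓞 K ⧸ M4 hS)
  have hcp := notMem_of_unit hS (u := c) (by rw [hc]; exact w.isUnit) p hp
  have hup := notMem_of_unit hS h p hp
  rw [← hc, ← map_pow, ← map_mul, Ideal.Quotient.eq, mem_M4 hS h2] at hw2
  have h3 := hw2 p hp
  rw [show ((u' - u * c ^ 2 : 𝓞 K) : K) = (u' : K) - u * c ^ 2 from by simp [RingOfIntegers.coe_eq_algebraMap]] at h3
  have hc0 : (c : K) ≠ 0 := by
    intro h0; apply hcp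
    have : c = 0 := by exact_mod_cast h0
    simp [this]
  have hu0 : (u : K) ≠ 0 := by
    intro h0; apply hup
    have : u = 0 := by exact_mod_cast h0
    simp [this]
  have h4 : SqAt p ((u' : K) / u) := by
    refine ⟨c, hc0, ?_⟩
    rw [show ((u' : K) / u / c ^ 2 - 1) / 4 = (u' - u * c ^ 2) / (u * c ^ 2 * 4) by field_simp, V_div_iff p (mul_ne_zero (by positivity) (by norm_num)), v_mul p (by positivity) (by norm_num), v_four, v_mul p hu0 (by positivity), v_pow, v_eq_zero_of_notMem p hcp, v_eq_zero_of_notMem p hup]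
    exact V_mono p h3 (by omega)
  rw [show (u : K) * u' = u' / u * u ^ 2 by field_simp]
  exact (SqAt_mul_sq_iff p hu0).2 h4

/-- local squares at all of `S` -/
def WW (S : Set (HeightOneSpectrum (𝓞 K))) : Subgroup Kˣ := ⨅ p ∈ S, Sq p

lemma mem_WW {x : Kˣ} : x ∈ WW S ↔ ∀ p ∈ S, SqAt p (x : K) := by
  simp [WW, Subgroup.mem_iInf, mem_Sq]

/-- even valuation on `A` -/
def YY (A : Set (HeightOneSpectrum (𝓞 K))) : Subgroup Kˣ where
  carrier := {x | ∀ p ∈ A, Even (v p (x : K))}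
  mul_mem' {a b} ha hb p hp := by
    rw [Units.val_mul, v_mul p a.ne_zero b.ne_zero]; exact (ha p hp).add (hb p hp)
  one_mem' p hp := by simp [v_one]
  inv_mem' {a} ha p hp := by
    rw [Units.val_inv_eq_inv_val, v_inv]; exact (ha p hp).neg

lemma mem_YY {A : Set (HeightOneSpectrum (𝓞 K))} {x : Kˣ} : x ∈ YY A ↔ ∀ p ∈ A, Even (v p (x : K)) := Iff.rfl

lemma WW_YY (hS : S.Finite) (h2 : ∀ p, p ∉ S → v p (2 : K) = 0) (A : Set (HeightOneSpectrum (𝓞 K))) :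
    (WW S).relIndex (YY A) ≤ 2 ^ ((S \ A).ncard + (S.ncard + Module.finrank ℚ K)) ∧ (WW S).relIndex (YY A) ≠ 0 := by
  classical
  have : Finite (S \ A : Set _) := hS.subset Set.sdiff_subset
  let ε : YY A → ((S \ A : Set _) → Bool) := fun x p => decide (Even (v p.1 ((x : Kˣ) : K)))
  choose c hc0 hc using fun t : (S \ A : Set _) → Bool =>
    ap hS (fun p => if h : p ∈ S \ A then (if t ⟨p, h⟩ then 0 else -1) else 0)
  choose y hy0 hy using fun x : YY A => ap hS (fun p => - (v p ((x : Kˣ) : K) / 2))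
  have ht0 : ∀ x : YY A, ((x : Kˣ) : K) * y x ^ 2 * c (ε x) ≠ 0 := fun x =>
    mul_ne_zero (mul_ne_zero (Units.ne_zero _) (pow_ne_zero _ (hy0 x))) (hc0 _)
  have ht : ∀ x : YY A, ∀ p ∈ S, v p (((x : Kˣ) : K) * y x ^ 2 * c (ε x)) = 0 := by
    intro x p hp
    rw [v_mul p (mul_ne_zero (Units.ne_zero _) (pow_ne_zero _ (hy0 x))) (hc0 _), v_mul p (Units.ne_zero _) (pow_ne_zero _ (hy0 x)), v_pow, hy x p hp, hc _ p hp]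
    by_cases hpA : p ∈ A
    · rw [dif_neg (fun h => h.2 hpA)]
      obtain ⟨r, hr⟩ := x.2 p hpA
      rw [hr]; push_cast; omega
    · rw [dif_pos ⟨hp, hpA⟩]
      by_cases he : Even (v p ((x : Kˣ) : K))
      · have he' := he
        obtain ⟨r, hr⟩ := he
        simp only [ε, he', decide_true, if_true]
        rw [hr]; push_cast; omega
      · have he' := he
        rw [Int.not_even_iff_odd] at he
        obtain ⟨r, hr⟩ := he
        simp only [ε, he', decide_false]
        rw [hr]; push_cast; simp; omega
  choose u hu hus using fun x : YY A => exists_u hS h2 (ht0 x) (ht x)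
  let φ : YY A → ((S \ A : Set _) → Bool) × ((𝓞 K ⧸ M4 hS)ˣ ⧸ sqs (𝓞 K ⧸ M4 hS)ˣ) :=
    fun x => (ε x, QuotientGroup.mk (hu x).unit)
  have hφ : ∀ x x' : YY A, φ x = φ x' → (x : Kˣ)⁻¹ * x' ∈ WW S := by
    intro x x' h
    simp only [φ, Prod.mk.injEq] at h
    rw [mem_WW]
    intro p hp
    have h1 := SqAt_of_R hS h2 (hu x) (hu x') h.2 hp
    have h3 := SqAt.mul p (SqAt.mul p (hus x p hp) (hus x' p hp)) h1
    rw [← h.1] at h3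
    have hx0 := (x : Kˣ).ne_zero
    have hu0 : ∀ x : YY A, (u x : K) ≠ 0 := by
      intro x h0
      have h4 := notMem_of_unit hS (hu x) p hp
      have : u x = 0 := by exact_mod_cast h0
      exact h4 (by simp [this])
    have e : ((x : Kˣ) : K) * y x ^ 2 * c (ε x) * (u x : K) * (((x' : Kˣ) : K) * y x' ^ 2 * c (ε x) * (u x' : K)) * ((u x : K) * u x')
      = (((x : Kˣ)⁻¹ * x' : Kˣ) : K) * (((x : Kˣ) : K) * y x * y x' * c (ε x) * u x * u x') ^ 2 := by
      rw [Units.val_mul, Units.val_inv_eq_inv_val]; field_simp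
    rw [e] at h3
    refine (SqAt_mul_sq_iff p ?_).1 h3
    have := hy0 x
    have := hy0 x'
    have := hc0 (ε x)
    have := hu0 x
    have := hu0 x'
    positivity
  have : Finite ((𝓞 K ⧸ M4 hS)ˣ) := inferInstance
  have h := relIndex_le_card φ hφ
  refine ⟨h.1.trans ?_, h.2⟩
  rw [Nat.card_prod, pow_add, Nat.card_fun, Nat.card_coe_set_eq]
  refine Nat.mul_le_mul (by simp) (sqs_R hS h2)

/-- over a totally complex field in which `-1` is a square at the primes above `2`, `-1` is a sum of two squares -/
lemma F3 [IsTotallyComplex K] (h : ∀ p : HeightOneSpectrum (𝓞 K), v p (2 : K) ≠ 0 → SqAt p (-1 : K)) :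
    ∃ x y : K, -1 = x ^ 2 + y ^ 2 := by
  classical
  by_cases h1 : ∃ c : K, c ^ 2 = -1
  · obtain ⟨c, hc⟩ := h1; exact ⟨c, 0, by rw [hc]; ring⟩
  push Not at h1
  obtain ⟨S, hS, hCl, h2⟩ := exists_Cl K
  set k := Units.rank K + S.ncard with hk
  obtain ⟨p, e, hpe⟩ := exists_T hS h2 h1 k le_rfl
  obtain ⟨E, _, _, _, ⟨Q⟩⟩ := exists_QExt h1
  set T := p '' {i | i < k} with hT
  have hTf : T.Finite := (Set.finite_lt_nat k).image _
  have hpinj : Set.InjOn p {i | i < k} := by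
    intro i hi j hj h
    rcases lt_trichotomy i j with h' | h' | h'
    · exact absurd (h ▸ (hpe j hj).2.2.2.2 i h') (hpe j hj).2.2.2.1
    · exact h'
    · exact absurd (h ▸ (hpe i hi).2.2.2.2 j h') (hpe i hi).2.2.2.1
  have hTc : T.ncard = k := by
    rw [hT, Set.InjOn.ncard_image hpinj]
    have : {i | i < k} = ((Finset.range k : Finset ℕ) : Set ℕ) := by ext; simp
    rw [this, Set.ncard_coe_finset, Finset.card_range]
  have hdisj : Disjoint S T := by
    rw [Set.disjoint_left]; rintro _ hq ⟨i, hi, rfl⟩; exact (hpe i hi).1 hq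
  have hS'c : (S ∪ T).ncard = S.ncard + k := by rw [Set.ncard_union_eq hdisj hS hTf, hTc]
  have hidx := norm_index' Q (hS.union hTf) (hCl.mono Set.subset_union_left) (fun q hq => h2 q (fun h => hq (Or.inl h)))
    (fun q _ => by rw [v_neg, v_one]) (rank_QExt Q)
  have hsq := sqs_relIndex (hS.union hTf)
  rw [hS'c] at hsq
  set N := (U (SE E (S ∪ T))).map Q.nmU with hN
  set A := {q ∈ S | ¬ SqAt q (-1 : K)} with hA
  have hA' : {q ∈ S ∪ T | ¬ SqAt q (-1 : K)} = A := by
    ext q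
    constructor
    · rintro ⟨hq | ⟨i, hi, rfl⟩, hn⟩
      · exact ⟨hq, hn⟩
      · exact absurd (hpe i hi).2.2.1 hn
    · rintro ⟨hq, hn⟩; exact ⟨Or.inl hq, hn⟩
  rw [hA'] at hidx
  have hA2 : ∀ q ∈ A, v q (2 : K) = 0 := by
    intro q hq; by_contra h'; exact hq.2 (h q h')
  set Z := YY A ⊓ U (S ∪ T) with hZ
  have hNZ : N ≤ Z := by
    refine le_inf ?_ (NE_le Q _)
    rintro _ ⟨γ, hγ, rfl⟩ q hq
    rw [Q.nmU_val]
    obtain ⟨a, b, hab⟩ := Q.exists_of_nm (γ : E)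
    have hne : Q.nm (γ : E) ≠ 0 := by rw [← Q.nmU_val]; exact Units.ne_zero _
    rw [hab] at hne ⊢
    exact inert q (hA2 q hq) (by norm_num) hq.2 (by rw [v_neg, v_one]; exact Even.zero) hne
  have hsN : sqs Kˣ ⊓ U (S ∪ T) ≤ N := sqs_le_NE Q _
  have e1 : (sqs Kˣ).relIndex N * N.relIndex (U (S ∪ T)) = (sqs Kˣ).relIndex (U (S ∪ T)) := by
    rw [← Subgroup.inf_relIndex_right (sqs Kˣ) (U (S ∪ T)),
      ← Subgroup.inf_relIndex_right (sqs Kˣ) N]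
    rw [show sqs Kˣ ⊓ N = sqs Kˣ ⊓ U (S ∪ T) from le_antisymm (inf_le_inf_left _ (NE_le Q _)) (le_inf inf_le_left hsN)]
    exact Subgroup.relIndex_mul_relIndex _ _ _ hsN (NE_le Q _)
  have e2 : (sqs Kˣ).relIndex N * N.relIndex Z = (sqs Kˣ).relIndex Z := by
    rw [← Subgroup.inf_relIndex_right (sqs Kˣ) Z,
      ← Subgroup.inf_relIndex_right (sqs Kˣ) N]
    rw [show sqs Kˣ ⊓ N = sqs Kˣ ⊓ Z from le_antisymm (inf_le_inf_left _ hNZ) (le_inf inf_le_left ((inf_le_inf_left _ inf_le_right).trans hsN))]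
    exact Subgroup.relIndex_mul_relIndex _ _ _ ((inf_le_inf_left _ inf_le_right).trans hsN) hNZ
  have hWZ : WW S ⊓ Z ≤ sqs Kˣ := by
    rintro b ⟨hb, hb'⟩
    exact F2 hS hCl h2 (fun i hi => ⟨(hpe i hi).1, (hpe i hi).2.1, (hpe i hi).2.2.2⟩) hb'.2 (mem_WW.1 hb)
  obtain ⟨w1, w2⟩ := WW_YY hS h2 A
  have w3 : (WW S).relIndex Z ≤ (WW S).relIndex (YY A) := Subgroup.relIndex_le_of_le_right inf_le_left w2
  have w4 : (WW S).relIndex Z ≠ 0 := mt (Subgroup.relIndex_eq_zero_of_le_right inf_le_left) w2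
  have w5 : (sqs Kˣ).relIndex Z ≤ (WW S).relIndex Z := by
    rw [← Subgroup.inf_relIndex_right (WW S) Z]
    exact Subgroup.relIndex_le_of_le_left hWZ (by rwa [Subgroup.inf_relIndex_right])
  have hAc : (S \ A).ncard + A.ncard = S.ncard := Set.ncard_sdiff_add_ncard_of_subset (Set.sep_subset _ _) hS
  have hn := rank_TC (K := K)
  have hA1 : 1 ≤ A.ncard := by
    by_contra h0
    have : A.ncard = 0 := by omega
    rw [this] at hidx
    have h00 : N.relIndex (U (S ∪ T)) = 0 := by omega
    rw [h00, hsq] at e1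
    rw [mul_zero] at e1; exact absurd e1.symm (by positivity)
  have b1 : N.relIndex (U (S ∪ T)) ≤ 2 ^ (A.ncard - 1) := by
    have : 2 ^ A.ncard = 2 ^ (A.ncard - 1) * 2 := by rw [← pow_succ]; congr 1; omega
    omega
  have b2 : (sqs Kˣ).relIndex Z ≤ 2 ^ (2 * (S.ncard + (Units.rank K + 1)) - A.ncard) :=
    (w5.trans (w3.trans w1)).trans (Nat.pow_le_pow_right (by norm_num) (by omega))
  have b3 : 2 ^ (2 * (S.ncard + (Units.rank K + 1)) - A.ncard) ≤ (sqs Kˣ).relIndex N := by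
    have e3 : Units.rank K + 1 + (S.ncard + k) = (2 * (S.ncard + (Units.rank K + 1)) - A.ncard) + (A.ncard - 1) := by omega
    rw [hsq, e3, pow_add] at e1
    have := Nat.mul_le_mul_left ((sqs Kˣ).relIndex N) b1
    rw [e1] at this
    exact Nat.le_of_mul_le_mul_right this (by positivity)
  have b4 : N.relIndex Z = 1 := by
    have hpos : 0 < (sqs Kˣ).relIndex N := lt_of_lt_of_le (by positivity) b3
    have h5 : (sqs Kˣ).relIndex N * N.relIndex Z ≤ (sqs Kˣ).relIndex N * 1 := by rw [e2, mul_one]; exact b2.trans b3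
    have h6 := Nat.le_of_mul_le_mul_left h5 hpos
    have h7 : N.relIndex Z ≠ 0 := by
      have h8 : (sqs Kˣ).relIndex Z ≠ 0 := by
        rw [← Subgroup.inf_relIndex_right (WW S) Z] at w4
        exact mt (Subgroup.relIndex_eq_zero_of_le_left hWZ) w4
      intro h9; rw [h9, mul_zero] at e2; exact h8 e2.symm
    omega
  have b5 := Subgroup.relIndex_eq_one.1 b4
  have : (-1 : Kˣ) ∈ N := b5 ⟨fun q hq => by simp [v_neg, v_one], neg_one_mem_U _⟩
  obtain ⟨γ, -, hγ⟩ := this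
  obtain ⟨a, b, hab⟩ := Q.exists_of_nm (γ : E)
  refine ⟨a, b, ?_⟩
  rw [← Q.nmU_val, hγ] at hab
  simpa using hab
end cnt2
end Sieg

end

section
open NumberField IsDedekindDomain
set_option linter.unusedSectionVars false
set_option maxSynthPendingDepth 3
namespace Sieg
universe u

/-- sums of four squares -/
def S4 {R : Type*} [CommRing R] (x : R) : Prop := ∃ a b c d : R, x = a ^ 2 + b ^ 2 + c ^ 2 + d ^ 2

lemma S4.mul {R : Type*} [CommRing R] {x y : R} (h : S4 x) (h' : S4 y) : S4 (x * y) := by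
  obtain ⟨a, b, c, d, rfl⟩ := h
  obtain ⟨e, f, g, h, rfl⟩ := h'
  exact ⟨a * e - b * f - c * g - d * h, a * f + b * e + c * h - d * g, a * g - b * h + c * e + d * f, a * h + b * g - c * f + d * e, by ring⟩

lemma S4_sq {R : Type*} [CommRing R] (x : R) : S4 (x ^ 2) := ⟨x, 0, 0, 0, by ring⟩

lemma S4.inv {F : Type*} [Field F] {x : F} (h : S4 x) : S4 x⁻¹ := by
  by_cases hx : x = 0
  · rw [hx, inv_zero]; exact ⟨0, 0, 0, 0, by ring⟩
  · have := h.mul (S4_sq x⁻¹)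
    rwa [show x * x⁻¹ ^ 2 = x⁻¹ by field_simp] at this

lemma S4_all {F : Type*} [Field F] [CharZero F] {x y : F} (h : -1 = x ^ 2 + y ^ 2) (a : F) : S4 a :=
  ⟨(a + 1) / 2, x * ((a - 1) / 2), y * ((a - 1) / 2), 0, by
    have : (x * ((a - 1) / 2)) ^ 2 + (y * ((a - 1) / 2)) ^ 2 = - ((a - 1) / 2) ^ 2 := by
      rw [mul_pow, mul_pow, ← add_mul, ← h]; ring
    rw [add_assoc ((_ : F) ^ 2), this]; ring⟩

section loc
variable {K : Type u} [Field K] [NumberField K] (p : HeightOneSpectrum (𝓞 K))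

/-- locally represented by four squares -/
def Rep (a : K) : Prop := ∃ q : K, q ≠ 0 ∧ S4 q ∧ SqAt p (a * q)

lemma Rep.mul {a b : K} (h : Rep p a) (h' : S4 b) (hb : b ≠ 0) : Rep p (a * b) := by
  obtain ⟨q, h1, h2, h3⟩ := h
  refine ⟨q * b, mul_ne_zero h1 hb, h2.mul h', ?_⟩
  rw [show a * b * (q * b) = a * q * b ^ 2 by ring]
  exact (SqAt_mul_sq_iff p hb).2 h3

lemma Rep.of_mul {a b : K} (h : Rep p (a * b)) (h' : S4 b) (hb : b ≠ 0) : Rep p a := by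
  have := h.mul p h'.inv (inv_ne_zero hb)
  rwa [mul_inv_cancel_right₀ hb] at this

/-- residue squares in characteristic two -/
lemma res_sq (h2 : v p (2 : K) ≠ 0) {a : K} (ha : V p 0 a) : ∃ w : 𝓞 K, V p 1 (a - (w : K) ^ 2) := by
  obtain ⟨b, hb⟩ := approx p (n := 1) ha
  have h2' : (2 : 𝓞 K) ∈ p.asIdeal := by
    by_contra h; apply h2
    have := v_eq_zero_of_notMem p h
    rwa [coe_two] at this
  have := p.isMaximal
  let _ := Ideal.Quotient.field p.asIdeal
  have : Finite (𝓞 K ⧸ p.asIdeal) := Ideal.finiteQuotientOfFreeOfNeBot _ p.ne_bot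
  have hch : CharP (𝓞 K ⧸ p.asIdeal) 2 := by
    apply CharTwo.of_one_ne_zero_of_two_eq_zero one_ne_zero
    have := Ideal.Quotient.eq_zero_iff_mem.2 h2'
    rwa [map_ofNat] at this
  have hsq := FiniteField.isSquare_of_char_two (F := 𝓞 K ⧸ p.asIdeal) (ringChar.eq _ 2) (Ideal.Quotient.mk p.asIdeal b)
  obtain ⟨w, hw⟩ := hsq
  obtain ⟨w, rfl⟩ := Ideal.Quotient.mk_surjective w
  rw [← map_mul, Ideal.Quotient.eq, ← V_one_iff] at hw
  refine ⟨w, ?_⟩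
  have := V_add p hb hw
  rw [show ((b - w * w : 𝓞 K) : K) = (b : K) - w * w from by simp [RingOfIntegers.coe_eq_algebraMap]] at this
  rwa [show a - (b : K) + ((b : K) - w * w) = a - (w : K) ^ 2 by ring] at this

lemma Rep_one {n : ℕ} : ∀ {u : K}, V p 1 (u - 1) → V p (n : ℤ) (u - 1) → ∀ m : ℕ, 2 * v p (2 : K) + 1 ≤ n + m → Rep p u := by
  intro u h1 hn m
  induction m generalizing u n with
  | zero =>
    intro h
    refine ⟨1, one_ne_zero, ⟨1, 0, 0, 0, by ring⟩, ⟨1, one_ne_zero, ?_⟩⟩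
    rw [mul_one, one_pow, div_one, V_div_iff p (by norm_num), v_four]
    exact V_mono p hn (by push_cast at h; omega)
  | succ m ih =>
    intro h
    have hu := ne_zero_of_V1 p h1
    set t := u ^ 2 - u + 1 with ht
    have hS4 : S4 t := ⟨u - 1 / 2, 1 / 2, 1 / 2, 1 / 2, by rw [ht]; ring⟩
    have ht1 : V p 1 (t - 1) := by
      rw [show t - 1 = u * (u - 1) by rw [ht]; ring]
      exact V_mul' p (n := 0) (m := 1) (Or.inr hu.2.ge) h1 (by norm_num)
    have ht0 := ne_zero_of_V1 p ht1
    have e : u / t - 1 = - (u - 1) ^ 2 / t := by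
      rw [eq_div_iff ht0.1, sub_mul, div_mul_cancel₀ _ ht0.1, ht]; ring
    have key : ∀ k l : ℤ, V p k (u - 1) → V p l (u - 1) → V p (k + l) (u / t - 1) := by
      intro k l hk hl
      rw [e, V_div_iff p ht0.1, ht0.2, add_zero, neg_eq_neg_one_mul, show (-1 : K) * (u - 1) ^ 2 = -((u - 1) * (u - 1)) by ring]
      exact V_neg p (V_mul p hk hl)
    have := ih (n := n + 1) (u := u / t) (V_mono p (key 1 1 h1 h1) (by norm_num)) (by push_cast; exact key n 1 hn h1) (by push_cast at h ⊢; omega)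
    rw [div_eq_mul_inv] at this
    exact this.of_mul p hS4.inv (inv_ne_zero ht0.1)

lemma Rep_unit (h2 : v p (2 : K) ≠ 0) {a : K} (ha : a ≠ 0) (ha0 : v p a = 0) : Rep p a := by
  obtain ⟨w, hw⟩ := res_sq p h2 (a := a) (Or.inr ha0.ge)
  have h1 := v_add_eq p (x := a) (y := -(a - (w : K) ^ 2)) ha (V_neg p (by rw [ha0]; exact hw))
  rw [show a + -(a - (w : K) ^ 2) = (w : K) ^ 2 by ring, ha0] at h1
  have hw0 : (w : K) ≠ 0 := by intro h; exact h1.1 (by rw [h]; ring)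
  have h3 : V p 1 (a * ((w : K)⁻¹) ^ 2 - 1) := by
    rw [show a * ((w : K)⁻¹) ^ 2 - 1 = (a - (w : K) ^ 2) / (w : K) ^ 2 by field_simp, V_div_iff p h1.1, h1.2]; exact hw
  have := Rep_one p (n := 0) h3 (by push_cast; exact V_mono p h3 (by norm_num)) (2 * v p (2 : K) + 1).toNat (by omega)
  exact this.of_mul p (S4_sq _) (by positivity)

lemma exists_odd (h2 : v p (2 : K) ≠ 0) : ∃ q : K, q ≠ 0 ∧ S4 q ∧ Odd (v p q) := by
  by_contra hno
  push Not at hno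
  have hev : ∀ q : K, q ≠ 0 → S4 q → Even (v p q) := fun q h h' => Int.not_odd_iff_even.1 (hno q h h')
  set e := v p (2 : K) with he
  have he0 := v_two_nonneg p
  obtain ⟨s, hs⟩ : Even e := hev 2 two_ne_zero ⟨1, 1, 0, 0, by norm_num⟩
  obtain ⟨π, hπ0, hπ⟩ := exists_unif p
  have key : ∀ k : ℕ, (k : ℤ) ≤ e → ∃ x : K, V p 0 x ∧ V p (2 * k) (x ^ 2 + 1) := by
    intro k
    induction k with
    | zero => intro _; exact ⟨0, V_zero p, by
        have h : V p 0 (1 : K) := Or.inr (v_one p).ge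
        simpa using h⟩
    | succ k ih =>
      intro hk
      push_cast at hk
      obtain ⟨x, hx, hx1⟩ := ih (by omega)
      have hbump : ∀ y : K, V p (2 * k + 1) (y ^ 2 + 1) → V p (2 * ((k + 1 : ℕ) : ℤ)) (y ^ 2 + 1) := by
        intro y hy
        by_cases h0 : y ^ 2 + 1 = 0
        · rw [h0]; exact V_zero p
        · rw [V_iff p h0] at hy ⊢
          obtain ⟨r, hr⟩ := hev _ h0 ⟨y, 1, 0, 0, by ring⟩
          push_cast; omega
      set t := (x ^ 2 + 1) / (π : K) ^ (2 * k) with ht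
      have hπk : (π : K) ^ (2 * k) ≠ 0 := pow_ne_zero _ hπ0
      have ht0 : V p 0 t := by
        rw [ht, V_div_iff p hπk, v_pow, hπ]; simpa using hx1
      obtain ⟨w, hw⟩ := res_sq p h2 ht0
      refine ⟨x + π ^ k * w, ?_, hbump _ ?_⟩
      · refine V_add p hx ?_
        have := V_int p (π ^ k * w)
        simpa [RingOfIntegers.coe_eq_algebraMap] using this
      · have e1 : (x + (π : K) ^ k * w) ^ 2 + 1 = (π : K) ^ (2 * k) * (t - (w : K) ^ 2) + (2 * ((π : K) ^ (2 * k) * (w : K) ^ 2) + 2 * (π : K) ^ k * (x * w)) := by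
          rw [mul_sub, ht, mul_div_cancel₀ _ hπk]; ring
        rw [e1]
        have hw0 := V_int p w
        have hxw : V p 0 (x * w) := V_mul' p hx hw0 (by norm_num)
        have hw2 : V p 0 ((w : K) ^ 2) := by rw [sq]; exact V_mul' p hw0 hw0 (by norm_num)
        refine V_add p ?_ (V_add p ?_ ?_)
        · rw [V_mul_iff p hπk, v_pow, hπ]; exact V_mono p hw (by push_cast; omega)
        · rw [V_mul_iff p two_ne_zero, V_mul_iff p hπk, v_pow, hπ]; exact V_mono p hw2 (by push_cast; omega)
        · rw [V_mul_iff p (mul_ne_zero two_ne_zero (pow_ne_zero _ hπ0)), v_mul p two_ne_zero (pow_ne_zero _ hπ0), v_pow, hπ]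
          exact V_mono p hxw (by push_cast; omega)
  obtain ⟨x, hx, hx1⟩ := key e.toNat (by omega)
  have hx1 : V p (2 * e) (x ^ 2 + 1) := V_mono p hx1 (by omega)
  have hxu : x ≠ 0 ∧ v p x = 0 := by
    have h := v_add_eq p (x := -1) (y := x ^ 2 + 1) (by norm_num) (by rw [v_neg, v_one]; exact V_mono p hx1 (by omega))
    rw [show (-1 : K) + (x ^ 2 + 1) = x ^ 2 by ring, v_neg, v_one] at h
    have hx0 : x ≠ 0 := by intro h'; exact h.1 (by rw [h']; ring)
    refine ⟨hx0, ?_⟩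
    have h3 := h.2
    rw [v_pow] at h3
    push_cast at h3; omega
  have h4 : (4 : K) ≠ 0 := by norm_num
  have hm0 : 4 * (x * (π : K)) ≠ 0 := mul_ne_zero h4 (mul_ne_zero hxu.1 hπ0)
  have hmv : v p (4 * (x * (π : K))) = 2 * e + 1 := by
    rw [v_mul p h4 (mul_ne_zero hxu.1 hπ0), v_mul p hxu.1 hπ0, v_four, hxu.2, hπ]; ring
  have hf := v_add_eq p (x := 4 * (x * (π : K))) (y := (π : K) ^ 2 * (x ^ 2 + 1) + 2 ^ 3) hm0 (by
    rw [hmv]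
    refine V_add p ?_ ?_
    · rw [V_mul_iff p (pow_ne_zero _ hπ0), v_pow, hπ]; exact V_mono p hx1 (by push_cast; omega)
    · rw [V_iff p (by norm_num), v_pow]; push_cast; omega)
  have := hev _ hf.1 ⟨2, π, x * π + 2, 0, by ring⟩
  rw [hf.2, hmv] at this
  obtain ⟨r, hr⟩ := this
  omega

lemma Rep_all (h2 : v p (2 : K) ≠ 0) {a : K} (ha : a ≠ 0) : Rep p a := by
  obtain ⟨π, hπ0, hπ⟩ := exists_unif p
  have key : ∀ a : K, a ≠ 0 → Even (v p a) → Rep p a := by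
    rintro a ha ⟨r, hr⟩
    have hne : ((π : K) ^ (-r)) ^ 2 ≠ 0 := pow_ne_zero _ (zpow_ne_zero _ hπ0)
    refine Rep.of_mul p (b := ((π : K) ^ (-r)) ^ 2) (Rep_unit p h2 (mul_ne_zero ha hne) ?_) (S4_sq _) hne
    rw [v_mul p ha hne, v_pow, v_zpow, hπ, hr]; push_cast; ring
  by_cases h : Even (v p a)
  · exact key a ha h
  · obtain ⟨q, hq0, hq, hqo⟩ := exists_odd p h2
    refine Rep.of_mul p (b := q) (key _ (mul_ne_zero ha hq0) ?_) hq hq0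
    rw [v_mul p ha hq0]
    exact (Int.not_even_iff_odd.1 h).add_odd hqo
end loc
end Sieg

end

section
open NumberField IsDedekindDomain
set_option linter.unusedSectionVars false
set_option maxSynthPendingDepth 3
namespace Sieg
universe u
variable {K : Type u} [Field K] [NumberField K]

/-- the local representations can be chosen integral -/
lemma Rep_int {p : HeightOneSpectrum (𝓞 K)} {a : K} (h : Rep p a) : ∃ q : Fin 4 → 𝓞 K, (∑ i, (q i : K) ^ 2) ≠ 0 ∧ SqAt p (a * ∑ i, (q i : K) ^ 2) := by
  obtain ⟨t, ht0, ⟨x, y, z, w, rfl⟩, ht⟩ := h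
  obtain ⟨⟨d, hd⟩, h⟩ := IsLocalization.exist_integer_multiples (nonZeroDivisors (𝓞 K)) Finset.univ ![x, y, z, w]
  have hd0 : (d : K) ≠ 0 := by simpa using nonZeroDivisors.ne_zero hd
  choose q hq using fun i => h i (Finset.mem_univ i)
  have hq' : ∀ i, (q i : K) = d * ![x, y, z, w] i := fun i => (hq i).trans (Algebra.smul_def _ _)
  have e : ∑ i, (q i : K) ^ 2 = (x ^ 2 + y ^ 2 + z ^ 2 + w ^ 2) * (d : K) ^ 2 := by
    rw [Fin.sum_univ_four]; simp only [hq']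
    simp; ring
  refine ⟨q, ?_, ?_⟩
  · rw [e]; exact mul_ne_zero ht0 (pow_ne_zero _ hd0)
  · rw [e, ← mul_assoc]; exact (SqAt_mul_sq_iff p hd0).2 ht

lemma glob_rep {a : K} (ha : a ≠ 0) : ∃ q : K, q ≠ 0 ∧ S4 q ∧ ∀ p : HeightOneSpectrum (𝓞 K), v p (2 : K) ≠ 0 → SqAt p (a * q) := by
  classical
  have h' : ∀ p : HeightOneSpectrum (𝓞 K), ∃ q : Fin 4 → 𝓞 K, v p (2 : K) ≠ 0 → (∑ i, (q i : K) ^ 2) ≠ 0 ∧ SqAt p (a * ∑ i, (q i : K) ^ 2) := by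
    intro p
    by_cases hp : v p (2 : K) = 0
    · exact ⟨0, fun h => absurd hp h⟩
    · obtain ⟨q, hq⟩ := Rep_int (Rep_all p hp ha)
      exact ⟨q, fun _ => hq⟩
  choose Q hQ using h'
  have hS : {p : HeightOneSpectrum (𝓞 K) | v p (2 : K) ≠ 0}.Finite := finite_v two_ne_zero
  choose c hc using fun i : Fin 4 => crt hS (fun p => Q p i) (fun p => (v p (∑ i, (Q p i : K) ^ 2) + 2 * v p (2 : K) + 1).toNat)
  have key : ∀ p : HeightOneSpectrum (𝓞 K), v p (2 : K) ≠ 0 → (∑ i, (c i : K) ^ 2) ≠ 0 ∧ SqAt p (a * ∑ i, (c i : K) ^ 2) := by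
    intro p hp
    obtain ⟨h0, h1⟩ := hQ p hp
    set n := ∑ i, (Q p i : K) ^ 2 with hn
    have hdiff : V p (v p n + 2 * v p (2 : K) + 1) (∑ i, (c i : K) ^ 2 - n) := by
      have hi : ∀ i, V p (v p n + 2 * v p (2 : K) + 1) ((c i : K) ^ 2 - (Q p i : K) ^ 2) := by
        intro i
        rw [show (c i : K) ^ 2 - (Q p i : K) ^ 2 = ((c i : K) - Q p i) * ((c i : K) + Q p i) by ring]
        exact V_mul' p (hc i p hp) (V_add p (V_int p _) (V_int p _)) (by rw [add_zero]; exact Int.self_le_toNat _)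
      have e : ∑ i, (c i : K) ^ 2 - n = ((c 0 : K) ^ 2 - (Q p 0 : K) ^ 2) + ((c 1 : K) ^ 2 - (Q p 1 : K) ^ 2) + ((c 2 : K) ^ 2 - (Q p 2 : K) ^ 2) + ((c 3 : K) ^ 2 - (Q p 3 : K) ^ 2) := by
        rw [hn, Fin.sum_univ_four, Fin.sum_univ_four]; ring
      rw [e]
      exact V_add p (V_add p (V_add p (hi 0) (hi 1)) (hi 2)) (hi 3)
    have h2 := v_two_nonneg p
    have h3 := v_add_eq p (x := n) (y := ∑ i, (c i : K) ^ 2 - n) h0 (V_mono p hdiff (by omega))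
    rw [add_sub_cancel] at h3
    refine ⟨h3.1, ?_⟩
    have h4 : SqAt p ((∑ i, (c i : K) ^ 2) / n) := by
      refine ⟨1, one_ne_zero, ?_⟩
      rw [show ((∑ i, (c i : K) ^ 2) / n / 1 ^ 2 - 1) / 4 = (∑ i, (c i : K) ^ 2 - n) / (n * 4) by field_simp,
        V_div_iff p (mul_ne_zero h0 (by norm_num)), v_mul p h0 (by norm_num), v_four]
      exact V_mono p hdiff (by omega)
    have := SqAt.mul p h1 h4
    rwa [show a * n * ((∑ i, (c i : K) ^ 2) / n) = a * ∑ i, (c i : K) ^ 2 by field_simp] at this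
  by_cases hne : ∃ p : HeightOneSpectrum (𝓞 K), v p (2 : K) ≠ 0
  · obtain ⟨p, hp⟩ := hne
    exact ⟨_, (key p hp).1, ⟨c 0, c 1, c 2, c 3, by rw [Fin.sum_univ_four]⟩, fun q hq => (key q hq).2⟩
  · push Not at hne
    exact ⟨1, one_ne_zero, ⟨1, 0, 0, 0, by ring⟩, fun p hp => absurd (hne p) hp⟩

lemma TC_of_no_real (h : (K →+* ℝ) → False) : IsTotallyComplex K := by
  refine ⟨fun w => ?_⟩
  rw [← InfinitePlace.not_isReal_iff_isComplex]
  intro hw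
  exact h (InfinitePlace.embedding_of_isReal hw)

/-- Siegel: totally positive elements of a number field are sums of four squares -/
theorem siegel {a : K} (ha : a ≠ 0) (hpos : ∀ σ : K →+* ℝ, 0 < σ a) : S4 a := by
  obtain ⟨q, hq0, hq, hloc⟩ := glob_rep ha
  suffices h : S4 (a * q) by
    have := h.mul hq.inv
    rwa [mul_inv_cancel_right₀ hq0] at this
  have hposq : ∀ σ : K →+* ℝ, 0 < σ (a * q) := by
    intro σ
    rw [map_mul]
    refine mul_pos (hpos σ) (lt_of_le_of_ne ?_ ((map_ne_zero σ).2 hq0).symm)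
    obtain ⟨x, y, z, w, rfl⟩ := hq
    simp only [map_add, map_pow]; positivity
  have hb0 : a * q ≠ 0 := mul_ne_zero ha hq0
  set b := a * q with hb
  by_cases hsq : ∃ c : K, c ^ 2 = -b
  · obtain ⟨c, hc⟩ := hsq
    have hc0 : c ≠ 0 := by rintro rfl; exact hb0 (neg_eq_zero.1 (by rw [← hc]; ring))
    have : IsTotallyComplex K := TC_of_no_real fun σ => by
      have h1 := hposq σ
      have h2 := congrArg σ hc
      rw [map_pow, map_neg] at h2
      nlinarith [sq_nonneg (σ c)]
    obtain ⟨x, y, hxy⟩ := F3 (K := K) (fun p hp => by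
      have := hloc p hp
      rw [show b = -1 * c ^ 2 by rw [hc]; ring] at this
      exact (SqAt_mul_sq_iff p hc0).1 this)
    exact S4_all hxy _
  · push Not at hsq
    obtain ⟨E, _, _, _, ⟨Q⟩⟩ := exists_QExt hsq
    have hs := Q.hs
    have hs0 := Q.sne
    have : IsTotallyComplex E := TC_of_no_real fun σ => by
      have h1 := hposq (σ.comp (algebraMap K E))
      have h2 := congrArg σ hs
      rw [map_pow, map_neg, map_neg] at h2
      rw [RingHom.comp_apply] at h1
      nlinarith [sq_nonneg (σ Q.s)]
    obtain ⟨X, Y, hXY⟩ := F3 (K := E) (fun P hP => by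
      have h1 : v (dn (K := K) P) (2 : K) ≠ 0 := by
        intro h
        apply hP
        have := (v_up_zero P (x := (2 : K)) two_ne_zero).2 h
        rwa [map_ofNat] at this
      have h2 := SqAt_up P (hloc _ h1)
      rw [show algebraMap K E b = -1 * Q.s ^ 2 by rw [hs, map_neg]; ring] at h2
      exact (SqAt_mul_sq_iff P hs0).1 h2)
    obtain ⟨x1, x2, rfl⟩ := Q.span X
    obtain ⟨y1, y2, rfl⟩ := Q.span Y
    have hz := Q.s_notin (1 + x1 ^ 2 + y1 ^ 2 - b * (x2 ^ 2 + y2 ^ 2)) (2 * (x1 * x2 + y1 * y2)) (by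
      rw [map_neg] at hs
      simp only [map_add, map_sub, map_mul, map_pow, map_one, map_ofNat]
      linear_combination -hXY - ((algebraMap K E x2) ^ 2 + (algebraMap K E y2) ^ 2) * hs)
    by_cases hD : x2 ^ 2 + y2 ^ 2 = 0
    · refine S4_all (x := x1) (y := y1) ?_ _
      have := hz.1
      rw [hD] at this
      linear_combination -this
    · have h1 : b = (1 + x1 ^ 2 + y1 ^ 2) * (x2 ^ 2 + y2 ^ 2)⁻¹ := by
        rw [eq_mul_inv_iff_mul_eq₀ hD]; linear_combination -hz.1
      rw [h1]
      exact S4.mul ⟨1, x1, y1, 0, by ring⟩ (S4.inv ⟨x2, y2, 0, 0, by ring⟩)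
end Sieg

end

section
open NumberField IsDedekindDomain
set_option linter.unusedSectionVars false
set_option maxSynthPendingDepth 3
namespace Sieg

/-- compactness: positivity is detected in a finite subextension -/
lemma descend {F : Type*} [Field F] [CharZero F] [Algebra.IsAlgebraic ℚ F] (a : F) (ha : ∀ σ : F →+* ℝ, 0 < σ a) :
    ∃ s : Finset F, ∃ h : a ∈ IntermediateField.adjoin ℚ (s : Set F), ∀ σ : IntermediateField.adjoin ℚ (s : Set F) →+* ℝ, 0 < σ ⟨a, h⟩ := by
  classical
  by_contra hcon
  push Not at hcon
  let k : Finset F → IntermediateField ℚ F := fun s => IntermediateField.adjoin ℚ ((insert a s : Finset F) : Set F)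
  have h : ∀ s, a ∈ k s := fun s => IntermediateField.subset_adjoin _ _ (by simp)
  have hcon' : ∀ s : Finset F, ∃ σ : k s →+* ℝ, σ ⟨a, h s⟩ ≤ 0 := fun s => hcon (insert a s) (h s)
  choose σ hσ using hcon'
  let τ : Finset F → F → ℝ := fun s x => if hx : x ∈ k s then σ s ⟨x, hx⟩ else 0
  have hτ : ∀ (s : Finset F) (x : F) (hx : x ∈ k s), τ s x = σ s ⟨x, hx⟩ := fun s x hx => dif_pos hx
  let 𝒰 : Ultrafilter (Finset F) := Ultrafilter.of Filter.atTop
  have hev : ∀ x : F, ∀ᶠ s : Finset F in (𝒰 : Filter (Finset F)), x ∈ k s := by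
    intro x
    apply Filter.Eventually.filter_mono (Ultrafilter.of_le _)
    filter_upwards [Filter.eventually_ge_atTop ({x} : Finset F)] with s hs
    exact IntermediateField.subset_adjoin _ _ (Finset.mem_coe.2 (Finset.mem_insert_of_mem (hs (Finset.mem_singleton_self x))))
  have hlim : ∀ x : F, ∃ r : ℝ, ∀ᶠ s in (𝒰 : Filter (Finset F)), τ s x = r := by
    intro x
    have h1 : ∀ᶠ s in (𝒰 : Filter (Finset F)), ∃ r ∈ (minpoly ℚ x).rootSet ℝ, τ s x = r := by
      filter_upwards [hev x] with s hx
      refine ⟨_, ?_, rfl⟩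
      rw [hτ s x hx, Polynomial.mem_rootSet]
      refine ⟨minpoly.ne_zero (Algebra.IsIntegral.isIntegral x), ?_⟩
      have e : Polynomial.aeval (⟨x, hx⟩ : k s) (minpoly ℚ x) = 0 := by
        apply Subtype.ext
        have := minpoly.aeval ℚ x
        rw [← IntermediateField.coe_val, ← Polynomial.aeval_algHom_apply]
        simpa using this
      have e2 := congrArg (σ s).toRatAlgHom e
      rw [← Polynomial.aeval_algHom_apply, map_zero] at e2
      exact e2
    rw [Ultrafilter.eventually_exists_mem_iff (Polynomial.rootSet_finite _ _)] at h1
    obtain ⟨r, -, hr⟩ := h1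
    exact ⟨r, hr⟩
  choose r hr using hlim
  have hadd : ∀ x y, r (x + y) = r x + r y := by
    intro x y
    obtain ⟨s, h1, h2, h3, h4, h5⟩ := ((hr x).and ((hr y).and ((hr (x + y)).and ((hev x).and (hev y))))).exists
    rw [← h1, ← h2, ← h3, hτ s x h4, hτ s y h5, hτ s _ (add_mem h4 h5), ← map_add]; rfl
  have hmul : ∀ x y, r (x * y) = r x * r y := by
    intro x y
    obtain ⟨s, h1, h2, h3, h4, h5⟩ := ((hr x).and ((hr y).and ((hr (x * y)).and ((hev x).and (hev y))))).exists
    rw [← h1, ← h2, ← h3, hτ s x h4, hτ s y h5, hτ s _ (mul_mem h4 h5), ← map_mul]; rfl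
  have hone : r 1 = 1 := by
    obtain ⟨s, h1⟩ := (hr 1).exists
    rw [← h1, hτ s 1 (one_mem _)]; exact map_one (σ s)
  have hzero : r 0 = 0 := by
    obtain ⟨s, h1⟩ := (hr 0).exists
    rw [← h1, hτ s 0 (zero_mem _)]; exact map_zero (σ s)
  let ρ : F →+* ℝ := { toFun := r, map_one' := hone, map_mul' := hmul, map_zero' := hzero, map_add' := hadd }
  have h1 : 0 < r a := ha ρ
  obtain ⟨s, h2⟩ := (hr a).exists
  rw [← h2, hτ s a (h s)] at h1
  exact absurd h1 (not_lt.2 (hσ s))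

lemma siegel_alg {F : Type*} [Field F] [CharZero F] [Algebra.IsAlgebraic ℚ F] {a : F} (ha0 : a ≠ 0) (ha : ∀ σ : F →+* ℝ, 0 < σ a) : S4 a := by
  obtain ⟨s, h, hs⟩ := descend a ha
  haveI : FiniteDimensional ℚ (IntermediateField.adjoin ℚ (s : Set F)) :=
    IntermediateField.finiteDimensional_adjoin (fun x _ => Algebra.IsIntegral.isIntegral x)
  haveI : NumberField (IntermediateField.adjoin ℚ (s : Set F)) := ⟨⟩
  obtain ⟨b, c, d, e, hb⟩ := siegel (K := IntermediateField.adjoin ℚ (s : Set F)) (a := ⟨a, h⟩)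
    (fun h0 => ha0 (congrArg Subtype.val h0)) hs
  exact ⟨b, c, d, e, congrArg Subtype.val hb⟩

lemma clear_den {F : Type*} [Field F] [CharZero F] [Algebra.IsAlgebraic ℚ F] (q : Fin 4 → F) :
    ∃ (d : integralClosure ℤ F) (y : Fin 4 → integralClosure ℤ F), d ≠ 0 ∧ ∀ i, (y i : F) = d * q i := by
  haveI : Algebra.IsAlgebraic ℤ F := (IsFractionRing.comap_isAlgebraic_iff (A := ℤ) (K := ℚ) (C := F)).2 inferInstance
  haveI : IsFractionRing (integralClosure ℤ F) F := integralClosure.isFractionRing_of_algebraic (A := ℤ) (L := F)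
    (fun x hx => by simpa using hx)
  obtain ⟨⟨d, hd⟩, h⟩ := IsLocalization.exist_integer_multiples (nonZeroDivisors (integralClosure ℤ F)) Finset.univ q
  choose y hy using fun i => h i (Finset.mem_univ i)
  exact ⟨d, y, nonZeroDivisors.ne_zero hd, fun i => (hy i).trans (Algebra.smul_def _ _)⟩

end Sieg

end

/-- Let `𝐅` be an algebraic (possibly infinite) extension of `ℚ` and
`x, z ∈ 𝒪_𝐅` with `x ≠ z`.  Then there exist `y₁, …, y₅ ∈ 𝒪_𝐅` with `y₅ ≠ 0` and
`y₅²(x − z) = y₁² + y₂² + y₃² + y₄²` iff `σ(x) > σ(z)` for every ring homomorphism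
`σ : 𝐅 → ℝ`. -/
theorem stmt_4 (F : Type*) [Field F] [CharZero F] [Algebra.IsAlgebraic ℚ F]
    (x z : integralClosure ℤ F) (hxz : x ≠ z) :
    (∃ y₁ y₂ y₃ y₄ y₅ : integralClosure ℤ F, y₅ ≠ 0 ∧
        y₅ ^ 2 * (x - z) = y₁ ^ 2 + y₂ ^ 2 + y₃ ^ 2 + y₄ ^ 2) ↔
      ∀ σ : F →+* ℝ, σ (z : F) < σ (x : F) := by
  have hne : (x : F) - z ≠ 0 := fun h => hxz (Subtype.ext (sub_eq_zero.1 h))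
  constructor
  · rintro ⟨y₁, y₂, y₃, y₄, y₅, h5, h⟩ σ
    have h1 : (y₅ : F) ^ 2 * (x - z) = y₁ ^ 2 + y₂ ^ 2 + y₃ ^ 2 + y₄ ^ 2 := congrArg Subtype.val h
    have h2 := congrArg σ h1
    simp only [map_mul, map_pow, map_add] at h2
    have h3 : σ (y₅ : F) ≠ 0 := (map_ne_zero σ).2 (fun h0 => h5 (Subtype.ext h0))
    have h4 : σ ((x : F) - z) ≠ 0 := (map_ne_zero σ).2 hne
    have h6 : 0 < σ (y₅ : F) ^ 2 := by positivity
    have h7 : 0 ≤ σ (y₅ : F) ^ 2 * σ ((x : F) - z) := by rw [h2]; positivity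
    have h8 : 0 < σ ((x : F) - z) := lt_of_le_of_ne (nonneg_of_mul_nonneg_right h7 h6) h4.symm
    rw [map_sub] at h8
    linarith
  · intro h
    obtain ⟨a, b, c, d, hs⟩ := Sieg.siegel_alg hne (fun σ => by rw [map_sub]; linarith [h σ])
    obtain ⟨e, y, he, hy⟩ := Sieg.clear_den ![a, b, c, d]
    refine ⟨y 0, y 1, y 2, y 3, e, he, Subtype.ext ?_⟩
    change (e : F) ^ 2 * (x - z) = (y 0 : F) ^ 2 + (y 1 : F) ^ 2 + (y 2 : F) ^ 2 + (y 3 : F) ^ 2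
    rw [hy, hy, hy, hy, hs]
    simp
    ring
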